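/- Assume, in addition to the standing assumptions for existence, that r ↦ g(t,x,r) is decreasing for every t ≥ 0 and x ∈ Bd(D), and that there is a continuous function m : [0,∞) → [0,∞) with m(0) = 0 such that |f(t,x,r,p) − f(t,y,r,p)| ≤ m(|x − y|(1 + |p|)) for all t ≥ 0, x, y ∈ cl(D), r ∈ ℝ, p ∈ ℝ^d. Then the viscosity solution of the parabolic variational inequality ∂u/∂t − L_t u + ∂φ(u) ∋ f(t,x,u,(∇u σ)(t,x)) on (0,∞)×D, ∂u/∂n + ∂ψ(u) ∋ g(t,x,u) on (0,∞)×Bd(D), u(0,x) = h(x), is unique. -/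

import Mathlib

open Filter Topology Matrix

noncomputable section

/-- Euclidean dot product on `Fin d → ℝ`. -/
def dotp {d : ℕ} (v w : Fin d → ℝ) : ℝ := ∑ i, v i * w i

/-- Euclidean norm on `Fin d → ℝ`. -/
def eunorm {d : ℕ} (v : Fin d → ℝ) : ℝ := Real.sqrt (∑ i, (v i)^2)

/-- Frobenius norm of a matrix. -/
def matNorm {d : ℕ} (M : Matrix (Fin d) (Fin d) ℝ) : ℝ :=
  Real.sqrt (∑ i, ∑ j, (M i j)^2)

/-- Gradient vector of a real function on `Fin d → ℝ`. -/
def gradVec {d : ℕ} (ℓ : (Fin d → ℝ) → ℝ) (x : Fin d → ℝ) : Fin d → ℝ :=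
  fun i => fderiv ℝ ℓ x (Pi.single i 1)

/-- Subdifferential of a proper convex function `φ : ℝ → EReal`. -/
def subd (φ : ℝ → EReal) (x : ℝ) : Set ℝ :=
  {v | ∀ y : ℝ, ((v * (y - x) : ℝ) : EReal) + φ x ≤ φ y}

/-- `φ : ℝ → (−∞,+∞]` is proper, convex and lower semicontinuous. -/
def ProperConvexLsc (φ : ℝ → EReal) : Prop :=
  (∃ r : ℝ, φ r ≠ ⊤) ∧ (∀ r : ℝ, φ r ≠ ⊥) ∧ LowerSemicontinuous φ ∧
    ∀ x y a b : ℝ, 0 ≤ a → 0 ≤ b → a + b = 1 →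
      φ (a * x + b * y) ≤ (a : EReal) * φ x + (b : EReal) * φ y

/-- Left derivative of a convex `φ : ℝ → EReal` (the limit as `h ↓ 0` of the
difference quotients `(φ(y) − φ(y−h))/h`, which is their supremum). -/
def leftD (φ : ℝ → EReal) (y : ℝ) : EReal :=
  ⨆ h : Set.Ioi (0:ℝ), (((1 : ℝ)/(h : ℝ)) : EReal) * (φ y - φ (y - (h:ℝ)))

/-- Right derivative of a convex `φ : ℝ → EReal` (the limit as `h ↓ 0` of the
difference quotients `(φ(y+h) − φ(y))/h`, which is their infimum). -/
def rightD (φ : ℝ → EReal) (y : ℝ) : EReal :=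
  ⨅ h : Set.Ioi (0:ℝ), (((1 : ℝ)/(h : ℝ)) : EReal) * (φ (y + (h:ℝ)) - φ y)

/-- `(p,q,X)` belongs to the parabolic superjet `P^{2,+}u(t,x)` relative to
`[0,∞) × clD`. -/
def InSuperjet {d : ℕ} (clD : Set (Fin d → ℝ)) (u : ℝ → (Fin d → ℝ) → ℝ)
    (t : ℝ) (x : Fin d → ℝ) (p : ℝ) (q : Fin d → ℝ)
    (X : Matrix (Fin d) (Fin d) ℝ) : Prop :=
  X.IsSymm ∧
  ∃ o : ℝ → ℝ, ContinuousOn o (Set.Ici 0) ∧ o 0 = 0 ∧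
    Tendsto (fun r => o r / r) (𝓝[>] (0:ℝ)) (𝓝 0) ∧
    ∃ δ > (0:ℝ), ∀ s : ℝ, 0 ≤ s → ∀ y ∈ clD,
      |s - t| < δ → eunorm (y - x) < δ →
      u s y ≤ u t x + p * (s - t) + dotp q (y - x)
        + (1/2) * dotp (X.mulVec (y - x)) (y - x)
        + o (|s - t| + (eunorm (y - x))^2)

/-- `(p,q,X)` belongs to the parabolic subjet `P^{2,−}u(t,x)` relative to
`[0,∞) × clD`. -/
def InSubjet {d : ℕ} (clD : Set (Fin d → ℝ)) (u : ℝ → (Fin d → ℝ) → ℝ)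
    (t : ℝ) (x : Fin d → ℝ) (p : ℝ) (q : Fin d → ℝ)
    (X : Matrix (Fin d) (Fin d) ℝ) : Prop :=
  X.IsSymm ∧
  ∃ o : ℝ → ℝ, ContinuousOn o (Set.Ici 0) ∧ o 0 = 0 ∧
    Tendsto (fun r => o r / r) (𝓝[>] (0:ℝ)) (𝓝 0) ∧
    ∃ δ > (0:ℝ), ∀ s : ℝ, 0 ≤ s → ∀ y ∈ clD,
      |s - t| < δ → eunorm (y - x) < δ →
      u t x + p * (s - t) + dotp q (y - x)
        + (1/2) * dotp (X.mulVec (y - x)) (y - x)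
        + o (|s - t| + (eunorm (y - x))^2) ≤ u s y

/-- `V(t,x,p,q,X) = p − ½Tr((σσ*)(t,x)X) − ⟨b(t,x),q⟩ − f(t,x,u(t,x),qσ(t,x))`. -/
def Vop {d : ℕ} (b : ℝ → (Fin d → ℝ) → (Fin d → ℝ))
    (σ : ℝ → (Fin d → ℝ) → Matrix (Fin d) (Fin d) ℝ)
    (f : ℝ → (Fin d → ℝ) → ℝ → (Fin d → ℝ) → ℝ)
    (u : ℝ → (Fin d → ℝ) → ℝ)
    (t : ℝ) (x : Fin d → ℝ) (p : ℝ) (q : Fin d → ℝ)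
    (X : Matrix (Fin d) (Fin d) ℝ) : ℝ :=
  p - (1/2) * Matrix.trace (σ t x * (σ t x)ᵀ * X) - dotp (b t x) q
    - f t x (u t x) (Matrix.vecMul q (σ t x))

/-- Viscosity subsolution of the parabolic variational inequality. -/
def IsViscSubsolution {d : ℕ} (ℓ : (Fin d → ℝ) → ℝ)
    (b : ℝ → (Fin d → ℝ) → (Fin d → ℝ))
    (σ : ℝ → (Fin d → ℝ) → Matrix (Fin d) (Fin d) ℝ)
    (f : ℝ → (Fin d → ℝ) → ℝ → (Fin d → ℝ) → ℝ)
    (g : ℝ → (Fin d → ℝ) → ℝ → ℝ)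
    (h : (Fin d → ℝ) → ℝ)
    (φ ψ : ℝ → EReal)
    (u : ℝ → (Fin d → ℝ) → ℝ) : Prop :=
  ContinuousOn (fun tx : ℝ × (Fin d → ℝ) => u tx.1 tx.2)
      (Set.Ici 0 ×ˢ {x | ℓ x ≤ 0}) ∧
  (∀ x, ℓ x ≤ 0 → u 0 x = h x) ∧
  (∀ t > (0:ℝ), ∀ x, ℓ x ≤ 0 → φ (u t x) ≠ ⊤) ∧
  (∀ t > (0:ℝ), ∀ x, ℓ x = 0 → ψ (u t x) ≠ ⊤) ∧
  (∀ t > (0:ℝ), ∀ x, ℓ x ≤ 0 → ∀ p q X,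
    InSuperjet {x | ℓ x ≤ 0} u t x p q X →
      (ℓ x < 0 →
        ((Vop b σ f u t x p q X : ℝ) : EReal) + leftD φ (u t x) ≤ 0) ∧
      (ℓ x = 0 →
        (((Vop b σ f u t x p q X : ℝ) : EReal) + leftD φ (u t x) ≤ 0 ∨
          ((dotp (gradVec ℓ x) q - g t x (u t x) : ℝ) : EReal)
            + leftD ψ (u t x) ≤ 0)))

/-- Viscosity supersolution of the parabolic variational inequality. -/
def IsViscSupersolution {d : ℕ} (ℓ : (Fin d → ℝ) → ℝ)
    (b : ℝ → (Fin d → ℝ) → (Fin d → ℝ))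
    (σ : ℝ → (Fin d → ℝ) → Matrix (Fin d) (Fin d) ℝ)
    (f : ℝ → (Fin d → ℝ) → ℝ → (Fin d → ℝ) → ℝ)
    (g : ℝ → (Fin d → ℝ) → ℝ → ℝ)
    (h : (Fin d → ℝ) → ℝ)
    (φ ψ : ℝ → EReal)
    (u : ℝ → (Fin d → ℝ) → ℝ) : Prop :=
  ContinuousOn (fun tx : ℝ × (Fin d → ℝ) => u tx.1 tx.2)
      (Set.Ici 0 ×ˢ {x | ℓ x ≤ 0}) ∧
  (∀ x, ℓ x ≤ 0 → u 0 x = h x) ∧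
  (∀ t > (0:ℝ), ∀ x, ℓ x ≤ 0 → φ (u t x) ≠ ⊤) ∧
  (∀ t > (0:ℝ), ∀ x, ℓ x = 0 → ψ (u t x) ≠ ⊤) ∧
  (∀ t > (0:ℝ), ∀ x, ℓ x ≤ 0 → ∀ p q X,
    InSubjet {x | ℓ x ≤ 0} u t x p q X →
      (ℓ x < 0 →
        0 ≤ ((Vop b σ f u t x p q X : ℝ) : EReal) + rightD φ (u t x)) ∧
      (ℓ x = 0 →
        (0 ≤ ((Vop b σ f u t x p q X : ℝ) : EReal) + rightD φ (u t x) ∨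
          0 ≤ ((dotp (gradVec ℓ x) q - g t x (u t x) : ℝ) : EReal)
            + rightD ψ (u t x))))

section C11
variable {H : Type*} [NormedAddCommGroup H] [NormedSpace ℝ H]

/-- A function with two-sided quadratic bounds is differentiable. -/
lemma c11_hasFDerivAt {f : H → ℝ} {D : H → H →L[ℝ] ℝ} {C : ℝ}
    (hC : ∀ x y, |f y - f x - D x (y - x)| ≤ C * ‖y - x‖ ^ 2) (x : H) :
    HasFDerivAt f (D x) x := by
  rw [hasFDerivAt_iff_isLittleO]
  have h1 : (fun y => f y - f x - D x (y - x)) =O[𝓝 x] fun y => ‖y - x‖ ^ 2 := by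
    refine Asymptotics.IsBigO.of_bound C (Eventually.of_forall fun y => ?_)
    rw [Real.norm_eq_abs, Real.norm_of_nonneg (by positivity)]
    exact hC x y
  refine h1.trans_isLittleO ?_
  have := Asymptotics.isLittleO_norm_pow_norm_pow (E' := H) (m := 1) (n := 2) (by norm_num)
  have h2 : Tendsto (fun y => y - x) (𝓝 x) (𝓝 0) := by
    have : Continuous fun y : H => y - x := by fun_prop
    simpa using this.tendsto x
  have h3 := this.comp_tendsto h2
  simp only [pow_one] at h3
  exact Asymptotics.isLittleO_norm_right.1 h3

/-- The gradient is Lipschitz. -/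
lemma c11_lipschitz {f : H → ℝ} {D : H → H →L[ℝ] ℝ} {C : ℝ} (hC0 : 0 ≤ C)
    (hC : ∀ x y, |f y - f x - D x (y - x)| ≤ C * ‖y - x‖ ^ 2) :
    ∃ K : NNReal, LipschitzWith K D := by
  refine ⟨⟨6 * C, by positivity⟩, LipschitzWith.of_dist_le_mul fun x y => ?_⟩
  rw [dist_eq_norm, dist_eq_norm]
  change ‖D x - D y‖ ≤ 6 * C * ‖x - y‖
  have key : ∀ h : H, |(D x - D y) h| ≤ C * (‖x - y‖ ^ 2 + ‖h‖ ^ 2 + (‖x - y‖ + ‖h‖) ^ 2) := by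
    intro h
    have e1 := hC x y
    have e2 := hC y (y + h)
    have e3 := hC x (y + h)
    have n1 : ‖y - x‖ = ‖x - y‖ := norm_sub_rev _ _
    have n3 : ‖y + h - x‖ ≤ ‖x - y‖ + ‖h‖ := by
      have : y + h - x = (y - x) + h := by abel
      rw [this, ← n1]; exact norm_add_le _ _
    have n3' : ‖y + h - x‖ ^ 2 ≤ (‖x - y‖ + ‖h‖) ^ 2 := by gcongr
    have n3'' := mul_le_mul_of_nonneg_left n3' hC0
    have i1 : D x (y + h - x) = D x (y - x) + D x h := by
      rw [← map_add]; congr 1; abel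
    have i2 : y + h - y = h := by abel
    rw [i2] at e2
    rw [i1] at e3
    rw [n1] at e1
    rw [_root_.sub_apply]
    rw [abs_le] at *
    constructor <;> linarith [e1.1, e1.2, e2.1, e2.2, e3.1, e3.2]
  rcases eq_or_ne x y with rfl | hxy
  · simp
  have hpos : 0 < ‖x - y‖ := norm_pos_iff.2 (sub_ne_zero.2 hxy)
  refine ContinuousLinearMap.opNorm_le_bound _ (by positivity) fun h => ?_
  rcases eq_or_ne h 0 with rfl | hh
  · simp
  have hhp : 0 < ‖h‖ := norm_pos_iff.2 hh
  have := key ((‖x - y‖ / ‖h‖) • h)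
  have n : ‖(‖x - y‖ / ‖h‖) • h‖ = ‖x - y‖ := by
    rw [norm_smul, Real.norm_of_nonneg (by positivity)]
    field_simp
  rw [n, map_smul, smul_eq_mul, abs_mul, abs_of_nonneg (by positivity : 0 ≤ ‖x - y‖ / ‖h‖)] at this
  rw [Real.norm_eq_abs]
  rw [div_mul_eq_mul_div, div_le_iff₀ hhp] at this
  have h2 : ‖x - y‖ * |(D x - D y) h| ≤ ‖x - y‖ * (6 * C * ‖x - y‖ * ‖h‖) := by
    refine this.trans (le_of_eq ?_); ring
  exact le_of_mul_le_mul_left h2 hpos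

/-- Second order Taylor expansion at a point of differentiability of the gradient. -/
lemma c11_taylor {f : H → ℝ} {D : H → H →L[ℝ] ℝ} (hD : ∀ x, HasFDerivAt f (D x) x)
    {x : H} {A : H →L[ℝ] H →L[ℝ] ℝ} (hA : HasFDerivAt D A x) {κ : ℝ} (hκ : 0 < κ) :
    ∃ δ > 0, ∀ h : H, ‖h‖ < δ → |f (x + h) - f x - D x h - 1 / 2 * A h h| ≤ κ * ‖h‖ ^ 2 := by
  have h2 := Asymptotics.isLittleO_iff.1 hA.isLittleO hκ
  obtain ⟨δ, hδ, hb⟩ := Metric.eventually_nhds_iff.1 h2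
  refine ⟨δ, hδ, fun h hh => ?_⟩
  have hder : ∀ s ∈ Set.Icc (0:ℝ) 1, HasDerivWithinAt
      (fun s : ℝ => f (x + s • h) - s * D x h - 1 / 2 * s ^ 2 * A h h)
      (D (x + s • h) h - D x h - s * A h h) (Set.Icc 0 1) s := by
    intro s _
    have e1 : HasDerivAt (fun s : ℝ => x + s • h) h s := by
      simpa using ((hasDerivAt_id s).smul_const h).const_add x
    have e2 := (hD (x + s • h)).comp_hasDerivAt s e1
    have e3 : HasDerivAt (fun s : ℝ => s * D x h) (D x h) s := by
      simpa using (hasDerivAt_id s).mul_const (D x h)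
    have e4 : HasDerivAt (fun s : ℝ => 1 / 2 * s ^ 2 * A h h) (s * A h h) s := by
      have := (((hasDerivAt_id s).pow 2).const_mul (1 / 2)).mul_const (A h h)
      refine this.congr_deriv ?_
      simp
    exact ((e2.sub e3).sub e4).hasDerivWithinAt
  have := norm_image_sub_le_of_norm_deriv_le_segment_01' (C := κ * ‖h‖ ^ 2) hder ?_
  · simp only [one_smul, zero_smul, add_zero, Real.norm_eq_abs] at this
    refine le_trans (le_of_eq ?_) this
    congr 1; ring
  · intro s hs
    have hsn : ‖s • h‖ ≤ ‖h‖ := by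
      rw [norm_smul, Real.norm_of_nonneg hs.1]
      exact mul_le_of_le_one_left (norm_nonneg _) hs.2.le
    have := hb (y := x + s • h) (by rw [dist_eq_norm, add_sub_cancel_left]; exact lt_of_le_of_lt hsn hh)
    rw [add_sub_cancel_left] at this
    have e : D (x + s • h) h - D x h - s * A h h = (D (x + s • h) - D x - A (s • h)) h := by
      simp
    rw [e]
    calc _ ≤ ‖D (x + s • h) - D x - A (s • h)‖ * ‖h‖ := ContinuousLinearMap.le_opNorm _ _
      _ ≤ (κ * ‖s • h‖) * ‖h‖ := by gcongr
      _ ≤ (κ * ‖h‖) * ‖h‖ := by gcongr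
      _ = _ := by ring

/-- Jensen-type lemma: a set on which a Lipschitz gradient map covers a ball contains
a point of differentiability. -/
lemma jensen_point [FiniteDimensional ℝ H] [MeasurableSpace H] [BorelSpace H]
    {T : H → H →L[ℝ] ℝ} {K : NNReal} (hT : LipschitzWith K T) {Z : Set H} {r : ℝ} (hr : 0 < r)
    (hZ : ∀ P : H →L[ℝ] ℝ, ‖P‖ < r → ∃ z ∈ Z, T z = P) :
    ∃ z ∈ Z, DifferentiableAt ℝ T z := by
  by_contra hcon
  push Not at hcon
  let _ : MeasurableSpace (H →L[ℝ] ℝ) := borel _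
  have : BorelSpace (H →L[ℝ] ℝ) := ⟨rfl⟩
  have hfr : Module.finrank ℝ (H →L[ℝ] ℝ) = Module.finrank ℝ H := by
    rw [← Subspace.dual_finrank_eq (K := ℝ) (V := H)]
    exact (LinearMap.toContinuousLinearMap (𝕜 := ℝ) (E := H) (F' := ℝ)).finrank_eq.symm
  have h1 := MeasureTheory.isAddHaarMeasure_hausdorffMeasure (E := H)
  have h2 := MeasureTheory.isAddHaarMeasure_hausdorffMeasure (E := (H →L[ℝ] ℝ))
  rw [hfr] at h2
  have hae := hT.ae_differentiableAt
    (μ := MeasureTheory.Measure.hausdorffMeasure (Module.finrank ℝ H : ℝ))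
  have hnull : (MeasureTheory.Measure.hausdorffMeasure (Module.finrank ℝ H : ℝ)) Z = 0 := by
    refine MeasureTheory.measure_mono_null ?_ hae
    intro z hz
    exact hcon z hz
  have him := (hT.lipschitzOnWith (s := Z)).hausdorffMeasure_image_le
    (d := (Module.finrank ℝ H : ℝ)) (by positivity)
  rw [hnull, mul_zero] at him
  have hsub : Metric.ball (0 : H →L[ℝ] ℝ) r ⊆ T '' Z := by
    intro P hP
    obtain ⟨z, hz, hz'⟩ := hZ P (by simpa using hP)
    exact ⟨z, hz, hz'⟩
  have hpos := Metric.measure_ball_pos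
    (MeasureTheory.Measure.hausdorffMeasure (Module.finrank ℝ H : ℝ)) (0 : H →L[ℝ] ℝ) hr
  exact absurd (le_antisymm ((MeasureTheory.measure_mono hsub).trans him) bot_le) hpos.ne'

end C11

section Envelope
variable {E : Type*} [NormedAddCommGroup E] [InnerProductSpace ℝ E]

lemma env_convex_cont [FiniteDimensional ℝ E] {K : Set E} {U : E → ℝ} {Λ : ℝ}
    {X : E → E} (hXK : ∀ z, X z ∈ K)
    (hX : ∀ z, ∀ x ∈ K, U x - Λ / 2 * ‖x - z‖ ^ 2 ≤ U (X z) - Λ / 2 * ‖X z - z‖ ^ 2) :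
    Continuous fun z => U (X z) - Λ / 2 * ‖X z - z‖ ^ 2 := by
  have hc : ConvexOn ℝ Set.univ
      (fun z => (U (X z) - Λ / 2 * ‖X z - z‖ ^ 2) + Λ / 2 * ‖z‖ ^ 2) := by
    refine ⟨convex_univ, ?_⟩
    intro z _ z' _ a b ha hb hab
    have key : ∀ x y : E, (U x - Λ / 2 * ‖x - y‖ ^ 2) + Λ / 2 * ‖y‖ ^ 2
        = U x - Λ / 2 * ‖x‖ ^ 2 + Λ * inner ℝ x y := by
      intro x y
      rw [norm_sub_sq_real]; ring
    have h1 := hX z _ (hXK (a • z + b • z'))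
    have h2 := hX z' _ (hXK (a • z + b • z'))
    have k0 := key (X (a • z + b • z')) (a • z + b • z')
    have k1 := key (X (a • z + b • z')) z
    have k2 := key (X (a • z + b • z')) z'
    simp only [smul_eq_mul]
    rw [k0, inner_add_right, inner_smul_right, inner_smul_right]
    have h1' := mul_le_mul_of_nonneg_left h1 ha
    have h2' := mul_le_mul_of_nonneg_left h2 hb
    have k1' := congrArg (fun q => a * q) k1
    have k2' := congrArg (fun q => b * q) k2
    have hb' : b = 1 - a := by linarith
    subst hb'
    linarith
  have hcont := hc.continuousOn isOpen_univ
  rw [← continuousOn_univ]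
  have h2 : ContinuousOn (fun z : E => Λ / 2 * ‖z‖ ^ 2) Set.univ := by fun_prop
  refine (hcont.sub h2).congr ?_
  intro z _
  simp

/-- C^{1,1} envelope of the sup-convolution of `U`. -/
lemma env_exists [FiniteDimensional ℝ E] {K : Set E} (hK : IsCompact K) (hne : K.Nonempty)
    {U : E → ℝ} (hU : ContinuousOn U K) {Λ : ℝ} (hΛ : 0 < Λ) :
    ∃ (F : E → ℝ) (D : E → E →L[ℝ] ℝ),
      (∀ x y, |F y - F x - D x (y - x)| ≤ Λ * ‖y - x‖ ^ 2) ∧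
      (∀ x ∈ K, ∀ ξ, U x - Λ * ‖x - ξ‖ ^ 2 ≤ F ξ) ∧
      (∀ ξ r, ∀ p : E →L[ℝ] ℝ, (∀ x ∈ K, ∀ ξ', U x - Λ * ‖x - ξ'‖ ^ 2 ≤
        r + p (ξ' - ξ) + Λ * ‖ξ' - ξ‖ ^ 2) → F ξ ≤ r) := by
  have hmax : ∀ z, ∃ x ∈ K, ∀ y ∈ K,
      U y - Λ / 2 * ‖y - z‖ ^ 2 ≤ U x - Λ / 2 * ‖x - z‖ ^ 2 := by
    intro z
    obtain ⟨x, hx, hm⟩ := hK.exists_isMaxOn hne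
      (f := fun x => U x - Λ / 2 * ‖x - z‖ ^ 2) (by fun_prop)
    exact ⟨x, hx, fun y hy => hm hy⟩
  choose X hXK hX using hmax
  have hScont := env_convex_cont hXK hX
  set S : E → ℝ := fun z => U (X z) - Λ / 2 * ‖X z - z‖ ^ 2 with hS
  have hSge : ∀ z, ∀ x ∈ K, U x - Λ / 2 * ‖x - z‖ ^ 2 ≤ S z := hX
  obtain ⟨x0, hx0⟩ := hne
  have hmin : ∀ ξ, ∃ z, ∀ z', S z + Λ * ‖z - ξ‖ ^ 2 ≤ S z' + Λ * ‖z' - ξ‖ ^ 2 := by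
    intro ξ
    have hc : Continuous fun z => S z + Λ * ‖z - ξ‖ ^ 2 := by fun_prop
    refine hc.exists_forall_le' ξ ?_
    set e := ‖x0 - ξ‖ with he
    set w := |S ξ - U x0 + Λ / 2 * e ^ 2| with hw
    have hcomp := (isCompact_closedBall ξ (4 * e + 1 + 4 / Λ * w)).compl_mem_cocompact
    filter_upwards [hcomp] with z hz
    simp only [Set.mem_compl_iff, Metric.mem_closedBall, not_le, dist_eq_norm] at hz
    simp only [sub_self, norm_zero]
    set ρ := ‖z - ξ‖ with hρ
    have h1 := hSge z x0 hx0
    have h2 : ‖x0 - z‖ ≤ e + ρ := by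
      have : x0 - z = (x0 - ξ) - (z - ξ) := by abel
      rw [this]; exact norm_sub_le _ _
    have h3 : ‖x0 - z‖ ^ 2 ≤ (e + ρ) ^ 2 := by gcongr
    have he0 : 0 ≤ e := norm_nonneg _
    have hw0 : 0 ≤ w := abs_nonneg _
    have hww : S ξ - U x0 + Λ / 2 * e ^ 2 ≤ w := le_abs_self _
    have hq : 0 ≤ 4 / Λ * w := by positivity
    have hρw : w ≤ Λ / 4 * ρ := by
      have : 4 / Λ * w ≤ ρ := by linarith
      rw [div_mul_eq_mul_div, div_le_iff₀ hΛ] at this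
      linarith
    have a1 : Λ * (ρ * (4 * e)) ≤ Λ * (ρ * ρ) := by
      gcongr; linarith
    have a2 : Λ * (ρ * 1) ≤ Λ * (ρ * ρ) := by
      gcongr; linarith
    nlinarith [mul_le_mul_of_nonneg_left h3 hΛ.le]
  choose Zf hZ using hmin
  refine ⟨fun ξ => S (Zf ξ) + Λ * ‖Zf ξ - ξ‖ ^ 2,
    fun ξ => (2 * Λ) • innerSL ℝ (ξ - Zf ξ), ?_, ?_, ?_⟩
  · intro ξ ξ'
    simp only [_root_.smul_apply, innerSL_apply_apply, smul_eq_mul]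
    -- semiconvexity of S
    have hsc : ∀ z w : E, ∀ t : ℝ, 0 ≤ t → t ≤ 1 →
        S (z + t • w) ≤ (1 - t) * S z + t * S (z + w) + Λ / 2 * (t * (1 - t)) * ‖w‖ ^ 2 := by
      intro z w t ht ht1
      have h1 := mul_le_mul_of_nonneg_left (hSge z _ (hXK (z + t • w))) (by linarith : 0 ≤ 1 - t)
      have h2 := mul_le_mul_of_nonneg_left (hSge (z + w) _ (hXK (z + t • w))) ht
      have h3 : S (z + t • w) = U (X (z + t • w)) - Λ / 2 * ‖X (z + t • w) - (z + t • w)‖ ^ 2 := rfl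
      rw [h3]
      generalize X (z + t • w) = x at *
      have e1 : ‖x - (z + t • w)‖ ^ 2 = ‖x - z‖ ^ 2 - 2 * t * inner ℝ (x - z) w + t ^ 2 * ‖w‖ ^ 2 := by
        rw [← sub_sub, norm_sub_sq_real, inner_smul_right, norm_smul, Real.norm_of_nonneg ht]; ring
      have e2 : ‖x - (z + w)‖ ^ 2 = ‖x - z‖ ^ 2 - 2 * inner ℝ (x - z) w + ‖w‖ ^ 2 := by
        rw [← sub_sub, norm_sub_sq_real]
      rw [e1]; rw [e2] at h2
      nlinarith
    -- subgradient
    have hsub : ∀ w, S (Zf ξ) + 2 * Λ * inner ℝ (ξ - Zf ξ) w - Λ / 2 * ‖w‖ ^ 2 ≤ S (Zf ξ + w) := by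
      intro w
      have hk : ∀ t : ℝ, 0 < t → t ≤ 1 →
          0 ≤ (S (Zf ξ + w) - S (Zf ξ) + Λ / 2 * ‖w‖ ^ 2 - 2 * Λ * inner ℝ (ξ - Zf ξ) w)
            + t * (Λ / 2 * ‖w‖ ^ 2) := by
        intro t ht ht1
        have h1 := hsc (Zf ξ) w t ht.le ht1
        have h2 := hZ ξ (Zf ξ + t • w)
        have e1 : ‖Zf ξ + t • w - ξ‖ ^ 2 = ‖Zf ξ - ξ‖ ^ 2 - 2 * t * inner ℝ (ξ - Zf ξ) w
            + t ^ 2 * ‖w‖ ^ 2 := by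
          have : Zf ξ + t • w - ξ = t • w - (ξ - Zf ξ) := by abel
          rw [this, norm_sub_sq_real, inner_smul_left, norm_smul, Real.norm_of_nonneg ht.le,
            real_inner_comm, norm_sub_rev (Zf ξ) ξ]
          simp; ring
        rw [e1] at h2
        have h3 : 0 ≤ t * ((S (Zf ξ + w) - S (Zf ξ) + Λ / 2 * ‖w‖ ^ 2
            - 2 * Λ * inner ℝ (ξ - Zf ξ) w) + t * (Λ / 2 * ‖w‖ ^ 2)) := by
          nlinarith
        exact nonneg_of_mul_nonneg_right h3 ht
      by_contra hcon
      push Not at hcon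
      set a := S (Zf ξ + w) - S (Zf ξ) + Λ / 2 * ‖w‖ ^ 2 - 2 * Λ * inner ℝ (ξ - Zf ξ) w with ha
      have ha0 : a < 0 := by rw [ha]; linarith
      set c := Λ / 2 * ‖w‖ ^ 2 with hcdef
      have hc0 : 0 ≤ c := by positivity
      have hlim : Tendsto (fun t : ℝ => a + t * c) (𝓝[>] 0) (𝓝 (a + 0 * c)) :=
        tendsto_nhdsWithin_of_tendsto_nhds (by fun_prop : Continuous fun t : ℝ => a + t * c).continuousAt
      have := ge_of_tendsto hlim (b := 0) (by
        filter_upwards [Ioo_mem_nhdsGT (zero_lt_one : (0:ℝ) < 1)] with t ht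
        exact hk t ht.1 ht.2.le)
      linarith
    set d := ξ - Zf ξ with hd
    have hdn : ‖Zf ξ - ξ‖ = ‖d‖ := norm_sub_rev _ _
    rw [hdn]
    set e := ξ' - ξ with he
    rw [abs_le]
    constructor
    · have h1 := hsub (Zf ξ' - Zf ξ)
      rw [add_sub_cancel] at h1
      set w := Zf ξ' - Zf ξ with hw
      have e1 : ‖Zf ξ' - ξ'‖ ^ 2 = ‖w‖ ^ 2 + ‖d‖ ^ 2 + ‖e‖ ^ 2 - 2 * inner ℝ d w - 2 * inner ℝ w e
          + 2 * inner ℝ d e := by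
        have : Zf ξ' - ξ' = w - (d + e) := by rw [hw, hd, he]; abel
        rw [this, norm_sub_sq_real, norm_add_sq_real, inner_add_right, real_inner_comm w d]; ring
      rw [e1]
      have h4 : 0 ≤ ‖w - (2:ℝ) • e‖ ^ 2 := by positivity
      rw [norm_sub_sq_real, inner_smul_right, norm_smul] at h4
      norm_num at h4
      nlinarith
    · have h1 := hZ ξ' (Zf ξ)
      have e1 : ‖Zf ξ - ξ'‖ ^ 2 = ‖d‖ ^ 2 + 2 * inner ℝ d e + ‖e‖ ^ 2 := by
        have : Zf ξ - ξ' = - (d + e) := by rw [hd, he]; abel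
        rw [this, norm_neg, norm_add_sq_real]
      rw [e1] at h1
      linarith
  · intro x hx ξ
    have h1 := hSge (Zf ξ) x hx
    have h2 : ‖x - Zf ξ‖ ≤ ‖x - ξ‖ + ‖Zf ξ - ξ‖ := by
      have : x - Zf ξ = (x - ξ) - (Zf ξ - ξ) := by abel
      rw [this]; exact norm_sub_le _ _
    have h3 : ‖x - Zf ξ‖ ^ 2 ≤ (‖x - ξ‖ + ‖Zf ξ - ξ‖) ^ 2 := by gcongr
    have h4 : ‖x - Zf ξ‖ ^ 2 ≤ 2 * ‖x - ξ‖ ^ 2 + 2 * ‖Zf ξ - ξ‖ ^ 2 := by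
      nlinarith [sq_nonneg (‖x - ξ‖ - ‖Zf ξ - ξ‖)]
    change U x - Λ * ‖x - ξ‖ ^ 2 ≤ S (Zf ξ) + Λ * ‖Zf ξ - ξ‖ ^ 2
    nlinarith
  · intro ξ r p' hp
    obtain ⟨p, rfl⟩ := (InnerProductSpace.toDual ℝ E).surjective p'
    simp only [InnerProductSpace.toDual_apply_apply] at hp
    set w : E := (1 / (2 * Λ)) • p with hw
    have hpw : p = (2 * Λ) • w := by
      rw [hw, smul_smul]; field_simp; simp
    have h1 := hZ ξ (ξ - w)
    refine h1.trans ?_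
    set x := X (ξ - w) with hx
    have h2 : S (ξ - w) = U x - Λ / 2 * ‖x - (ξ - w)‖ ^ 2 := rfl
    rw [h2]
    set y := x - (ξ - w) with hy
    have h3 := hp x (hXK _) (ξ - w + (1 / 2 : ℝ) • y)
    have e1 : x - (ξ - w + (1 / 2 : ℝ) • y) = (1 / 2 : ℝ) • y := by
      have : x = y + (ξ - w) := by rw [hy]; abel
      rw [this]; module
    have e2 : ξ - w + (1 / 2 : ℝ) • y - ξ = (1 / 2 : ℝ) • y - w := by module
    have e3 : ξ - w - ξ = - w := by abel
    have i1 : inner ℝ p ((1 / 2 : ℝ) • y - w) = 2 * Λ * (1 / 2 * inner ℝ w y - ‖w‖ ^ 2) := by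
      rw [hpw, inner_smul_left, inner_sub_right, inner_smul_right w y, real_inner_self_eq_norm_sq]
      simp
    have i2 : ‖(1 / 2 : ℝ) • y - w‖ ^ 2 = 1 / 4 * ‖y‖ ^ 2 - inner ℝ w y + ‖w‖ ^ 2 := by
      rw [norm_sub_sq_real, norm_smul, inner_smul_left, real_inner_comm w y]
      simp; ring
    have i3 : ‖(1 / 2 : ℝ) • y‖ ^ 2 = 1 / 4 * ‖y‖ ^ 2 := by
      rw [norm_smul]; simp; ring
    rw [e1, e2, i1, i2, i3] at h3
    rw [e3, norm_neg]
    nlinarith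

end Envelope

lemma clm_lip {H : Type*} [NormedAddCommGroup H] [NormedSpace ℝ H] (L : H →L[ℝ] H →L[ℝ] ℝ) :
    ∃ k, LipschitzWith k (fun z => L z) := ⟨_, L.lipschitz⟩

lemma clm_diff {H : Type*} [NormedAddCommGroup H] [NormedSpace ℝ H] (L : H →L[ℝ] H →L[ℝ] ℝ)
    (DW : H → H →L[ℝ] ℝ) (z : H) (h : DifferentiableAt ℝ (fun z => DW z - L z) z) :
    DifferentiableAt ℝ DW z := by
  have := h.add (L.differentiableAt (x := z))
  refine this.congr_of_eventuallyEq (Eventually.of_forall fun z => ?_)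
  simp

section Sums
variable {E : Type*} [NormedAddCommGroup E] [InnerProductSpace ℝ E]

/-- The standard inner product form on `E × E`. -/
def prodForm (E : Type*) [NormedAddCommGroup E] [InnerProductSpace ℝ E] :
    (E × E) →L[ℝ] (E × E) →L[ℝ] ℝ :=
  (innerSL ℝ : E →L[ℝ] E →L[ℝ] ℝ).bilinearComp (ContinuousLinearMap.fst ℝ E E)
      (ContinuousLinearMap.fst ℝ E E) +
  (innerSL ℝ : E →L[ℝ] E →L[ℝ] ℝ).bilinearComp (ContinuousLinearMap.snd ℝ E E)
      (ContinuousLinearMap.snd ℝ E E)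

lemma prodForm_self (z : E × E) : prodForm E z z = ‖z.1‖ ^ 2 + ‖z.2‖ ^ 2 := by
  simp [prodForm]

lemma norm_sq_le_prodForm (z : E × E) : ‖z‖ ^ 2 ≤ ‖z.1‖ ^ 2 + ‖z.2‖ ^ 2 := by
  rw [Prod.norm_def]
  rcases max_cases ‖z.1‖ ‖z.2‖ with ⟨h, _⟩ | ⟨h, _⟩ <;> rw [h] <;> nlinarith [sq_nonneg ‖z.1‖, sq_nonneg ‖z.2‖]

lemma sums_max [FiniteDimensional ℝ E] {K1 K2 : Set E} (hK1 : IsCompact K1) (hK2 : IsCompact K2)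
    (h01 : 0 ∈ K1) (h02 : 0 ∈ K2) {U V : E → ℝ} (hU : ContinuousOn U K1) (hV : ContinuousOn V K2)
    {R : (E × E) →L[ℝ] (E × E) →L[ℝ] ℝ} (hR0 : ∀ z, 0 ≤ R z z) {β : ℝ}
    (hRβ : ∀ z, R z z ≤ β * (‖z.1‖ ^ 2 + ‖z.2‖ ^ 2))
    (hmax : ∀ x ∈ K1, ∀ y ∈ K2, U x + V y ≤ R (x, y) (x, y)) (hUV : U 0 + V 0 = 0)
    {ρ s : ℝ} (hρ : 0 < ρ) (hρ1 : ρ ≤ 1) (hs : 0 < s) {P : (E × E) →L[ℝ] ℝ} (hP : ‖P‖ < ρ * s) :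
    ∃ ζ : E × E, ∃ x ∈ K1, ∃ y ∈ K2, ‖ζ‖ ≤ s ∧ ‖x - ζ.1‖ ≤ s ∧ ‖y - ζ.2‖ ≤ s ∧
      ∀ x' ∈ K1, ∀ y' ∈ K2, ∀ ζ' : E × E,
        U x' + V y' - (2 * β + 1) * ‖x' - ζ'.1‖ ^ 2 - (2 * β + 1) * ‖y' - ζ'.2‖ ^ 2
          - (2 * R ζ' ζ' + ρ * (‖ζ'.1‖ ^ 2 + ‖ζ'.2‖ ^ 2)) - P ζ' ≤
        U x + V y - (2 * β + 1) * ‖x - ζ.1‖ ^ 2 - (2 * β + 1) * ‖y - ζ.2‖ ^ 2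
          - (2 * R ζ ζ + ρ * (‖ζ.1‖ ^ 2 + ‖ζ.2‖ ^ 2)) - P ζ := by
  set F : E → E → E × E → ℝ := fun x' y' ζ' =>
    U x' + V y' - (2 * β + 1) * ‖x' - ζ'.1‖ ^ 2 - (2 * β + 1) * ‖y' - ζ'.2‖ ^ 2
          - (2 * R ζ' ζ' + ρ * (‖ζ'.1‖ ^ 2 + ‖ζ'.2‖ ^ 2)) - P ζ' with hF
  have hbd : ∀ x ∈ K1, ∀ y ∈ K2, ∀ ζ, F x y ζ ≤ -(‖x - ζ.1‖ ^ 2 + ‖y - ζ.2‖ ^ 2)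
      - ρ * ‖ζ‖ ^ 2 + ‖P‖ * ‖ζ‖ := by
    intro x hx y hy ζ
    have h1 := hmax x hx y hy
    set e : E × E := (x - ζ.1, y - ζ.2) with he
    have hxy : ((x, y) : E × E) = ζ + e := by
      rw [he]; ext <;> simp
    rw [hxy] at h1
    have h2 := hR0 (ζ - e)
    simp only [map_add, map_sub, _root_.add_apply, _root_.sub_apply] at h1 h2
    have h3 := hRβ e
    have h4 : -P ζ ≤ ‖P‖ * ‖ζ‖ := by
      have := P.le_opNorm ζ
      rw [Real.norm_eq_abs] at this
      linarith [neg_abs_le (P ζ)]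
    have h5 := mul_le_mul_of_nonneg_left (norm_sq_le_prodForm ζ) hρ.le
    have e1 : e.1 = x - ζ.1 := rfl
    have e2 : e.2 = y - ζ.2 := rfl
    rw [e1, e2] at h3
    simp only [hF]
    nlinarith
  have h0 : F 0 0 0 = 0 := by simp [hF, hUV]
  have hcomp : IsCompact (K1 ×ˢ K2 ×ˢ Metric.closedBall (0 : E × E) s) :=
    hK1.prod (hK2.prod (isCompact_closedBall _ _))
  have hcont : ContinuousOn (fun q : E × E × (E × E) => F q.1 q.2.1 q.2.2)
      (K1 ×ˢ K2 ×ˢ Metric.closedBall (0 : E × E) s) := by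
    have c1 : ContinuousOn (fun q : E × E × (E × E) => U q.1)
        (K1 ×ˢ K2 ×ˢ Metric.closedBall (0 : E × E) s) :=
      hU.comp continuousOn_fst fun q hq => hq.1
    have c2 : ContinuousOn (fun q : E × E × (E × E) => V q.2.1)
        (K1 ×ˢ K2 ×ˢ Metric.closedBall (0 : E × E) s) :=
      hV.comp (continuous_fst.comp continuous_snd).continuousOn fun q hq => hq.2.1
    have c3 : Continuous fun q : E × E × (E × E) => R q.2.2 q.2.2 := by fun_prop
    have c4 : Continuous fun q : E × E × (E × E) => (2 * β + 1) * ‖q.1 - q.2.2.1‖ ^ 2 := by fun_prop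
    have c5 : Continuous fun q : E × E × (E × E) => (2 * β + 1) * ‖q.2.1 - q.2.2.2‖ ^ 2 := by fun_prop
    have c6 : Continuous fun q : E × E × (E × E) =>
      2 * R q.2.2 q.2.2 + ρ * (‖q.2.2.1‖ ^ 2 + ‖q.2.2.2‖ ^ 2) := by fun_prop
    have c7 : Continuous fun q : E × E × (E × E) => P q.2.2 := by fun_prop
    exact ((((c1.add c2).sub c4.continuousOn).sub c5.continuousOn).sub c6.continuousOn).sub
      c7.continuousOn
  obtain ⟨⟨x, y, ζ⟩, hq, hm⟩ := hcomp.exists_isMaxOn ⟨(0, 0, 0), h01, h02, by simp [hs.le]⟩ hcont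
  have hm' : ∀ x' ∈ K1, ∀ y' ∈ K2, ∀ ζ', ‖ζ'‖ ≤ s → F x' y' ζ' ≤ F x y ζ := by
    intro x' hx' y' hy' ζ' hζ'
    exact hm (show (x', y', ζ') ∈ _ from ⟨hx', hy', by simpa using hζ'⟩)
  have hge := hm' 0 h01 0 h02 0 (by simp [hs.le])
  rw [h0] at hge
  have hx : x ∈ K1 := hq.1
  have hy : y ∈ K2 := hq.2.1
  have hζ : ‖ζ‖ ≤ s := by simpa using hq.2.2
  have hb := hbd x hx y hy ζ
  have hPζ : ‖P‖ * ‖ζ‖ ≤ s ^ 2 := by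
    have : ‖P‖ ≤ s := by nlinarith
    calc ‖P‖ * ‖ζ‖ ≤ s * s := by gcongr
      _ = s ^ 2 := by ring
  have hρζ : 0 ≤ ρ * ‖ζ‖ ^ 2 := by positivity
  refine ⟨ζ, x, hx, y, hy, hζ, ?_, ?_, ?_⟩
  · refine abs_le_of_sq_le_sq' ?_ hs.le |>.2
    nlinarith [sq_nonneg ‖y - ζ.2‖]
  · refine abs_le_of_sq_le_sq' ?_ hs.le |>.2
    nlinarith [sq_nonneg ‖x - ζ.1‖]
  · intro x' hx' y' hy' ζ'
    by_cases hζ' : ‖ζ'‖ ≤ s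
    · exact hm' x' hx' y' hy' ζ' hζ'
    · push Not at hζ'
      refine le_trans ?_ hge
      have := hbd x' hx' y' hy' ζ'
      have h1 : ‖P‖ * ‖ζ'‖ ≤ ρ * s * ‖ζ'‖ := by gcongr
      have h2 : ρ * s * ‖ζ'‖ ≤ ρ * ‖ζ'‖ * ‖ζ'‖ := by gcongr
      change F x' y' ζ' ≤ 0
      nlinarith [sq_nonneg ‖x' - ζ'.1‖, sq_nonneg ‖y' - ζ'.2‖]

/-- At a contact point, the gradient of the envelope is explicit. -/
lemma contact_grad {F : E → ℝ} {D : E →L[ℝ] ℝ} {ξ x : E} {a Λ : ℝ} (hD : HasFDerivAt F D ξ)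
    (hge : ∀ ξ', a - Λ * ‖x - ξ'‖ ^ 2 ≤ F ξ') (heq : F ξ = a - Λ * ‖x - ξ‖ ^ 2) :
    D = (2 * Λ) • innerSL ℝ (x - ξ) := by
  have h1 : HasFDerivAt (fun ξ' : E => ‖x - ξ'‖ ^ 2) (-(2:ℝ) • innerSL ℝ (x - ξ)) ξ := by
    have h0 : HasFDerivAt (fun ξ' : E => x - ξ') (-ContinuousLinearMap.id ℝ E) ξ :=
      (hasFDerivAt_id ξ).const_sub x
    have := h0.norm_sq
    refine this.congr_fderiv ?_
    ext v; simp; ring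
  have h2 := hD.sub ((h1.const_mul Λ).const_sub a)
  have hmin : IsLocalMin (F - fun ξ' => a - Λ * ‖x - ξ'‖ ^ 2) ξ := by
    refine Eventually.of_forall fun ξ' => ?_
    simp only [Pi.sub_apply]
    have := hge ξ'
    rw [heq]; linarith
  have h3 := hmin.hasFDerivAt_eq_zero h2
  rw [sub_eq_zero] at h3
  rw [h3]
  ext v; simp; ring

set_option maxHeartbeats 2000000 in
/-- Theorem on sums (non-asymptotic version with nearby points). -/
theorem sums_lemma [FiniteDimensional ℝ E] {K1 K2 : Set E} (hK1 : IsCompact K1)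
    (hK2 : IsCompact K2)
    (h01 : 0 ∈ K1) (h02 : 0 ∈ K2) {U V : E → ℝ} (hU : ContinuousOn U K1) (hV : ContinuousOn V K2)
    {R : (E × E) →L[ℝ] (E × E) →L[ℝ] ℝ} (hR0 : ∀ z, 0 ≤ R z z) {β : ℝ} (hβ : 0 ≤ β)
    (hRβ : ∀ z, R z z ≤ β * (‖z.1‖ ^ 2 + ‖z.2‖ ^ 2))
    (hmax : ∀ x ∈ K1, ∀ y ∈ K2, U x + V y ≤ R (x, y) (x, y)) (hUV : U 0 + V 0 = 0)
    {ρ : ℝ} (hρ : 0 < ρ) :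
    ∃ x ∈ K1, ∃ y ∈ K2, ∃ p1 p2 : E →L[ℝ] ℝ, ∃ A1 A2 : E →L[ℝ] E →L[ℝ] ℝ,
      ‖x‖ < ρ ∧ ‖y‖ < ρ ∧ ‖p1‖ < ρ ∧ ‖p2‖ < ρ ∧
      (∀ κ > 0, ∃ δ > 0, ∀ x' ∈ K1, ‖x' - x‖ < δ →
        U x' ≤ U x + p1 (x' - x) + 1 / 2 * A1 (x' - x) (x' - x) + κ * ‖x' - x‖ ^ 2) ∧
      (∀ κ > 0, ∃ δ > 0, ∀ y' ∈ K2, ‖y' - y‖ < δ →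
        V y' ≤ V y + p2 (y' - y) + 1 / 2 * A2 (y' - y) (y' - y) + κ * ‖y' - y‖ ^ 2) ∧
      ∀ h k : E, 1 / 2 * A1 h h + 1 / 2 * A2 k k ≤
        2 * R (h, k) (h, k) + ρ * (‖h‖ ^ 2 + ‖k‖ ^ 2) := by
  set ρ0 := min ρ 1 with hρ0_def
  have hρ0 : 0 < ρ0 := lt_min hρ one_pos
  have hρ01 : ρ0 ≤ 1 := min_le_right _ _
  have hρ0ρ : ρ0 ≤ ρ := min_le_left _ _
  set Λ := 2 * β + 1 with hΛdef
  have hΛ : 0 < Λ := by positivity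
  obtain ⟨F, DF, hF1, hF2, hF3⟩ := env_exists hK1 ⟨0, h01⟩ hU hΛ
  obtain ⟨G, DG, hG1, hG2, hG3⟩ := env_exists hK2 ⟨0, h02⟩ hV hΛ
  set Q : (E × E) →L[ℝ] (E × E) →L[ℝ] ℝ := (2:ℝ) • R + ρ0 • prodForm E with hQ
  have hQs : ∀ z, Q z z = 2 * R z z + ρ0 * (‖z.1‖ ^ 2 + ‖z.2‖ ^ 2) := by
    intro z
    simp only [hQ, _root_.add_apply, _root_.smul_apply, smul_eq_mul, prodForm_self]
  have hQΛ : ∀ z, Q z z ≤ Λ * (‖z.1‖ ^ 2 + ‖z.2‖ ^ 2) := by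
    intro z
    rw [hQs]
    have := hRβ z
    have : ρ0 * (‖z.1‖ ^ 2 + ‖z.2‖ ^ 2) ≤ 1 * (‖z.1‖ ^ 2 + ‖z.2‖ ^ 2) := by gcongr
    rw [hΛdef]; nlinarith
  set s := ρ / (4 * Λ + 4) with hsdef
  have hs : 0 < s := by positivity
  have hs1 : s * (4 * Λ + 4) = ρ := by rw [hsdef]; field_simp
  -- gradient map
  set DW : E × E → (E × E) →L[ℝ] ℝ := fun z =>
    (DF z.1).comp (ContinuousLinearMap.fst ℝ E E) + (DG z.2).comp (ContinuousLinearMap.snd ℝ E E)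
    with hDW
  have hFd := c11_hasFDerivAt hF1
  have hGd := c11_hasFDerivAt hG1
  set W : E × E → ℝ := fun z => F z.1 + G z.2 with hW
  have hWd : ∀ z, HasFDerivAt W (DW z) z := by
    intro z
    exact ((hFd z.1).comp z hasFDerivAt_fst).add ((hGd z.2).comp z hasFDerivAt_snd)
  obtain ⟨kF, hkF⟩ := c11_lipschitz hΛ.le hF1
  obtain ⟨kG, hkG⟩ := c11_lipschitz hΛ.le hG1
  have hDWl : ∃ k, LipschitzWith k DW := by
    have e1 : DW = fun z => (ContinuousLinearMap.compL ℝ (E × E) E ℝ).flip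
        (ContinuousLinearMap.fst ℝ E E) (DF z.1) + (ContinuousLinearMap.compL ℝ (E × E) E ℝ).flip
        (ContinuousLinearMap.snd ℝ E E) (DG z.2) := by
      funext z; rfl
    rw [e1]
    exact ⟨_, (((ContinuousLinearMap.lipschitz _).comp (hkF.comp LipschitzWith.prod_fst)).add
      ((ContinuousLinearMap.lipschitz _).comp (hkG.comp LipschitzWith.prod_snd)))⟩
  obtain ⟨kD, hkD⟩ := hDWl
  set L : (E × E) →L[ℝ] (E × E) →L[ℝ] ℝ := Q + Q.flip with hL
  obtain ⟨kL, hkL⟩ : ∃ k, LipschitzWith k (fun z => L z) := clm_lip (H := E × E) L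
  obtain ⟨kT, hT⟩ : ∃ k, LipschitzWith k (fun z => DW z - L z) := ⟨_, hkD.sub hkL⟩
  -- contact set
  set Z : Set (E × E) := {ζ | ∃ x ∈ K1, ∃ y ∈ K2, ∃ P : (E × E) →L[ℝ] ℝ,
      ‖ζ‖ ≤ s ∧ ‖x - ζ.1‖ ≤ s ∧ ‖y - ζ.2‖ ≤ s ∧
      F ζ.1 = U x - Λ * ‖x - ζ.1‖ ^ 2 ∧ G ζ.2 = V y - Λ * ‖y - ζ.2‖ ^ 2 ∧
      DW ζ = L ζ + P ∧
      ∀ ζ', W ζ' - Q ζ' ζ' - P ζ' ≤ W ζ - Q ζ ζ - P ζ} with hZ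
  have hQd : ∀ z : E × E, HasFDerivAt (fun z => Q z z) (L z) z := by
    intro z
    have := (Q.hasFDerivAt (x := z)).clm_apply (hasFDerivAt_id z)
    refine this.congr_fderiv ?_
    ext v <;> simp [hL]
  have hcov : ∀ P : (E × E) →L[ℝ] ℝ, ‖P‖ < ρ0 * s → ∃ z ∈ Z, DW z - L z = P := by
    intro P hP
    obtain ⟨ζ, x, hx, y, hy, hζ, hxζ, hyζ, hm⟩ := sums_max hK1 hK2 h01 h02 hU hV hR0 hRβ hmax hUV
      hρ0 hρ01 hs hP
    simp only [← hΛdef, ← hQs] at hm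
    set M := U x + V y - Λ * ‖x - ζ.1‖ ^ 2 - Λ * ‖y - ζ.2‖ ^ 2 - Q ζ ζ - P ζ with hM
    -- first envelope step
    have hs1 : ∀ y' ∈ K2, ∀ ξ η, F ξ ≤ M - (V y' - Λ * ‖y' - η‖ ^ 2) + Q (ξ, η) (ξ, η) + P (ξ, η) := by
      intro y' hy' ξ η
      refine hF3 ξ _ ((L (ξ, η) + P).comp (ContinuousLinearMap.inl ℝ E E)) ?_
      intro x' hx' ξ'
      have h1 := hm x' hx' y' hy' (ξ', η)
      have h2 : ((ξ', η) : E × E) = (ξ, η) + (ξ' - ξ, 0) := by simp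
      have h3 := hQΛ (ξ' - ξ, 0)
      simp only [norm_zero] at h3
      have h4 : Q (ξ', η) (ξ', η) = Q (ξ, η) (ξ, η) + L (ξ, η) (ξ' - ξ, 0)
          + Q (ξ' - ξ, 0) (ξ' - ξ, 0) := by
        rw [h2]; simp only [map_add, _root_.add_apply, hL, ContinuousLinearMap.flip_apply]; ring
      have h5 : P (ξ', η) = P (ξ, η) + P (ξ' - ξ, 0) := by rw [h2, map_add]
      rw [h4, h5] at h1
      simp only [ContinuousLinearMap.comp_apply, ContinuousLinearMap.inl_apply, _root_.add_apply]
      simp only at h1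
      nlinarith
    have hs2 : ∀ ξ η, G η ≤ M - F ξ + Q (ξ, η) (ξ, η) + P (ξ, η) := by
      intro ξ η
      refine hG3 η _ ((L (ξ, η) + P).comp (ContinuousLinearMap.inr ℝ E E)) ?_
      intro y' hy' η'
      have h1 := hs1 y' hy' ξ η'
      have h2 : ((ξ, η') : E × E) = (ξ, η) + (0, η' - η) := by simp
      have h3 := hQΛ (0, η' - η)
      simp only [norm_zero] at h3
      have h4 : Q (ξ, η') (ξ, η') = Q (ξ, η) (ξ, η) + L (ξ, η) (0, η' - η)
          + Q (0, η' - η) (0, η' - η) := by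
        rw [h2]; simp only [map_add, _root_.add_apply, hL, ContinuousLinearMap.flip_apply]; ring
      have h5 : P (ξ, η') = P (ξ, η) + P (0, η' - η) := by rw [h2, map_add]
      rw [h4, h5] at h1
      simp only [ContinuousLinearMap.comp_apply, ContinuousLinearMap.inr_apply, _root_.add_apply]
      nlinarith
    have hall : ∀ ζ', W ζ' - Q ζ' ζ' - P ζ' ≤ M := by
      intro ζ'
      have := hs2 ζ'.1 ζ'.2
      simp only [Prod.mk.eta] at this
      simp only [hW]; linarith
    have c1 := hF2 x hx ζ.1
    have c2 := hG2 y hy ζ.2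
    have c3 := hall ζ
    have hWζ : W ζ = F ζ.1 + G ζ.2 := rfl
    have hder : DW ζ = L ζ + P := by
      have hmx : IsLocalMax ((W - fun z => Q z z) - fun z => P z) ζ := by
        refine Eventually.of_forall fun ζ' => ?_
        simp only [Pi.sub_apply]
        have := hall ζ'
        linarith
      have := hmx.hasFDerivAt_eq_zero (((hWd ζ).sub (hQd ζ)).sub P.hasFDerivAt)
      rw [← sub_eq_zero, ← this]; abel
    refine ⟨ζ, ⟨x, hx, y, hy, P, hζ, hxζ, hyζ, by linarith, by linarith, hder, ?_⟩, ?_⟩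
    · intro ζ'
      have := hall ζ'
      linarith
    · rw [hder]; abel
  obtain ⟨ζ, hζZ, hdiff⟩ : ∃ z ∈ Z, DifferentiableAt ℝ (fun z => DW z - L z) z := by
    let _ : MeasurableSpace (E × E) := borel _
    have : BorelSpace (E × E) := ⟨rfl⟩
    exact jensen_point hT (by positivity) hcov
  have hdiffW : DifferentiableAt ℝ DW ζ := clm_diff (H := E × E) L DW ζ hdiff
  obtain ⟨x, hx, y, hy, P, hζ, hxζ, hyζ, hFe, hGe, hder, hall⟩ := hζZ
  have hζ1 : ‖ζ.1‖ ≤ s := (norm_fst_le ζ).trans hζ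
  have hζ2 : ‖ζ.2‖ ≤ s := (norm_snd_le ζ).trans hζ
  have hdF : DifferentiableAt ℝ DF ζ.1 := by
    have h1 : DifferentiableAt ℝ (fun ξ : E => (ξ, ζ.2)) ζ.1 := by fun_prop
    have h2 : DifferentiableAt ℝ (fun ξ : E => DW (ξ, ζ.2)) ζ.1 :=
      DifferentiableAt.comp (g := DW) ζ.1 (by simpa using hdiffW) h1
    have h3 := (h2.clm_comp (differentiableAt_const (ContinuousLinearMap.inl ℝ E E)))
    refine h3.congr_of_eventuallyEq (Eventually.of_forall fun ξ => ?_)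
    ext v; simp [hDW]
  have hdG : DifferentiableAt ℝ DG ζ.2 := by
    have h1 : DifferentiableAt ℝ (fun η : E => (ζ.1, η)) ζ.2 := by fun_prop
    have h2 : DifferentiableAt ℝ (fun η : E => DW (ζ.1, η)) ζ.2 :=
      DifferentiableAt.comp (g := DW) ζ.2 (by simpa using hdiffW) h1
    have h3 := (h2.clm_comp (differentiableAt_const (ContinuousLinearMap.inr ℝ E E)))
    refine h3.congr_of_eventuallyEq (Eventually.of_forall fun ξ => ?_)
    ext v; simp [hDW]
  have hTF := fun κ hκ => c11_taylor hFd hdF.hasFDerivAt (κ := κ) hκ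
  have hTG := fun κ hκ => c11_taylor hGd hdG.hasFDerivAt (κ := κ) hκ
  set A1 := fderiv ℝ DF ζ.1
  set A2 := fderiv ℝ DG ζ.2
  have hgF := contact_grad (hFd ζ.1) (fun ξ' => hF2 x hx ξ') hFe
  have hgG := contact_grad (hGd ζ.2) (fun ξ' => hG2 y hy ξ') hGe
  have hgrad : ∀ v : E, ‖v‖ ≤ s → ‖(2 * Λ) • innerSL ℝ v‖ < ρ := by
    intro v hv
    rw [norm_smul, innerSL_apply_norm, Real.norm_of_nonneg (by positivity)]
    have : 2 * Λ * ‖v‖ ≤ 2 * Λ * s := by gcongr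
    nlinarith
  refine ⟨x, hx, y, hy, DF ζ.1, DG ζ.2, A1, A2, ?_, ?_, ?_, ?_, ?_, ?_, ?_⟩
  · have : ‖x‖ ≤ ‖x - ζ.1‖ + ‖ζ.1‖ := by simpa using norm_add_le (x - ζ.1) ζ.1
    nlinarith
  · have : ‖y‖ ≤ ‖y - ζ.2‖ + ‖ζ.2‖ := by simpa using norm_add_le (y - ζ.2) ζ.2
    nlinarith
  · rw [hgF]; exact hgrad _ hxζ
  · rw [hgG]; exact hgrad _ hyζ
  · intro κ hκ
    obtain ⟨δ, hδ, hb⟩ := hTF κ hκ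
    refine ⟨δ, hδ, fun x' hx' hd => ?_⟩
    have h1 := hb (x' - x) hd
    have h2 := hF2 x' hx' (ζ.1 + (x' - x))
    have e : x' - (ζ.1 + (x' - x)) = x - ζ.1 := by abel
    rw [e] at h2
    rw [abs_le] at h1
    linarith [h1.2]
  · intro κ hκ
    obtain ⟨δ, hδ, hb⟩ := hTG κ hκ
    refine ⟨δ, hδ, fun x' hx' hd => ?_⟩
    have h1 := hb (x' - y) hd
    have h2 := hG2 x' hx' (ζ.2 + (x' - y))
    have e : x' - (ζ.2 + (x' - y)) = y - ζ.2 := by abel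
    rw [e] at h2
    rw [abs_le] at h1
    linarith [h1.2]
  · intro h k
    have hlim : 1 / 2 * A1 h h + 1 / 2 * A2 k k ≤ Q (h, k) (h, k) := by
      refine le_of_forall_pos_le_add fun κ hκ => ?_
      set κ' := κ / (‖h‖ ^ 2 + ‖k‖ ^ 2 + 1) with hκ'
      have hκ'0 : 0 < κ' := by positivity
      obtain ⟨δ1, hδ1, hb1⟩ := hTF κ' hκ'0
      obtain ⟨δ2, hδ2, hb2⟩ := hTG κ' hκ'0
      obtain ⟨t, ht, ht1, ht2⟩ : ∃ t : ℝ, 0 < t ∧ t * ‖h‖ < δ1 ∧ t * ‖k‖ < δ2 := by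
        have l1 : Tendsto (fun t : ℝ => t * ‖h‖) (𝓝[>] 0) (𝓝 (0 * ‖h‖)) :=
          tendsto_nhdsWithin_of_tendsto_nhds (by fun_prop : Continuous fun t : ℝ => t * ‖h‖).continuousAt
        have l2 : Tendsto (fun t : ℝ => t * ‖k‖) (𝓝[>] 0) (𝓝 (0 * ‖k‖)) :=
          tendsto_nhdsWithin_of_tendsto_nhds (by fun_prop : Continuous fun t : ℝ => t * ‖k‖).continuousAt
        rw [zero_mul] at l1 l2
        obtain ⟨t, h1, h2, h3⟩ := ((l1.eventually_lt_const hδ1).and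
          ((l2.eventually_lt_const hδ2).and self_mem_nhdsWithin)).exists
        exact ⟨t, h3, h1, h2⟩
      have n1 : ‖t • h‖ = t * ‖h‖ := by rw [norm_smul, Real.norm_of_nonneg ht.le]
      have n2 : ‖t • k‖ = t * ‖k‖ := by rw [norm_smul, Real.norm_of_nonneg ht.le]
      have b1 := hb1 (t • h) (by rw [n1]; exact ht1)
      have b2 := hb2 (t • k) (by rw [n2]; exact ht2)
      have b3 := hall (ζ + t • (h, k))
      have w1 : W (ζ + t • (h, k)) = F (ζ.1 + t • h) + G (ζ.2 + t • k) := rfl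
      have w2 : W ζ = F ζ.1 + G ζ.2 := rfl
      have d1 : DW ζ (t • (h, k)) = DF ζ.1 (t • h) + DG ζ.2 (t • k) := by
        simp [hDW]
      have q1 : Q (ζ + t • (h, k)) (ζ + t • (h, k)) = Q ζ ζ + L ζ (t • (h, k)) + t ^ 2 * Q (h, k) (h, k) := by
        simp only [map_add, _root_.add_apply, hL, ContinuousLinearMap.flip_apply, map_smul,
          _root_.smul_apply, smul_eq_mul]; ring
      rw [hder, _root_.add_apply] at d1
      rw [w1, w2, q1, map_add] at b3
      rw [n1] at b1
      rw [n2] at b2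
      rw [abs_le] at b1 b2
      have a1 : A1 (t • h) (t • h) = t ^ 2 * A1 h h := by
        simp only [map_smul, _root_.smul_apply, smul_eq_mul]; ring
      have a2 : A2 (t • k) (t • k) = t ^ 2 * A2 k k := by
        simp only [map_smul, _root_.smul_apply, smul_eq_mul]; ring
      rw [a1] at b1
      rw [a2] at b2
      have key : t ^ 2 * (1 / 2 * A1 h h + 1 / 2 * A2 k k) ≤
          t ^ 2 * (Q (h, k) (h, k) + κ' * (‖h‖ ^ 2 + ‖k‖ ^ 2)) := by
        nlinarith [b1.1, b2.1]
      have key2 := le_of_mul_le_mul_left key (by positivity)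
      have : κ' * (‖h‖ ^ 2 + ‖k‖ ^ 2) ≤ κ := by
        rw [hκ', div_mul_eq_mul_div, div_le_iff₀ (by positivity)]
        nlinarith
      linarith
    rw [hQs] at hlim
    simp only at hlim
    refine hlim.trans ?_
    gcongr

end Sums

section Basics
variable {d : ℕ}

lemma eunorm_eq (v : Fin d → ℝ) : eunorm v = ‖WithLp.toLp 2 v‖ := by
  rw [EuclideanSpace.norm_eq]; simp [eunorm]

lemma dotp_eq (v w : Fin d → ℝ) : dotp v w = inner ℝ (WithLp.toLp 2 v) (WithLp.toLp 2 w) := by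
  simp [dotp, PiLp.inner_apply, mul_comm]

lemma eunorm_nonneg (v : Fin d → ℝ) : 0 ≤ eunorm v := Real.sqrt_nonneg _

lemma eunorm_sq (v : Fin d → ℝ) : eunorm v ^ 2 = ∑ i, v i ^ 2 :=
  Real.sq_sqrt (Finset.sum_nonneg fun _ _ => sq_nonneg _)

lemma dotp_self (v : Fin d → ℝ) : dotp v v = eunorm v ^ 2 := by
  rw [eunorm_sq]; simp [dotp, sq]

lemma eunorm_zero : eunorm (0 : Fin d → ℝ) = 0 := by simp [eunorm]

lemma eunorm_add_le (v w : Fin d → ℝ) : eunorm (v + w) ≤ eunorm v + eunorm w := by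
  simp only [eunorm_eq, WithLp.toLp_add]; exact norm_add_le _ _

lemma eunorm_sub_le (v w : Fin d → ℝ) : eunorm (v - w) ≤ eunorm v + eunorm w := by
  simp only [eunorm_eq, WithLp.toLp_sub]; exact norm_sub_le _ _

lemma eunorm_sub_comm (v w : Fin d → ℝ) : eunorm (v - w) = eunorm (w - v) := by
  simp only [eunorm_eq, WithLp.toLp_sub]; exact norm_sub_rev _ _

lemma eunorm_sub_le' (u v w : Fin d → ℝ) : eunorm (u - w) ≤ eunorm (u - v) + eunorm (v - w) := by
  simpa using eunorm_add_le (u - v) (v - w)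

lemma eunorm_smul (c : ℝ) (v : Fin d → ℝ) : eunorm (c • v) = |c| * eunorm v := by
  simp only [eunorm_eq, WithLp.toLp_smul, norm_smul, Real.norm_eq_abs]

lemma abs_dotp_le (v w : Fin d → ℝ) : |dotp v w| ≤ eunorm v * eunorm w := by
  rw [dotp_eq, eunorm_eq, eunorm_eq]; exact abs_real_inner_le_norm _ _

lemma dotp_le (v w : Fin d → ℝ) : dotp v w ≤ eunorm v * eunorm w :=
  (le_abs_self _).trans (abs_dotp_le v w)

lemma dotp_comm (v w : Fin d → ℝ) : dotp v w = dotp w v := by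
  simp [dotp, mul_comm]

lemma dotp_add_right (u v w : Fin d → ℝ) : dotp u (v + w) = dotp u v + dotp u w := by
  simp [dotp, mul_add, Finset.sum_add_distrib]

lemma dotp_add_left (u v w : Fin d → ℝ) : dotp (u + v) w = dotp u w + dotp v w := by
  simp [dotp, add_mul, Finset.sum_add_distrib]

lemma dotp_sub_right (u v w : Fin d → ℝ) : dotp u (v - w) = dotp u v - dotp u w := by
  simp [dotp, mul_sub, Finset.sum_sub_distrib]

lemma dotp_sub_left (u v w : Fin d → ℝ) : dotp (u - v) w = dotp u w - dotp v w := by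
  simp [dotp, sub_mul, Finset.sum_sub_distrib]

lemma dotp_smul_right (c : ℝ) (v w : Fin d → ℝ) : dotp v (c • w) = c * dotp v w := by
  simp only [dotp, Pi.smul_apply, smul_eq_mul, Finset.mul_sum]
  exact Finset.sum_congr rfl fun i _ => by ring

lemma dotp_smul_left (c : ℝ) (v w : Fin d → ℝ) : dotp (c • v) w = c * dotp v w := by
  rw [dotp_comm, dotp_smul_right, dotp_comm]

lemma eunorm_add_sq (v w : Fin d → ℝ) :
    eunorm (v + w) ^ 2 = eunorm v ^ 2 + 2 * dotp v w + eunorm w ^ 2 := by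
  rw [← dotp_self, ← dotp_self, ← dotp_self, dotp_add_left, dotp_add_right, dotp_add_right,
    dotp_comm w v]; ring

lemma eunorm_sub_sq (v w : Fin d → ℝ) :
    eunorm (v - w) ^ 2 = eunorm v ^ 2 - 2 * dotp v w + eunorm w ^ 2 := by
  rw [← dotp_self, ← dotp_self, ← dotp_self, dotp_sub_left, dotp_sub_right, dotp_sub_right,
    dotp_comm w v]; ring

lemma norm_le_eunorm (v : Fin d → ℝ) : ‖v‖ ≤ eunorm v := by
  refine (pi_norm_le_iff_of_nonneg (eunorm_nonneg v)).2 fun i => ?_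
  rw [eunorm_eq]
  exact PiLp.norm_apply_le (WithLp.toLp 2 v) i

lemma continuous_eunorm : Continuous (eunorm : (Fin d → ℝ) → ℝ) := by
  unfold eunorm; fun_prop

lemma continuous_dotp : Continuous (fun p : (Fin d → ℝ) × (Fin d → ℝ) => dotp p.1 p.2) := by
  unfold dotp; fun_prop

lemma eunorm_eq_zero {v : Fin d → ℝ} (h : eunorm v = 0) : v = 0 := by
  have := norm_le_eunorm v
  rw [h] at this
  simpa using this

lemma eunorm_pos_of_ne {v w : Fin d → ℝ} (h : v ≠ w) : 0 < eunorm (v - w) := by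
  refine lt_of_le_of_ne (eunorm_nonneg _) fun h' => h ?_
  exact sub_eq_zero.1 (eunorm_eq_zero h'.symm)

/-- rows of Frobenius norm -/
lemma matNorm_sq (M : Matrix (Fin d) (Fin d) ℝ) :
    matNorm M ^ 2 = ∑ j, eunorm (fun i => M i j) ^ 2 := by
  have h0 : 0 ≤ ∑ i, ∑ j, (M i j) ^ 2 :=
    Finset.sum_nonneg fun i _ => Finset.sum_nonneg fun j _ => sq_nonneg _
  have h1 : matNorm M ^ 2 = ∑ i, ∑ j, (M i j) ^ 2 := Real.sq_sqrt h0
  rw [h1, Finset.sum_comm]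
  simp only [eunorm_sq]

lemma matNorm_nonneg (M : Matrix (Fin d) (Fin d) ℝ) : 0 ≤ matNorm M := Real.sqrt_nonneg _

lemma continuous_matNorm : Continuous (matNorm : Matrix (Fin d) (Fin d) ℝ → ℝ) := by
  unfold matNorm
  have : ∀ i j, Continuous fun M : Matrix (Fin d) (Fin d) ℝ => M i j := fun i j =>
    continuous_id.matrix_elem i j
  fun_prop

lemma matNorm_add_le (M N : Matrix (Fin d) (Fin d) ℝ) : matNorm (M + N) ≤ matNorm M + matNorm N := by
  have key : ∀ M : Matrix (Fin d) (Fin d) ℝ, matNorm M =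
      ‖(WithLp.toLp 2 (fun j => WithLp.toLp 2 (fun i => M i j)) :
        PiLp 2 (fun _ : Fin d => EuclideanSpace ℝ (Fin d)))‖ := by
    intro M
    rw [PiLp.norm_eq_of_L2, ← Real.sqrt_sq (matNorm_nonneg M), matNorm_sq]
    simp only [eunorm_eq]
  rw [key, key, key]
  refine le_trans (le_of_eq ?_) (norm_add_le _ _)
  congr 1

lemma eunorm_vecMul_le (q : Fin d → ℝ) (M : Matrix (Fin d) (Fin d) ℝ) :
    eunorm (Matrix.vecMul q M) ≤ eunorm q * matNorm M := by
  refine abs_le_of_sq_le_sq' ?_ (mul_nonneg (eunorm_nonneg _) (matNorm_nonneg _)) |>.2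
  rw [mul_pow, matNorm_sq, eunorm_sq (Matrix.vecMul q M), Finset.mul_sum]
  refine Finset.sum_le_sum fun j _ => ?_
  have h1 : Matrix.vecMul q M j = dotp q (fun i => M i j) := by
    simp [Matrix.vecMul, dotp, dotProduct]
  rw [h1, ← mul_pow]
  exact sq_le_sq' (by linarith [neg_abs_le (dotp q fun i => M i j), abs_dotp_le q fun i => M i j])
    (dotp_le _ _)

/-- trace as a sum over columns -/
lemma trace_eq (S X : Matrix (Fin d) (Fin d) ℝ) :
    Matrix.trace (S * Sᵀ * X) = ∑ j, dotp (X.mulVec (fun i => S i j)) (fun i => S i j) := by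
  rw [Matrix.mul_assoc, Matrix.trace_mul_comm]
  simp only [Matrix.trace, Matrix.diag, Matrix.mul_apply, Matrix.transpose_apply, dotp,
    Matrix.mulVec, dotProduct]
  simp only [Finset.sum_mul]
  refine Finset.sum_congr rfl fun j _ => ?_
  rw [Finset.sum_comm]
  refine Finset.sum_congr rfl fun i _ => Finset.sum_congr rfl fun k _ => ?_
  ring

lemma trace_diff_le {S S' X Y : Matrix (Fin d) (Fin d) ℝ} {a e : ℝ}
    (h : ∀ h k : Fin d → ℝ, 1 / 2 * dotp (X.mulVec h) h - 1 / 2 * dotp (Y.mulVec k) k ≤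
      2 * a * eunorm (h - k) ^ 2 + e * (eunorm h ^ 2 + eunorm k ^ 2)) :
    1 / 2 * Matrix.trace (S * Sᵀ * X) - 1 / 2 * Matrix.trace (S' * S'ᵀ * Y) ≤
      2 * a * matNorm (S - S') ^ 2 + e * (matNorm S ^ 2 + matNorm S' ^ 2) := by
  rw [trace_eq, trace_eq, matNorm_sq, matNorm_sq, matNorm_sq]
  simp only [Finset.mul_sum, ← Finset.sum_sub_distrib, ← Finset.sum_add_distrib]
  exact Finset.sum_le_sum fun j _ => h _ _

end Basics

lemma clm_bound2 {H : Type*} [NormedAddCommGroup H] [NormedSpace ℝ H] (A : H →L[ℝ] H →L[ℝ] ℝ) :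
    ∃ M : ℝ, 0 ≤ M ∧ ∀ z w, |A z w| ≤ M * ‖z‖ * ‖w‖ :=
  ⟨‖A‖, A.opNorm_nonneg, fun z w => A.le_opNorm₂ z w⟩

section Parab
variable {d : ℕ}

/-- Space-time embedding. -/
def emb (e : ℝ) (h : Fin d → ℝ) : EuclideanSpace ℝ (Option (Fin d)) :=
  WithLp.toLp 2 (fun o => o.elim e h)

/-- Spatial part. -/
def spc (z : EuclideanSpace ℝ (Option (Fin d))) : Fin d → ℝ := fun i => z (some i)

lemma emb_none (e : ℝ) (h : Fin d → ℝ) : emb e h none = e := rfl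
lemma emb_some (e : ℝ) (h : Fin d → ℝ) (i : Fin d) : emb e h (some i) = h i := rfl
lemma spc_emb (e : ℝ) (h : Fin d → ℝ) : spc (emb e h) = h := rfl

lemma emb_sub (e e' : ℝ) (h h' : Fin d → ℝ) : emb e h - emb e' h' = emb (e - e') (h - h') := by
  ext o; cases o <;> simp [emb]

lemma emb_add (e e' : ℝ) (h h' : Fin d → ℝ) : emb e h + emb e' h' = emb (e + e') (h + h') := by
  ext o; cases o <;> simp [emb]

lemma emb_smul (c e : ℝ) (h : Fin d → ℝ) : c • emb e h = emb (c * e) (c • h) := by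
  ext o; cases o <;> simp [emb]

lemma emb_zero : emb 0 (0 : Fin d → ℝ) = 0 := by
  ext o; cases o <;> simp [emb]

lemma emb_norm_sq (e : ℝ) (h : Fin d → ℝ) : ‖emb e h‖ ^ 2 = e ^ 2 + eunorm h ^ 2 := by
  rw [EuclideanSpace.norm_sq_eq, Fintype.sum_option, eunorm_sq]
  simp [emb]

lemma continuous_emb : Continuous (fun p : ℝ × (Fin d → ℝ) => emb p.1 p.2) := by
  unfold emb
  refine (PiLp.continuous_toLp 2 _).comp (continuous_pi fun o => ?_)
  cases o
  · exact continuous_fst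
  · simp only [Option.elim_some]; fun_prop

lemma continuous_spc : Continuous (spc : EuclideanSpace ℝ (Option (Fin d)) → _) := by
  unfold spc; fun_prop

lemma emb_decomp (h : Fin d → ℝ) : emb 0 h = ∑ i, h i • emb 0 (Pi.single i (1:ℝ)) := by
  ext o
  cases o with
  | none => simp [emb]
  | some j => simp [emb, Pi.single_apply]

/-- Symmetrized spatial block of a bilinear form. -/
def blockMat (A : EuclideanSpace ℝ (Option (Fin d)) →L[ℝ] EuclideanSpace ℝ (Option (Fin d)) →L[ℝ] ℝ) :
    Matrix (Fin d) (Fin d) ℝ :=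
  Matrix.of fun i j => 1 / 2 * (A (emb 0 (Pi.single i 1)) (emb 0 (Pi.single j 1)) +
    A (emb 0 (Pi.single j 1)) (emb 0 (Pi.single i 1)))

lemma blockMat_symm (A : EuclideanSpace ℝ (Option (Fin d)) →L[ℝ]
    EuclideanSpace ℝ (Option (Fin d)) →L[ℝ] ℝ) : (blockMat A).IsSymm := by
  ext i j
  simp [blockMat, add_comm]

lemma blockMat_quad (A : EuclideanSpace ℝ (Option (Fin d)) →L[ℝ]
    EuclideanSpace ℝ (Option (Fin d)) →L[ℝ] ℝ) (h : Fin d → ℝ) :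
    dotp ((blockMat A).mulVec h) h = A (emb 0 h) (emb 0 h) := by
  have e1 : A (emb 0 h) (emb 0 h) = ∑ i, ∑ j, h i * h j *
      A (emb 0 (Pi.single i 1)) (emb 0 (Pi.single j 1)) := by
    conv_lhs => rw [emb_decomp h]
    simp only [map_sum, map_smul, _root_.smul_apply, smul_eq_mul, Finset.mul_sum,
      _root_.sum_apply]
    rw [Finset.sum_comm]
    refine Finset.sum_congr rfl fun i _ => Finset.sum_congr rfl fun j _ => ?_
    ring
  have e2 : dotp ((blockMat A).mulVec h) h = 1 / 2 * (∑ i, ∑ j, h i * h j *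
      A (emb 0 (Pi.single i 1)) (emb 0 (Pi.single j 1))) + 1 / 2 * (∑ i, ∑ j, h i * h j *
      A (emb 0 (Pi.single j 1)) (emb 0 (Pi.single i 1))) := by
    simp only [dotp, Matrix.mulVec, dotProduct, blockMat, Matrix.of_apply, Finset.sum_mul,
      Finset.mul_sum, ← Finset.sum_add_distrib]
    refine Finset.sum_congr rfl fun i _ => Finset.sum_congr rfl fun j _ => ?_
    ring
  rw [e2, e1]
  have e3 : (∑ i, ∑ j, h i * h j * A (emb 0 (Pi.single j 1)) (emb 0 (Pi.single i 1)))
    = ∑ i, ∑ j, h i * h j * A (emb 0 (Pi.single i 1)) (emb 0 (Pi.single j 1)) := by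
    rw [Finset.sum_comm]
    refine Finset.sum_congr rfl fun i _ => Finset.sum_congr rfl fun j _ => ?_
    ring
  rw [e3]; ring

/-- The extracted one-sided expansion. -/
lemma jet_extract {A : EuclideanSpace ℝ (Option (Fin d)) →L[ℝ]
    EuclideanSpace ℝ (Option (Fin d)) →L[ℝ] ℝ} {κ : ℝ} (hκ : 0 < κ) :
    ∃ C : ℝ, 0 ≤ C ∧ ∀ (e : ℝ) (h : Fin d → ℝ),
      1 / 2 * A (emb e h) (emb e h) + κ * ‖emb e h‖ ^ 2 ≤
        1 / 2 * dotp ((blockMat A + (4 * κ) • (1 : Matrix (Fin d) (Fin d) ℝ)).mulVec h) h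
          + C * e ^ 2 := by
  obtain ⟨M, hM0, hM⟩ : ∃ M : ℝ, 0 ≤ M ∧ ∀ z w, |A z w| ≤ M * ‖z‖ * ‖w‖ :=
    clm_bound2 A
  refine ⟨M + M ^ 2 / κ + κ, by positivity, fun e h => ?_⟩
  have n1 : ‖emb e (0 : Fin d → ℝ)‖ = |e| := by
    have := emb_norm_sq e (0 : Fin d → ℝ)
    rw [eunorm_zero] at this
    have h2 : ‖emb e (0 : Fin d → ℝ)‖ ^ 2 = |e| ^ 2 := by rw [this, sq_abs]; ring
    exact (pow_left_inj₀ (norm_nonneg _) (abs_nonneg _) two_ne_zero).1 h2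
  have n2 : ‖emb 0 h‖ = eunorm h := by
    have := emb_norm_sq 0 h
    have h2 : ‖emb 0 h‖ ^ 2 = eunorm h ^ 2 := by rw [this]; ring
    exact (pow_left_inj₀ (norm_nonneg _) (eunorm_nonneg _) two_ne_zero).1 h2
  have hd : emb e h = emb e 0 + emb 0 h := by rw [emb_add]; simp
  have q1 : dotp ((blockMat A + (4 * κ) • (1 : Matrix (Fin d) (Fin d) ℝ)).mulVec h) h =
      A (emb 0 h) (emb 0 h) + 4 * κ * eunorm h ^ 2 := by
    rw [Matrix.add_mulVec, dotp_add_left, blockMat_quad, Matrix.smul_mulVec, Matrix.one_mulVec,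
      dotp_smul_left, dotp_self]
  rw [q1, emb_norm_sq, hd]
  simp only [map_add, _root_.add_apply]
  have b1 := hM (emb e 0) (emb e (0 : Fin d → ℝ))
  have b2 := hM (emb e 0) (emb 0 h)
  have b3 := hM (emb 0 h) (emb e 0)
  rw [n1] at b1 b2 b3
  rw [n2] at b2 b3
  rw [abs_le] at b1 b2 b3
  have s1 : |e| * |e| = e ^ 2 := by rw [← sq, sq_abs]
  have y : M * |e| * eunorm h ≤ κ * eunorm h ^ 2 + M ^ 2 / κ * e ^ 2 := by
    have h0 : 0 ≤ (κ * eunorm h - M * |e|) ^ 2 := sq_nonneg _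
    have h1 : M ^ 2 / κ * e ^ 2 = (M ^ 2 * e ^ 2) / κ := by ring
    rw [h1, ← sub_le_iff_le_add', le_div_iff₀ hκ]
    have h2 : 0 ≤ M * |e| * (κ * eunorm h) := by have := eunorm_nonneg h; positivity
    nlinarith
  have b1' : M * |e| * |e| = M * e ^ 2 := by rw [mul_assoc, s1]
  nlinarith [sq_nonneg e, mul_nonneg hM0 (sq_nonneg e)]

/-- gradient extraction -/
lemma grad_extract (p : EuclideanSpace ℝ (Option (Fin d)) →L[ℝ] ℝ) {ρ : ℝ} (hp : ‖p‖ < ρ) :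
    ∃ (a : ℝ) (r : Fin d → ℝ), |a| < ρ ∧ eunorm r < ρ ∧ ∀ e h, p (emb e h) = a * e + dotp r h := by
  have hlin : ∀ h : Fin d → ℝ, p (emb 0 h) = dotp (fun i => p (emb 0 (Pi.single i 1))) h := by
    intro h
    rw [emb_decomp h, map_sum, dotp]
    refine Finset.sum_congr rfl fun i _ => ?_
    rw [map_smul, smul_eq_mul, mul_comm]
  have n1 : ‖emb 1 (0 : Fin d → ℝ)‖ = 1 := by
    have := emb_norm_sq 1 (0 : Fin d → ℝ)
    rw [eunorm_zero] at this
    have h2 : ‖emb 1 (0 : Fin d → ℝ)‖ ^ 2 = 1 ^ 2 := by rw [this]; ring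
    exact (pow_left_inj₀ (norm_nonneg _) zero_le_one two_ne_zero).1 h2
  refine ⟨p (emb 1 0), fun i => p (emb 0 (Pi.single i 1)), ?_, ?_, fun e h => ?_⟩
  · have := p.le_opNorm (emb 1 0)
    rw [n1, mul_one, Real.norm_eq_abs] at this
    linarith
  · set r : Fin d → ℝ := fun i => p (emb 0 (Pi.single i 1)) with hr
    have n2 : ‖emb 0 r‖ = eunorm r := by
      have := emb_norm_sq 0 r
      have h2 : ‖emb 0 r‖ ^ 2 = eunorm r ^ 2 := by rw [this]; ring
      exact (pow_left_inj₀ (norm_nonneg _) (eunorm_nonneg _) two_ne_zero).1 h2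
    have h1 := p.le_opNorm (emb 0 r)
    rw [hlin r, dotp_self, n2, Real.norm_of_nonneg (sq_nonneg _)] at h1
    by_contra hc
    push Not at hc
    have : 0 < eunorm r := lt_of_lt_of_le (lt_of_le_of_lt (norm_nonneg _) hp) hc
    nlinarith
  · have : emb e h = e • emb 1 0 + emb 0 h := by rw [emb_smul, emb_add]; simp
    rw [this, map_add, map_smul, hlin]
    simp [mul_comm]

/-- Weighted diagonal form. -/
def diagForm (w : Option (Fin d) → ℝ) : EuclideanSpace ℝ (Option (Fin d)) →L[ℝ]
    EuclideanSpace ℝ (Option (Fin d)) →L[ℝ] ℝ :=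
  ∑ o, w o • (EuclideanSpace.proj o : EuclideanSpace ℝ (Option (Fin d)) →L[ℝ] ℝ).smulRight
    (EuclideanSpace.proj o : EuclideanSpace ℝ (Option (Fin d)) →L[ℝ] ℝ)

lemma diagForm_apply (w : Option (Fin d) → ℝ) (z : EuclideanSpace ℝ (Option (Fin d))) :
    diagForm w z z = w none * z none ^ 2 + ∑ i, w (some i) * z (some i) ^ 2 := by
  simp [diagForm, Fintype.sum_option, sq]

lemma diagForm_const (a b : ℝ) (z : EuclideanSpace ℝ (Option (Fin d))) :
    diagForm (fun o => o.elim b (fun _ => a)) z z = b * z none ^ 2 + a * eunorm (spc z) ^ 2 := by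
  rw [diagForm_apply, eunorm_sq, Finset.mul_sum]
  rfl

end Parab

section Parab1
variable {d : ℕ}

/-- One-sided expansion on `[t0,t1] × K`. -/
def UpperExp (K : Set (Fin d → ℝ)) (t0 t1 : ℝ) (w : ℝ → (Fin d → ℝ) → ℝ) (t : ℝ) (x : Fin d → ℝ)
    (p : ℝ) (q : Fin d → ℝ) (X : Matrix (Fin d) (Fin d) ℝ) : Prop :=
  ∃ C : ℝ, 0 ≤ C ∧ ∃ δ > 0, ∀ t' ∈ Set.Icc t0 t1, ∀ x' ∈ K, |t' - t| < δ → eunorm (x' - x) < δ →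
    w t' x' ≤ w t x + p * (t' - t) + dotp q (x' - x) + 1 / 2 * dotp (X.mulVec (x' - x)) (x' - x)
      + C * (t' - t) ^ 2

/-- Recentred function. -/
def recen (w : ℝ → (Fin d → ℝ) → ℝ) (tb : ℝ) (xb : Fin d → ℝ) (p0 : ℝ) (q0 : Fin d → ℝ)
    (z : EuclideanSpace ℝ (Option (Fin d))) : ℝ :=
  w (tb + z none) (xb + spc z) - w tb xb - p0 * z none - dotp q0 (spc z)

/-- Recentred set. -/
def recenSet (K : Set (Fin d → ℝ)) (t0 t1 : ℝ) (tb : ℝ) (xb : Fin d → ℝ) :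
    Set (EuclideanSpace ℝ (Option (Fin d))) :=
  (fun p : ℝ × (Fin d → ℝ) => emb (p.1 - tb) (p.2 - xb)) '' (Set.Icc t0 t1 ×ˢ K)

lemma mem_recenSet {K : Set (Fin d → ℝ)} {t0 t1 tb : ℝ} {xb : Fin d → ℝ} {t : ℝ} {x : Fin d → ℝ}
    (ht : t ∈ Set.Icc t0 t1) (hx : x ∈ K) : emb (t - tb) (x - xb) ∈ recenSet K t0 t1 tb xb :=
  ⟨(t, x), ⟨ht, hx⟩, rfl⟩

lemma recenSet_compact {K : Set (Fin d → ℝ)} (hK : IsCompact K) (t0 t1 tb : ℝ) (xb : Fin d → ℝ) :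
    IsCompact (recenSet K t0 t1 tb xb) := by
  refine (isCompact_Icc.prod hK).image ?_
  exact continuous_emb.comp (by fun_prop : Continuous fun p : ℝ × (Fin d → ℝ) => (p.1 - tb, p.2 - xb))

lemma recen_continuousOn {K : Set (Fin d → ℝ)} {t0 t1 : ℝ} {w : ℝ → (Fin d → ℝ) → ℝ}
    (hw : ContinuousOn (fun z : ℝ × (Fin d → ℝ) => w z.1 z.2) (Set.Icc t0 t1 ×ˢ K))
    (tb : ℝ) (xb : Fin d → ℝ) (p0 : ℝ) (q0 : Fin d → ℝ) :
    ContinuousOn (recen w tb xb p0 q0) (recenSet K t0 t1 tb xb) := by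
  have hn : Continuous fun z : EuclideanSpace ℝ (Option (Fin d)) => z none := by fun_prop
  have h1 : Continuous fun z : EuclideanSpace ℝ (Option (Fin d)) => (tb + z none, xb + spc z) :=
    (continuous_const.add hn).prodMk (continuous_const.add continuous_spc)
  have h2 : ContinuousOn (fun z => w (tb + z none) (xb + spc z)) (recenSet K t0 t1 tb xb) := by
    refine ContinuousOn.comp (g := fun z : ℝ × (Fin d → ℝ) => w z.1 z.2) hw h1.continuousOn ?_
    rintro _ ⟨⟨t, x⟩, ⟨ht, hx⟩, rfl⟩
    simp only [emb_none, spc_emb]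
    exact ⟨by simpa using ht, by simpa using hx⟩
  have h3 : Continuous fun z : EuclideanSpace ℝ (Option (Fin d)) => dotp q0 (spc z) :=
    continuous_dotp.comp (continuous_const.prodMk continuous_spc)
  exact ((h2.sub continuousOn_const).sub (continuous_const.mul hn).continuousOn).sub h3.continuousOn

lemma one_side {K : Set (Fin d → ℝ)} {t0 t1 : ℝ} {w : ℝ → (Fin d → ℝ) → ℝ}
    {tb : ℝ} {xb : Fin d → ℝ} {p0 : ℝ} {q0 : Fin d → ℝ} {ρ κ : ℝ} (hκ : 0 < κ)
    {t : ℝ} {x : Fin d → ℝ} {p1 : EuclideanSpace ℝ (Option (Fin d)) →L[ℝ] ℝ}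
    {A : EuclideanSpace ℝ (Option (Fin d)) →L[ℝ] EuclideanSpace ℝ (Option (Fin d)) →L[ℝ] ℝ}
    (hp1 : ‖p1‖ < ρ) (hz : ‖emb (t - tb) (x - xb)‖ < ρ)
    (hexp : ∃ δ > 0, ∀ z' ∈ recenSet K t0 t1 tb xb, ‖z' - emb (t - tb) (x - xb)‖ < δ →
      recen w tb xb p0 q0 z' ≤ recen w tb xb p0 q0 (emb (t - tb) (x - xb))
        + p1 (z' - emb (t - tb) (x - xb))
        + 1 / 2 * A (z' - emb (t - tb) (x - xb)) (z' - emb (t - tb) (x - xb))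
        + κ * ‖z' - emb (t - tb) (x - xb)‖ ^ 2) :
    |t - tb| < ρ ∧ eunorm (x - xb) < ρ ∧ ∃ p q, |p - p0| < ρ ∧ eunorm (q - q0) < ρ ∧
      UpperExp K t0 t1 w t x p q (blockMat A + (4 * κ) • (1 : Matrix (Fin d) (Fin d) ℝ)) := by
  have hρ : 0 < ρ := lt_of_le_of_lt (norm_nonneg _) hz
  have hsq : (t - tb) ^ 2 + eunorm (x - xb) ^ 2 < ρ ^ 2 := by
    rw [← emb_norm_sq]; exact pow_lt_pow_left₀ hz (norm_nonneg _) two_ne_zero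
  refine ⟨abs_lt_of_sq_lt_sq (by nlinarith [sq_nonneg (eunorm (x - xb))]) hρ.le,
    lt_of_pow_lt_pow_left₀ 2 hρ.le (by nlinarith [sq_nonneg (t - tb)]), ?_⟩
  obtain ⟨a, r, ha, hr, hpr⟩ := grad_extract p1 hp1
  obtain ⟨C, hC0, hC⟩ := jet_extract (A := A) hκ
  obtain ⟨δ, hδ, hb⟩ := hexp
  refine ⟨p0 + a, q0 + r, by simpa using ha, by simpa using hr, C, hC0, δ / 2, by positivity, ?_⟩
  intro t' ht' x' hx' h1 h2
  have hsub : emb (t' - tb) (x' - xb) - emb (t - tb) (x - xb) = emb (t' - t) (x' - x) := by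
    rw [emb_sub]; congr 1 <;> abel
  have hb1 := hb _ (mem_recenSet ht' hx')
  rw [hsub] at hb1
  have hlt : ‖emb (t' - t) (x' - x)‖ < δ := by
    refine lt_of_pow_lt_pow_left₀ 2 hδ.le ?_
    rw [emb_norm_sq, ← sq_abs (t' - t)]
    nlinarith [abs_nonneg (t' - t), eunorm_nonneg (x' - x)]
  have hb2 := hb1 hlt
  have hC1 := hC (t' - t) (x' - x)
  rw [hpr] at hb2
  simp only [recen, emb_none, spc_emb, add_sub_cancel] at hb2
  rw [dotp_add_left]
  have e1 : dotp q0 (x' - xb) = dotp q0 (x - xb) + dotp q0 (x' - x) := by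
    rw [← dotp_add_right]; congr 1; abel
  rw [e1] at hb2
  nlinarith

set_option maxHeartbeats 1000000 in
theorem parab_sums {K : Set (Fin d → ℝ)} (hK : IsCompact K) {t0 t1 : ℝ}
    {u v : ℝ → (Fin d → ℝ) → ℝ}
    (hu : ContinuousOn (fun z : ℝ × (Fin d → ℝ) => u z.1 z.2) (Set.Icc t0 t1 ×ˢ K))
    (hv : ContinuousOn (fun z : ℝ × (Fin d → ℝ) => v z.1 z.2) (Set.Icc t0 t1 ×ˢ K))
    {tb sb : ℝ} {xb yb : Fin d → ℝ} (htb : tb ∈ Set.Icc t0 t1) (hsb : sb ∈ Set.Icc t0 t1)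
    (hxb : xb ∈ K) (hyb : yb ∈ K) {p0 p0' : ℝ} {q0 q0' : Fin d → ℝ} {a b e N : ℝ}
    (ha : 0 ≤ a) (hb : 0 ≤ b) (he : 0 ≤ e) (hN : 0 ≤ N)
    (hmax : ∀ t ∈ Set.Icc t0 t1, ∀ x ∈ K, ∀ s ∈ Set.Icc t0 t1, ∀ y ∈ K,
      u t x - v s y ≤ u tb xb - v sb yb + p0 * (t - tb) - p0' * (s - sb) + dotp q0 (x - xb)
        - dotp q0' (y - yb) + a * eunorm ((x - xb) - (y - yb)) ^ 2
        + b * ((t - tb) - (s - sb)) ^ 2 + e * (eunorm (x - xb) ^ 2 + eunorm (y - yb) ^ 2)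
        + N * ((t - tb) ^ 2 + (s - sb) ^ 2)) {ρ : ℝ} (hρ : 0 < ρ) :
    ∃ t ∈ Set.Icc t0 t1, ∃ x ∈ K, ∃ s ∈ Set.Icc t0 t1, ∃ y ∈ K, ∃ p q X p' q' Y,
      X.IsSymm ∧ Y.IsSymm ∧ |t - tb| < ρ ∧ |s - sb| < ρ ∧ eunorm (x - xb) < ρ ∧
      eunorm (y - yb) < ρ ∧ |p - p0| < ρ ∧ |p' - p0'| < ρ ∧ eunorm (q - q0) < ρ ∧
      eunorm (q' - q0') < ρ ∧ UpperExp K t0 t1 u t x p q X ∧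
      UpperExp K t0 t1 (fun s y => - v s y) s y (-p') (-q') (-Y) ∧
      ∀ h k : Fin d → ℝ, 1 / 2 * dotp (X.mulVec h) h - 1 / 2 * dotp (Y.mulVec k) k ≤
        2 * a * eunorm (h - k) ^ 2 + (2 * e + ρ) * (eunorm h ^ 2 + eunorm k ^ 2) := by
  set w1 : Option (Fin d) → ℝ := fun o => o.elim b (fun _ => a) with hw1
  set w2 : Option (Fin d) → ℝ := fun o => o.elim N (fun _ => e) with hw2
  set E := EuclideanSpace ℝ (Option (Fin d)) with hE
  set R : (E × E) →L[ℝ] (E × E) →L[ℝ] ℝ :=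
    (diagForm w1).bilinearComp (ContinuousLinearMap.fst ℝ E E - ContinuousLinearMap.snd ℝ E E)
      (ContinuousLinearMap.fst ℝ E E - ContinuousLinearMap.snd ℝ E E) +
    (diagForm w2).bilinearComp (ContinuousLinearMap.fst ℝ E E) (ContinuousLinearMap.fst ℝ E E) +
    (diagForm w2).bilinearComp (ContinuousLinearMap.snd ℝ E E) (ContinuousLinearMap.snd ℝ E E)
    with hR
  have hRz : ∀ z : E × E, R z z = b * (z.1 none - z.2 none) ^ 2 + a * eunorm (spc z.1 - spc z.2) ^ 2
      + (N * z.1 none ^ 2 + e * eunorm (spc z.1) ^ 2)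
      + (N * z.2 none ^ 2 + e * eunorm (spc z.2) ^ 2) := by
    intro z
    have h1 : R z z = diagForm w1 (z.1 - z.2) (z.1 - z.2) + diagForm w2 z.1 z.1
      + diagForm w2 z.2 z.2 := rfl
    rw [h1, diagForm_const, diagForm_const, diagForm_const]
    rfl
  have hns : ∀ z : E, ‖z‖ ^ 2 = z none ^ 2 + eunorm (spc z) ^ 2 := by
    intro z
    rw [EuclideanSpace.norm_sq_eq, Fintype.sum_option, eunorm_sq]
    simp [spc]
  have hpar : ∀ v w : Fin d → ℝ, eunorm (v - w) ^ 2 ≤ 2 * (eunorm v ^ 2 + eunorm w ^ 2) := by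
    intro v w
    have := eunorm_add_sq v w
    have := eunorm_sub_sq v w
    nlinarith [sq_nonneg (eunorm (v + w))]
  have hR0 : ∀ z, 0 ≤ R z z := by
    intro z; rw [hRz]; positivity
  have hRβ : ∀ z, R z z ≤ (2 * a + 2 * b + N + e) * (‖z.1‖ ^ 2 + ‖z.2‖ ^ 2) := by
    intro z
    rw [hRz, hns, hns]
    have h1 := mul_le_mul_of_nonneg_left (hpar (spc z.1) (spc z.2)) ha
    have h2 : b * (z.1 none - z.2 none) ^ 2 ≤ b * (2 * (z.1 none ^ 2 + z.2 none ^ 2)) :=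
      mul_le_mul_of_nonneg_left (by nlinarith [sq_nonneg (z.1 none + z.2 none)]) hb
    have k1 : 0 ≤ (2 * a + e) * (z.1 none ^ 2 + z.2 none ^ 2) := by positivity
    have k2 : 0 ≤ (2 * b + N) * (eunorm (spc z.1) ^ 2 + eunorm (spc z.2) ^ 2) := by positivity
    linarith
  set U := recen u tb xb p0 q0 with hU
  set V := recen (fun s y => - v s y) sb yb (-p0') (-q0') with hV
  have hmax' : ∀ x ∈ recenSet K t0 t1 tb xb, ∀ y ∈ recenSet K t0 t1 sb yb,
      U x + V y ≤ R (x, y) (x, y) := by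
    rintro _ ⟨⟨t, x⟩, ⟨ht, hx⟩, rfl⟩ _ ⟨⟨s, y⟩, ⟨hs, hy⟩, rfl⟩
    have := hmax t ht x hx s hs y hy
    rw [hRz]
    simp only [hU, hV, recen, emb_none, spc_emb, add_sub_cancel]
    have e1 : dotp (-q0') (y - yb) = - dotp q0' (y - yb) := by
      have := dotp_smul_left (-1) q0' (y - yb)
      simpa using this
    rw [e1]
    linarith
  have z1 : (0 : E) ∈ recenSet K t0 t1 tb xb := by
    have := mem_recenSet (tb := tb) (xb := xb) htb hxb
    simpa [emb_zero] using this
  have z2 : (0 : E) ∈ recenSet K t0 t1 sb yb := by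
    have := mem_recenSet (tb := sb) (xb := yb) hsb hyb
    simpa [emb_zero] using this
  have hUV : U 0 + V 0 = 0 := by
    have hs0 : spc (0 : E) = 0 := rfl
    simp [hU, hV, recen, hs0, dotp]
  obtain ⟨κ, hκ, hκρ⟩ : ∃ κ : ℝ, 0 < κ ∧ 3 * κ ≤ ρ := ⟨ρ / 3, by positivity, by linarith⟩
  obtain ⟨_, ⟨⟨t, x⟩, ⟨ht, hx⟩, rfl⟩, _, ⟨⟨s, y⟩, ⟨hs, hy⟩, rfl⟩, p1, p2, A1, A2, n1, n2, n3, n4,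
    hex1, hex2, hmat⟩ := sums_lemma (recenSet_compact hK t0 t1 tb xb)
      (recenSet_compact hK t0 t1 sb yb) z1 z2 (recen_continuousOn hu tb xb p0 q0)
      (recen_continuousOn (w := fun s y => - v s y) hv.neg sb yb (-p0') (-q0'))
      hR0 (β := 2 * a + 2 * b + N + e) (by positivity) hRβ hmax' hUV hκ
  obtain ⟨c1, c2, p, q, c3, c4, c5⟩ := one_side hκ n3 n1 (hex1 κ hκ)
  obtain ⟨c1', c2', p', q', c3', c4', c5'⟩ := one_side hκ n4 n2 (hex2 κ hκ)
  have hκρ' : κ < ρ := by linarith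
  refine ⟨t, ht, x, hx, s, hs, y, hy, p, q, _, -p', -q',
    -(blockMat A2 + (4 * κ) • (1 : Matrix (Fin d) (Fin d) ℝ)), ?_, ?_, by linarith, by linarith,
    by linarith, by linarith, by linarith, ?_, by linarith, ?_, c5, ?_, ?_⟩
  · exact (blockMat_symm A1).add (Matrix.isSymm_one.smul _)
  · exact ((blockMat_symm A2).add (Matrix.isSymm_one.smul _)).neg
  · have : -p' - p0' = -(p' - -p0') := by ring
    rw [this, abs_neg]; linarith
  · have : -q' - q0' = -(q' - -q0') := by abel
    rw [this]
    have h2 := eunorm_smul (-1) (q' - -q0')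
    simp only [neg_smul, one_smul, abs_neg, abs_one, one_mul] at h2
    rw [h2]; linarith
  · simpa using c5'
  · intro h k
    have h1 := hmat (emb 0 h) (emb 0 k)
    rw [hRz, emb_norm_sq, emb_norm_sq] at h1
    simp only [emb_none, spc_emb] at h1
    have q1 : ∀ (A : E →L[ℝ] E →L[ℝ] ℝ) (h : Fin d → ℝ),
      dotp ((blockMat A + (4 * κ) • (1 : Matrix (Fin d) (Fin d) ℝ)).mulVec h) h =
      A (emb 0 h) (emb 0 h) + 4 * κ * eunorm h ^ 2 := by
      intro A h
      rw [Matrix.add_mulVec, dotp_add_left, blockMat_quad, Matrix.smul_mulVec, Matrix.one_mulVec,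
        dotp_smul_left, dotp_self]
    have q2 : dotp ((-(blockMat A2 + (4 * κ) • (1 : Matrix (Fin d) (Fin d) ℝ))).mulVec k) k =
      - (A2 (emb 0 k) (emb 0 k) + 4 * κ * eunorm k ^ 2) := by
      rw [Matrix.neg_mulVec, ← q1]
      have := dotp_smul_left (-1) ((blockMat A2 + (4 * κ) • (1 : Matrix (Fin d) (Fin d) ℝ)).mulVec k) k
      simpa using this
    rw [q1, q2]
    have h3 : 3 * κ * (eunorm h ^ 2 + eunorm k ^ 2) ≤ ρ * (eunorm h ^ 2 + eunorm k ^ 2) := by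
      gcongr
    nlinarith

end Parab1

section Parab2
variable {d : ℕ}

lemma pen_cpt {Z : Type*} [TopologicalSpace Z] [CompactSpace Z] {F D : Z → ℝ}
    (hF : Continuous F) (hD : Continuous D) (hD0 : ∀ ω, 0 ≤ D ω) {ω0 : Z}
    (hdiag : ∀ ω, D ω = 0 → ω ≠ ω0 → F ω < F ω0) {O : Set Z} (hO : IsOpen O) (h0 : ω0 ∈ O) :
    ∃ n : ℕ, ∀ ω, F ω0 ≤ F ω - n * D ω → ω ∈ O := by
  have hc : IsCompact Oᶜ := hO.isClosed_compl.isCompact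
  obtain ⟨n, hn⟩ := hc.elim_directed_cover (fun n : ℕ => {ω | F ω - n * D ω < F ω0})
    (fun n => isOpen_lt (by fun_prop) continuous_const) (by
      intro ω hω
      have hne : ω ≠ ω0 := fun h => hω (h ▸ h0)
      rw [Set.mem_iUnion]
      rcases (hD0 ω).eq_or_lt with h | h
      · exact ⟨0, by simpa using hdiag ω h.symm hne⟩
      · obtain ⟨n, hn⟩ := exists_nat_gt ((F ω - F ω0) / D ω)
        rw [div_lt_iff₀ h] at hn
        exact ⟨n, by simp only [Set.mem_ofPred_eq]; linarith⟩)
    (by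
      refine Monotone.directed_le ?_
      intro n m hnm ω hω
      simp only [Set.mem_ofPred_eq] at hω ⊢
      have : (n : ℝ) * D ω ≤ m * D ω := by
        have := hD0 ω
        gcongr
      linarith)
  refine ⟨n, fun ω hω => ?_⟩
  by_contra hcon
  have := hn hcon
  simp only [Set.mem_ofPred_eq] at this
  linarith

lemma pen_set {Z : Type*} [TopologicalSpace Z] {Ω : Set Z} (hΩ : IsCompact Ω) {F D : Z → ℝ}
    (hF : ContinuousOn F Ω) (hD : ContinuousOn D Ω) (hD0 : ∀ ω ∈ Ω, 0 ≤ D ω) {ω0 : Z}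
    (hω0 : ω0 ∈ Ω)
    (hdiag : ∀ ω ∈ Ω, D ω = 0 → ω ≠ ω0 → F ω < F ω0) {O : Set Z} (hO : IsOpen O) (h0 : ω0 ∈ O)
    {δ : ℝ} (hδ : 0 < δ) :
    ∃ n : ℕ, ∀ ω ∈ Ω, F ω0 ≤ F ω - n * D ω → ω ∈ O ∧ F ω < F ω0 + δ := by
  have : CompactSpace Ω := isCompact_iff_compactSpace.1 hΩ
  have hF' := continuousOn_iff_continuous_domRestrict.1 hF
  have hD' := continuousOn_iff_continuous_domRestrict.1 hD
  obtain ⟨n, hn⟩ := pen_cpt hF' hD' (fun ω => hD0 ω ω.2) (ω0 := ⟨ω0, hω0⟩)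
    (fun ω h1 h2 => hdiag ω ω.2 h1 (fun h => h2 (Subtype.ext h)))
    (O := (Subtype.val ⁻¹' O) ∩ {ω | Ω.domRestrict F ω < F ω0 + δ})
    ((hO.preimage continuous_subtype_val).inter (isOpen_lt hF' continuous_const))
    ⟨h0, by show F ω0 < F ω0 + δ; linarith⟩
  refine ⟨n, fun ω hω h => ?_⟩
  exact hn ⟨ω, hω⟩ h

lemma upperExp_superjet {K : Set (Fin d → ℝ)} {t0 t1 : ℝ} {w : ℝ → (Fin d → ℝ) → ℝ} {t : ℝ}
    {x : Fin d → ℝ} {p : ℝ} {q : Fin d → ℝ} {X : Matrix (Fin d) (Fin d) ℝ} (hX : X.IsSymm)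
    (ht : t ∈ Set.Ioo t0 t1) (h : UpperExp K t0 t1 w t x p q X) : InSuperjet K w t x p q X := by
  obtain ⟨C, hC, δ, hδ, hb⟩ := h
  refine ⟨hX, fun r => C * r ^ 2, by fun_prop, by simp, ?_, min δ (min (t - t0) (t1 - t)), ?_, ?_⟩
  · have h1 : Tendsto (fun r : ℝ => C * r) (𝓝[>] 0) (𝓝 (C * 0)) :=
      ((by fun_prop : Continuous fun r : ℝ => C * r).tendsto 0).mono_left nhdsWithin_le_nhds
    rw [mul_zero] at h1
    refine h1.congr' ?_
    filter_upwards [self_mem_nhdsWithin] with r hr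
    have : r ≠ 0 := ne_of_gt hr
    field_simp
  · exact lt_min hδ (lt_min (by linarith [ht.1]) (by linarith [ht.2]))
  · intro s _ y hy h1 h2
    have h3 := lt_of_lt_of_le h1 (min_le_right _ _)
    have h4 := lt_of_lt_of_le h3 (min_le_left _ _)
    have h5 := lt_of_lt_of_le h3 (min_le_right _ _)
    rw [abs_lt] at h4 h5
    have := hb s ⟨by linarith [h4.1], by linarith [h5.2]⟩ y hy (lt_of_lt_of_le h1 (min_le_left _ _))
      (lt_of_lt_of_le h2 (min_le_left _ _))
    have h6 : C * (s - t) ^ 2 ≤ C * (|s - t| + eunorm (y - x) ^ 2) ^ 2 := by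
      rw [← sq_abs (s - t)]
      have := sq_nonneg (eunorm (y - x))
      gcongr
      linarith
    linarith

lemma upperExp_subjet {K : Set (Fin d → ℝ)} {t0 t1 : ℝ} {w : ℝ → (Fin d → ℝ) → ℝ} {t : ℝ}
    {x : Fin d → ℝ} {p : ℝ} {q : Fin d → ℝ} {X : Matrix (Fin d) (Fin d) ℝ} (hX : X.IsSymm)
    (ht : t ∈ Set.Ioo t0 t1) (h : UpperExp K t0 t1 (fun s y => - w s y) t x (-p) (-q) (-X)) :
    InSubjet K w t x p q X := by
  obtain ⟨-, o, h1, h2, h3, δ, hδ, hb⟩ := upperExp_superjet hX.neg ht h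
  refine ⟨hX, fun r => - o r, h1.neg, by simp [h2], ?_, δ, hδ, ?_⟩
  · have := h3.neg
    rw [neg_zero] at this
    refine this.congr fun r => ?_
    ring
  · intro s hs y hy h4 h5
    have := hb s hs y hy h4 h5
    have e1 : dotp (-q) (y - x) = - dotp q (y - x) := by
      simpa using dotp_smul_left (-1) q (y - x)
    have e2 : dotp ((-X).mulVec (y - x)) (y - x) = - dotp (X.mulVec (y - x)) (y - x) := by
      rw [Matrix.neg_mulVec]
      simpa using dotp_smul_left (-1) (X.mulVec (y - x)) (y - x)
    rw [e1, e2] at this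
    linarith

lemma dbl_aux {a ρ δ E B : ℝ} (hE : 0 ≤ E) (ha : 1 ≤ a) (hρ : 0 < ρ) (h : E ≤ B + 2 * ρ)
    (p : a * B ^ 2 < δ / 4) (r1 : 8 * a * ρ ≤ δ / 4) (r5 : ρ ≤ 1) : a * E ^ 2 < δ := by
  have h1 : E ^ 2 ≤ 2 * B ^ 2 + 8 * ρ ^ 2 := by
    have h2 : E ^ 2 ≤ (B + 2 * ρ) ^ 2 := pow_le_pow_left₀ hE h 2
    nlinarith [sq_nonneg (B - 2 * ρ)]
  have h3 : a * E ^ 2 ≤ a * (2 * B ^ 2 + 8 * ρ ^ 2) := by gcongr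
  have h5 : 0 < δ := by nlinarith
  have h4 : 8 * a * ρ * ρ ≤ δ / 4 * 1 := by gcongr
  nlinarith

set_option maxHeartbeats 2000000 in
theorem doubling {K : Set (Fin d → ℝ)} (hK : IsCompact K) {t0 t1 : ℝ}
    {u v : ℝ → (Fin d → ℝ) → ℝ}
    (hu : ContinuousOn (fun z : ℝ × (Fin d → ℝ) => u z.1 z.2) (Set.Icc t0 t1 ×ˢ K))
    (hv : ContinuousOn (fun z : ℝ × (Fin d → ℝ) => v z.1 z.2) (Set.Icc t0 t1 ×ˢ K))
    {th : ℝ} {xh : Fin d → ℝ} (hth : th ∈ Set.Ioo t0 t1) (hxh : xh ∈ K)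
    {A N e ε κ : ℝ} (hN : 0 ≤ N) (he : 0 < e) {n : Fin d → ℝ}
    (hmax : ∀ t ∈ Set.Icc t0 t1, ∀ x ∈ K, u t x - v t x ≤ u th xh - v th xh + A * (t - th)
      + N * (t - th) ^ 2 + 2 * ε * dotp n (x - xh) + e * eunorm (x - xh) ^ 2)
    {δ : ℝ} (hδ : 0 < δ) :
    ∃ a : ℝ, 1 ≤ a ∧ ∀ δ' > 0, ∃ t ∈ Set.Ioo t0 t1, ∃ s ∈ Set.Ioo t0 t1, ∃ x ∈ K, ∃ y ∈ K,
      ∃ p q X p' q' Y, |t - th| < δ ∧ |s - th| < δ ∧ eunorm (x - xh) < δ ∧ eunorm (y - xh) < δ ∧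
      a * eunorm (x - y) ^ 2 < δ ∧ |t - s| < δ' ∧
      eunorm (q - ((2 * a) • (x - y) + (κ + ε) • n)) < δ ∧
      eunorm (q' - ((2 * a) • (x - y) + (κ - ε) • n)) < δ ∧
      A - δ ≤ p - p' ∧
      (∀ h k : Fin d → ℝ, 1 / 2 * dotp (X.mulVec h) h - 1 / 2 * dotp (Y.mulVec k) k ≤
        2 * a * eunorm (h - k) ^ 2 + (2 * e + δ) * (eunorm h ^ 2 + eunorm k ^ 2)) ∧
      InSuperjet K u t x p q X ∧ InSubjet K v s y p' q' Y := by
  set Ω : Set ((ℝ × (Fin d → ℝ)) × (ℝ × (Fin d → ℝ))) :=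
    (Set.Icc t0 t1 ×ˢ K) ×ˢ (Set.Icc t0 t1 ×ˢ K) with hΩdef
  have hΩ : IsCompact Ω := (isCompact_Icc.prod hK).prod (isCompact_Icc.prod hK)
  set G : ((ℝ × (Fin d → ℝ)) × (ℝ × (Fin d → ℝ))) → ℝ := fun ω =>
    A * (ω.1.1 - th) + (N + 1) * (ω.1.1 - th) ^ 2 + ε * dotp n (ω.1.2 - xh)
      + ε * dotp n (ω.2.2 - xh) + e * (eunorm (ω.1.2 - xh) ^ 2 + eunorm (ω.2.2 - xh) ^ 2)
      + κ * dotp n (ω.1.2 - ω.2.2) with hG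
  have cd : ∀ f : ((ℝ × (Fin d → ℝ)) × (ℝ × (Fin d → ℝ))) → (Fin d → ℝ), Continuous f →
      Continuous fun ω => dotp n (f ω) := fun f hf =>
    continuous_dotp.comp (continuous_const.prodMk hf)
  have ce : ∀ f : ((ℝ × (Fin d → ℝ)) × (ℝ × (Fin d → ℝ))) → (Fin d → ℝ), Continuous f →
      Continuous fun ω => eunorm (f ω) := fun f hf => continuous_eunorm.comp hf
  have hGc : Continuous G := by
    have c1 := cd (fun ω => ω.1.2 - xh) (by fun_prop)
    have c2 := cd (fun ω => ω.2.2 - xh) (by fun_prop)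
    have c3 := cd (fun ω => ω.1.2 - ω.2.2) (by fun_prop)
    have c4 := ce (fun ω => ω.1.2 - xh) (by fun_prop)
    have c5 := ce (fun ω => ω.2.2 - xh) (by fun_prop)
    fun_prop
  set F : ((ℝ × (Fin d → ℝ)) × (ℝ × (Fin d → ℝ))) → ℝ := fun ω =>
    u ω.1.1 ω.1.2 - v ω.2.1 ω.2.2 - G ω with hF
  have hFc : ContinuousOn F Ω := by
    refine ContinuousOn.sub (ContinuousOn.sub ?_ ?_) hGc.continuousOn
    · exact ContinuousOn.comp (g := fun z : ℝ × (Fin d → ℝ) => u z.1 z.2) hu continuousOn_fst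
        fun ω hω => hω.1
    · exact ContinuousOn.comp (g := fun z : ℝ × (Fin d → ℝ) => v z.1 z.2) hv continuousOn_snd
        fun ω hω => hω.2
  have c6 := ce (fun ω => ω.1.2 - ω.2.2) (by fun_prop)
  set D : ((ℝ × (Fin d → ℝ)) × (ℝ × (Fin d → ℝ))) → ℝ := fun ω =>
    eunorm (ω.1.2 - ω.2.2) ^ 2 + (ω.1.1 - ω.2.1) ^ 2 with hD
  have hDc : Continuous D := by fun_prop
  have hthI : th ∈ Set.Icc t0 t1 := ⟨hth.1.le, hth.2.le⟩
  set ω0 : (ℝ × (Fin d → ℝ)) × (ℝ × (Fin d → ℝ)) := ((th, xh), (th, xh)) with hω0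
  have hω0_m : ω0 ∈ Ω := ⟨⟨hthI, hxh⟩, ⟨hthI, hxh⟩⟩
  have hdz : dotp n (0 : Fin d → ℝ) = 0 := by simp [dotp]
  have hFω0 : F ω0 = u th xh - v th xh := by
    simp [hF, hG, hω0, hdz, eunorm_zero]
  have hDω0 : D ω0 = 0 := by simp [hD, hω0, eunorm_zero]
  have hdiag : ∀ ω ∈ Ω, D ω = 0 → ω ≠ ω0 → F ω < F ω0 := by
    rintro ⟨⟨t, x⟩, ⟨s, y⟩⟩ ⟨⟨ht, hx⟩, -⟩ h1 h2
    simp only [hD] at h1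
    have h3 : eunorm (x - y) ^ 2 = 0 := by nlinarith [sq_nonneg (eunorm (x - y)), sq_nonneg (t - s)]
    have h4 : (t - s) ^ 2 = 0 := by nlinarith [sq_nonneg (eunorm (x - y)), sq_nonneg (t - s)]
    have h5 : x = y := sub_eq_zero.1 (eunorm_eq_zero (pow_eq_zero_iff two_ne_zero |>.1 h3))
    have h6 : t = s := sub_eq_zero.1 (pow_eq_zero_iff two_ne_zero |>.1 h4)
    subst h5 h6
    have h7 := hmax t ht x hx
    rw [hFω0]
    simp only [hF, hG, sub_self, hdz]
    have h8 : 0 < (t - th) ^ 2 + e * eunorm (x - xh) ^ 2 := by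
      by_cases hxx : x = xh
      · have htt : t ≠ th := by
          rintro rfl; exact h2 (by rw [hω0, hxx])
        have : 0 < (t - th) ^ 2 := by
          have := sub_ne_zero.2 htt
          positivity
        nlinarith [sq_nonneg (eunorm (x - xh))]
      · have := eunorm_pos_of_ne hxx
        positivity
    linarith
  -- choose the localisation radius
  obtain ⟨δ1, hδ1, k1, k2, k3, k4, k5⟩ : ∃ δ1 > 0, δ1 ≤ δ / 2 ∧ δ1 < th - t0 ∧ δ1 < t1 - th ∧
      2 * e * δ1 ≤ δ / 2 ∧ 2 * (N + 1) * δ1 ≤ δ / 2 := by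
    refine ⟨min (δ / 2) (min ((th - t0) / 2) (min ((t1 - th) / 2)
      (min (δ / (4 * e)) (δ / (4 * (N + 1)))))), ?_, min_le_left _ _, ?_, ?_, ?_, ?_⟩
    · have := hth.1
      have := hth.2
      refine lt_min (by positivity) (lt_min (by linarith) (lt_min (by linarith)
        (lt_min (by positivity) (by positivity))))
    · have := hth.1
      have h := (min_le_right (δ / 2) (min ((th - t0) / 2) (min ((t1 - th) / 2)
        (min (δ / (4 * e)) (δ / (4 * (N + 1))))))).trans (min_le_left _ _)
      linarith
    · have := hth.2
      have h := (min_le_right (δ / 2) (min ((th - t0) / 2) (min ((t1 - th) / 2)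
        (min (δ / (4 * e)) (δ / (4 * (N + 1))))))).trans ((min_le_right _ _).trans (min_le_left _ _))
      linarith
    · have h := (min_le_right (δ / 2) (min ((th - t0) / 2) (min ((t1 - th) / 2)
        (min (δ / (4 * e)) (δ / (4 * (N + 1))))))).trans
          ((min_le_right _ _).trans ((min_le_right _ _).trans (min_le_left _ _)))
      rw [le_div_iff₀ (by positivity)] at h
      linarith
    · have h := (min_le_right (δ / 2) (min ((th - t0) / 2) (min ((t1 - th) / 2)
        (min (δ / (4 * e)) (δ / (4 * (N + 1))))))).trans
          ((min_le_right _ _).trans ((min_le_right _ _).trans (min_le_right _ _)))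
      rw [le_div_iff₀ (by positivity)] at h
      linarith
  have c7 := ce (fun ω => ω.1.2 - xh) (by fun_prop)
  have c8 := ce (fun ω => ω.2.2 - xh) (by fun_prop)
  have c9 : Continuous fun ω : (ℝ × (Fin d → ℝ)) × (ℝ × (Fin d → ℝ)) => |ω.1.1 - th| := by fun_prop
  have c10 : Continuous fun ω : (ℝ × (Fin d → ℝ)) × (ℝ × (Fin d → ℝ)) => |ω.2.1 - th| := by fun_prop
  obtain ⟨m, hm⟩ := pen_set hΩ hFc hDc.continuousOn
    (fun ω _ => by simp only [hD]; positivity) hω0_m hdiag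
    (O := {ω | |ω.1.1 - th| < δ1 / 2 ∧ |ω.2.1 - th| < δ1 / 2 ∧ eunorm (ω.1.2 - xh) < δ1 / 2 ∧
      eunorm (ω.2.2 - xh) < δ1 / 2})
    (by
      exact (isOpen_lt c9 continuous_const).inter
        ((isOpen_lt c10 continuous_const).inter
        ((isOpen_lt c7 continuous_const).inter (isOpen_lt c8 continuous_const))))
    (by simp [hω0, eunorm_zero, hδ1]) (δ := δ / 4) (by positivity)
  set a : ℝ := max m 1 with ha
  have ha1 : 1 ≤ a := le_max_right _ _
  have ham : (m : ℝ) ≤ a := le_max_left _ _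
  refine ⟨a, ha1, fun δ' hδ' => ?_⟩
  set b : ℝ := max a (δ / δ' ^ 2) with hb
  have hba : a ≤ b := le_max_left _ _
  have hbδ : δ / δ' ^ 2 ≤ b := le_max_right _ _
  have hcc : ContinuousOn (fun ω => F ω - (a * eunorm (ω.1.2 - ω.2.2) ^ 2
      + b * (ω.1.1 - ω.2.1) ^ 2)) Ω :=
    hFc.sub (by fun_prop : Continuous fun ω : ((ℝ × (Fin d → ℝ)) × (ℝ × (Fin d → ℝ))) =>
      a * eunorm (ω.1.2 - ω.2.2) ^ 2 + b * (ω.1.1 - ω.2.1) ^ 2).continuousOn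
  obtain ⟨⟨⟨tb, xb⟩, ⟨sb, yb⟩⟩, hωb, hωm⟩ := hΩ.exists_isMaxOn ⟨ω0, hω0_m⟩ hcc
  have hωm' : ∀ ω ∈ Ω, F ω - (a * eunorm (ω.1.2 - ω.2.2) ^ 2 + b * (ω.1.1 - ω.2.1) ^ 2) ≤
      F ((tb, xb), (sb, yb)) - (a * eunorm (xb - yb) ^ 2 + b * (tb - sb) ^ 2) :=
    fun ω hω => hωm hω
  have hval := hωm' ω0 hω0_m
  have hz0 : a * eunorm (ω0.1.2 - ω0.2.2) ^ 2 + b * (ω0.1.1 - ω0.2.1) ^ 2 = 0 := by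
    simp [hω0, eunorm_zero]
  rw [hz0, sub_zero] at hval
  obtain ⟨⟨l1, l2, l3, l4⟩, l5⟩ := hm _ hωb (by
    refine hval.trans ?_
    simp only [hD]
    have h1 : (m : ℝ) * eunorm (xb - yb) ^ 2 ≤ a * eunorm (xb - yb) ^ 2 := by gcongr
    have h2 : (m : ℝ) * (tb - sb) ^ 2 ≤ b * (tb - sb) ^ 2 := by
      have := ham.trans hba
      gcongr
    linarith)
  simp only at l1 l2 l3 l4
  have hb0 : 0 < b := by linarith
  have pen1 : a * eunorm (xb - yb) ^ 2 < δ / 4 := by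
    have : 0 ≤ b * (tb - sb) ^ 2 := by positivity
    linarith
  have pen2 : (tb - sb) ^ 2 < (δ' / 2) ^ 2 := by
    have h1 : b * (tb - sb) ^ 2 < δ / 4 := by
      have : 0 ≤ a * eunorm (xb - yb) ^ 2 := by positivity
      linarith
    rw [div_le_iff₀ (by positivity)] at hbδ
    have h2 : b * (tb - sb) ^ 2 < b * (δ' / 2) ^ 2 := by nlinarith
    exact lt_of_mul_lt_mul_left h2 hb0.le
  have pen3 : |tb - sb| < δ' / 2 := abs_lt_of_sq_lt_sq pen2 (by positivity)
  -- smallness of the perturbation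
  obtain ⟨ρ, hρ, r1, r2, r3, r5⟩ : ∃ ρ > 0, 8 * a * ρ ≤ δ / 4 ∧ ρ ≤ δ1 / 2 ∧ 8 * ρ ≤ δ' ∧
      ρ ≤ 1 := by
    refine ⟨min (δ / (32 * a)) (min (δ1 / 2) (min (δ' / 8) 1)), by positivity, ?_, ?_, ?_,
      (min_le_right _ _).trans ((min_le_right _ _).trans (min_le_right _ _))⟩
    · have h := min_le_left (δ / (32 * a)) (min (δ1 / 2) (min (δ' / 8) 1))
      rw [le_div_iff₀ (by positivity)] at h
      linarith
    · exact (min_le_right _ _).trans (min_le_left _ _)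
    · have h := (min_le_right (δ / (32 * a)) (min (δ1 / 2) (min (δ' / 8) 1))).trans
        ((min_le_right _ _).trans (min_le_left _ _))
      linarith
  have r4 : 8 * ρ ≤ δ / 4 := by nlinarith
  set p0 : ℝ := A + 2 * (N + 1) * (tb - th) + 2 * b * (tb - sb) with hp0
  set p0' : ℝ := 2 * b * (tb - sb) with hp0'
  set q0 : Fin d → ℝ := (ε + κ) • n + (2 * e) • (xb - xh) + (2 * a) • (xb - yb) with hq0
  set q0' : Fin d → ℝ := (κ - ε) • n - (2 * e) • (yb - xh) + (2 * a) • (xb - yb) with hq0'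
  obtain ⟨t, ht, x, hx, s, hs, y, hy, p, q, X, p', q', Y, hX, hY, s1, s2, s3, s4, s5, s6, s7, s8,
    s9, s10, s11⟩ := parab_sums hK hu hv hωb.1.1 hωb.2.1 hωb.1.2 hωb.2.2 (p0 := p0) (p0' := p0')
      (q0 := q0) (q0' := q0') (a := a) (b := b) (e := e) (N := N + 1) (by linarith) hb0.le he.le
      (by linarith) (by
        intro t ht x hx s hs y hy
        have := hωm' ((t, x), (s, y)) ⟨⟨ht, hx⟩, ⟨hs, hy⟩⟩
        simp only [hF, hG] at this
        simp only
        obtain ⟨X, rfl⟩ : ∃ X, x = xb + X := ⟨x - xb, by abel⟩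
        obtain ⟨Y, rfl⟩ : ∃ Y, y = yb + Y := ⟨y - yb, by abel⟩
        obtain ⟨xb, rfl⟩ : ∃ z, xb = xh + z := ⟨xb - xh, by abel⟩
        obtain ⟨yb, rfl⟩ : ∃ z, yb = xh + z := ⟨yb - xh, by abel⟩
        have e1 : xh + xb + X - xh = xb + X := by abel
        have e2 : xh + yb + Y - xh = yb + Y := by abel
        have e3 : xh + xb + X - (xh + yb + Y) = (xb - yb) + (X - Y) := by abel
        have e4 : xh + xb - (xh + yb) = xb - yb := by abel
        have e5 : xh + xb + X - (xh + xb) = X := by abel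
        have e6 : xh + yb + Y - (xh + yb) = Y := by abel
        have e7 : xh + xb - xh = xb := by abel
        have e8 : xh + yb - xh = yb := by abel
        simp only [e1, e2, e3, e4, e5, e6, e7, e8, hq0, hq0', hp0, hp0'] at this ⊢
        simp only [eunorm_add_sq, eunorm_sub_sq, dotp_add_left, dotp_add_right, dotp_sub_left,
          dotp_sub_right, dotp_smul_left] at this ⊢
        nlinarith [sq_nonneg (s - sb)]) hρ
  have tri : ∀ α β γ : ℝ, |α - γ| ≤ |α - β| + |β - γ| := abs_sub_le
  have tt : |t - th| < δ1 := by linarith [tri t tb th]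
  have ss : |s - th| < δ1 := by linarith [tri s sb th]
  have xx : eunorm (x - xh) < δ1 := by linarith [eunorm_sub_le' x xb xh]
  have yy : eunorm (y - xh) < δ1 := by linarith [eunorm_sub_le' y yb xh]
  have tI : t ∈ Set.Ioo t0 t1 := by
    rw [abs_lt] at tt; exact ⟨by linarith, by linarith⟩
  have sI : s ∈ Set.Ioo t0 t1 := by
    rw [abs_lt] at ss; exact ⟨by linarith, by linarith⟩
  have xyb : eunorm ((xb - yb) - (x - y)) ≤ 2 * ρ := by
    have h1 := eunorm_sub_le (y - yb) (x - xb)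
    have h2 : (xb - yb) - (x - y) = (y - yb) - (x - xb) := by abel
    rw [h2]; linarith
  have a0 : 0 < a := by linarith
  have absa : |2 * a| = 2 * a := abs_of_pos (by linarith)
  have abse : |2 * e| = 2 * e := abs_of_pos (by linarith)
  have hxy2 : eunorm (x - y) ≤ eunorm (xb - yb) + 2 * ρ := by
    have h1 := eunorm_sub_le (xb - yb) ((xb - yb) - (x - y))
    have h2 : (xb - yb) - ((xb - yb) - (x - y)) = x - y := by abel
    rw [h2] at h1
    linarith
  refine ⟨t, tI, s, sI, x, hx, y, hy, p, q, X, p', q', Y, by linarith, by linarith, by linarith,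
    by linarith, ?_, ?_, ?_, ?_, ?_, ?_, upperExp_superjet hX tI s9, upperExp_subjet hY sI s10⟩
  · exact dbl_aux (eunorm_nonneg _) ha1 hρ hxy2 pen1 r1 r5
  · have h1 := tri t tb s
    have h2 := tri tb sb s
    rw [abs_sub_comm sb s] at h2
    linarith
  · have h1 : q - ((2 * a) • (x - y) + (κ + ε) • n) = (q - q0) + ((2 * e) • (xb - xh)
        + (2 * a) • ((xb - yb) - (x - y))) := by
      rw [hq0, add_comm κ ε, smul_sub (2 * a) (xb - yb)]; abel
    rw [h1]
    have h2 := eunorm_add_le (q - q0) ((2 * e) • (xb - xh) + (2 * a) • ((xb - yb) - (x - y)))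
    have h3 := eunorm_add_le ((2 * e) • (xb - xh)) ((2 * a) • ((xb - yb) - (x - y)))
    rw [eunorm_smul, eunorm_smul, absa, abse] at h3
    have h4 : 2 * a * eunorm ((xb - yb) - (x - y)) ≤ 2 * a * (2 * ρ) := by gcongr
    have h5 : 2 * e * eunorm (xb - xh) ≤ 2 * e * δ1 := by gcongr; linarith
    linarith
  · have h1 : q' - ((2 * a) • (x - y) + (κ - ε) • n) = (q' - q0') + ((2 * a) • ((xb - yb) - (x - y))
        - (2 * e) • (yb - xh)) := by
      rw [hq0', smul_sub (2 * a) (xb - yb)]; abel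
    rw [h1]
    have h2 := eunorm_add_le (q' - q0') ((2 * a) • ((xb - yb) - (x - y)) - (2 * e) • (yb - xh))
    have h3 := eunorm_sub_le ((2 * a) • ((xb - yb) - (x - y))) ((2 * e) • (yb - xh))
    rw [eunorm_smul, eunorm_smul, absa, abse] at h3
    have h4 : 2 * a * eunorm ((xb - yb) - (x - y)) ≤ 2 * a * (2 * ρ) := by gcongr
    have h5 : 2 * e * eunorm (yb - xh) ≤ 2 * e * δ1 := by gcongr; linarith
    linarith
  · rw [abs_lt] at s5 s6 l1
    have h1 : 2 * (N + 1) * (-δ1) ≤ 2 * (N + 1) * (tb - th) := by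
      gcongr; linarith [l1.1]
    have h2 : p0 - p0' = A + 2 * (N + 1) * (tb - th) := by rw [hp0, hp0']; ring
    linarith [s5.1, s6.2]
  · intro h k
    refine (s11 h k).trans ?_
    have : ρ ≤ δ := by linarith
    gcongr

end Parab2

section Geom
variable {d : ℕ}

lemma fderiv_eq_dotp (ℓ : (Fin d → ℝ) → ℝ) (x v : Fin d → ℝ) :
    fderiv ℝ ℓ x v = dotp (gradVec ℓ x) v := by
  have := LinearMap.pi_apply_eq_sum_univ (fderiv ℝ ℓ x : (Fin d → ℝ) →ₗ[ℝ] ℝ) v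
  simp only [ContinuousLinearMap.coe_coe, smul_eq_mul] at this
  rw [this, dotp]
  refine Finset.sum_congr rfl fun i _ => ?_
  rw [gradVec, mul_comm]
  congr 2
  ext j
  simp [Pi.single_apply, eq_comm]

lemma isCompact_clD {ℓ : (Fin d → ℝ) → ℝ} (hc : ContDiff ℝ 3 ℓ)
    (hn : ∀ x, ℓ x = 0 → eunorm (gradVec ℓ x) = 1)
    (hb : Bornology.IsBounded {x : Fin d → ℝ | ℓ x < 0}) : IsCompact {x : Fin d → ℝ | ℓ x ≤ 0} := by
  have hcl : IsClosed {x : Fin d → ℝ | ℓ x ≤ 0} := isClosed_le hc.continuous continuous_const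
  refine Metric.isCompact_of_isClosed_isBounded hcl (hb.closure.subset ?_)
  intro x hx
  rcases (show ℓ x ≤ 0 from hx).lt_or_eq with h | h
  · exact subset_closure h
  · by_contra hcon
    have h1 : ∀ᶠ y in 𝓝 x, y ∉ {x : Fin d → ℝ | ℓ x < 0} := by
      rw [mem_closure_iff_frequently] at hcon
      exact not_frequently.1 hcon
    have h2 : IsLocalMin ℓ x := by
      filter_upwards [h1] with y hy
      rw [h]; exact not_lt.1 hy
    have h3 := h2.fderiv_eq_zero
    have h4 : gradVec ℓ x = 0 := by
      ext i; simp [gradVec, h3]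
    have := hn x h
    rw [h4, eunorm_zero] at this
    exact zero_ne_one this

lemma continuous_gradVec {ℓ : (Fin d → ℝ) → ℝ} (hc : ContDiff ℝ 3 ℓ) : Continuous (gradVec ℓ) := by
  have h := hc.continuous_fderiv (by norm_num)
  refine continuous_pi fun i => ?_
  exact h.clm_apply continuous_const

lemma ell_taylor {ℓ : (Fin d → ℝ) → ℝ} (hc : ContDiff ℝ 3 ℓ) {K : Set (Fin d → ℝ)}
    (hK : IsCompact K) : ∃ Λ : ℝ, 0 ≤ Λ ∧ ∀ x ∈ K, ∀ y ∈ K,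
      |ℓ y - ℓ x - dotp (gradVec ℓ x) (y - x)| ≤ Λ * eunorm (y - x) ^ 2 := by
  obtain ⟨R, hR⟩ := hK.isBounded.subset_closedBall (0 : Fin d → ℝ)
  have h1 : ContDiff ℝ 1 (fderiv ℝ ℓ) := hc.fderiv_right (by norm_num)
  have h2 : Continuous (fderiv ℝ (fderiv ℝ ℓ)) := h1.continuous_fderiv (by norm_num)
  obtain ⟨C, hC⟩ := (isCompact_closedBall (0 : Fin d → ℝ) R).exists_bound_of_continuousOn
    (f := fderiv ℝ (fderiv ℝ ℓ)) h2.continuousOn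
  refine ⟨max C 0, le_max_right _ _, fun x hx y hy => ?_⟩
  have hconv := convex_closedBall (0 : Fin d → ℝ) R
  have hxB := hR hx
  have hyB := hR hy
  have hseg := hconv.segment_subset hxB hyB
  have h3 : ∀ z ∈ segment ℝ x y, ‖fderiv ℝ ℓ z - fderiv ℝ ℓ x‖ ≤ max C 0 * ‖y - x‖ := by
    intro z hz
    have h4 := hconv.norm_image_sub_le_of_norm_fderiv_le (f := fderiv ℝ ℓ) (𝕜 := ℝ)
      (fun w _ => h1.differentiable (by norm_num) w) hC hxB (hseg hz)
    have h5 : ‖z - x‖ ≤ ‖y - x‖ := by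
      obtain ⟨t, ⟨ht0, ht1⟩, rfl⟩ := (segment_eq_image' ℝ x y) ▸ hz
      rw [add_sub_cancel_left, norm_smul, Real.norm_of_nonneg ht0]
      nlinarith [norm_nonneg (y - x)]
    refine h4.trans ?_
    exact mul_le_mul (le_max_left _ _) h5 (norm_nonneg _) (le_max_right _ _)
  have h6 := (convex_segment x y).norm_image_sub_le_of_norm_fderiv_le' (f := ℓ) (𝕜 := ℝ)
    (fun w _ => hc.differentiable (by norm_num) w) h3 (left_mem_segment ℝ x y)
    (right_mem_segment ℝ x y)
  rw [fderiv_eq_dotp, Real.norm_eq_abs] at h6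
  refine h6.trans ?_
  have h7 := norm_le_eunorm (y - x)
  have h8 := norm_nonneg (y - x)
  have h9 := le_max_right C 0
  have : ‖y - x‖ ^ 2 ≤ eunorm (y - x) ^ 2 := by gcongr
  nlinarith

end Geom

section Conv

lemma leftD_ge {φ : ℝ → EReal} {a b A B : ℝ} (hab : b < a) (ha : (A : EReal) ≤ φ a)
    (hb : φ b = B) (hat : φ a ≠ ⊤) : (((A - B) / (a - b) : ℝ) : EReal) ≤ leftD φ a := by
  have hbot : φ a ≠ ⊥ := fun h => by rw [h] at ha; exact absurd ha (by simp)
  obtain ⟨A', hA'⟩ : ∃ A' : ℝ, φ a = A' := ⟨_, (EReal.coe_toReal hat hbot).symm⟩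
  have hAA : A ≤ A' := by rw [hA'] at ha; exact_mod_cast ha
  have h0 : 0 < a - b := by linarith
  refine le_trans ?_ (le_iSup (fun h : Set.Ioi (0:ℝ) =>
    (((1 : ℝ)/(h : ℝ)) : EReal) * (φ a - φ (a - (h:ℝ)))) ⟨a - b, h0⟩)
  simp only [sub_sub_cancel, hb, hA']
  rw [← EReal.coe_div, ← EReal.coe_sub, ← EReal.coe_mul, EReal.coe_le_coe_iff]
  rw [div_mul_eq_mul_div, one_mul]
  gcongr

lemma rightD_le {φ : ℝ → EReal} {a b A B : ℝ} (hab : b < a) (ha : φ a = A)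
    (hb : (B : EReal) ≤ φ b) (hbt : φ b ≠ ⊤) : rightD φ b ≤ (((A - B) / (a - b) : ℝ) : EReal) := by
  have hbot : φ b ≠ ⊥ := fun h => by rw [h] at hb; exact absurd hb (by simp)
  obtain ⟨B', hB'⟩ : ∃ B' : ℝ, φ b = B' := ⟨_, (EReal.coe_toReal hbt hbot).symm⟩
  have hBB : B ≤ B' := by rw [hB'] at hb; exact_mod_cast hb
  have h0 : 0 < a - b := by linarith
  refine le_trans (iInf_le (fun h : Set.Ioi (0:ℝ) =>
    (((1 : ℝ)/(h : ℝ)) : EReal) * (φ (b + (h:ℝ)) - φ b)) ⟨a - b, h0⟩) ?_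
  simp only [add_sub_cancel, ha, hB']
  rw [← EReal.coe_div, ← EReal.coe_sub, ← EReal.coe_mul, EReal.coe_le_coe_iff]
  rw [div_mul_eq_mul_div, one_mul]
  gcongr

lemma sub_real {V c : ℝ} {l : EReal} (h : (V : EReal) + l ≤ 0) (hc : (c : EReal) ≤ l) :
    V + c ≤ 0 := by
  have : (V : EReal) + c ≤ 0 := le_trans (by gcongr) h
  exact_mod_cast this

lemma sup_real {V c : ℝ} {l : EReal} (h : 0 ≤ (V : EReal) + l) (hc : l ≤ (c : EReal)) :
    0 ≤ V + c := by
  have : 0 ≤ (V : EReal) + c := le_trans h (by gcongr)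
  exact_mod_cast this

lemma exists_real {φ : ℝ → EReal} (hpos : ∀ y, 0 ≤ φ y) {a : ℝ} (h : φ a ≠ ⊤) :
    ∃ A : ℝ, φ a = A :=
  ⟨_, (EReal.coe_toReal h (fun h' => by have := hpos a; rw [h'] at this; simp at this)).symm⟩

lemma V_le_of {φ : ℝ → EReal} (hpos : ∀ y, 0 ≤ φ y) {r s V W : ℝ} (hrs : s < r) (hr : φ r ≠ ⊤)
    (hs : φ s ≠ ⊤) (h1 : (V : EReal) + leftD φ r ≤ 0) (h2 : 0 ≤ (W : EReal) + rightD φ s) :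
    V ≤ W := by
  obtain ⟨A, hA⟩ := exists_real hpos hr
  obtain ⟨B, hB⟩ := exists_real hpos hs
  have h3 := sub_real h1 (leftD_ge hrs hA.ge hB hr)
  have h4 := sup_real h2 (rightD_le hrs hA hB.ge hs)
  linarith

lemma bdry_psi {ψ : ℝ → EReal} (hpos : ∀ y, 0 ≤ ψ y) (hlsc : LowerSemicontinuous ψ) {r s : ℝ}
    (hrs : s < r) (hr : ψ r ≠ ⊤) (hs : ψ s ≠ ⊤) : ∃ c : ℝ, ∀ η > 0, ∃ δ > 0,
      (∀ r', |r' - r| < δ → ψ r' ≠ ⊤ → ∀ V : ℝ, (V : EReal) + leftD ψ r' ≤ 0 → V ≤ - c + η) ∧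
      (∀ s', |s' - s| < δ → ψ s' ≠ ⊤ → ∀ W : ℝ, 0 ≤ (W : EReal) + rightD ψ s' → - c - η ≤ W) := by
  obtain ⟨A, hA⟩ := exists_real hpos hr
  obtain ⟨B, hB⟩ := exists_real hpos hs
  have h0 : 0 < r - s := by linarith
  refine ⟨(A - B) / (r - s), fun η hη => ?_⟩
  set η1 := η * (r - s) / 2 with hη1
  have hη1_p : 0 < η1 := by positivity
  have e1 : ∀ᶠ r' in 𝓝 r, ((A - η1 : ℝ) : EReal) < ψ r' :=
    hlsc r _ (by beta_reduce; rw [hA]; exact_mod_cast (by linarith : A - η1 < A))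
  have e2 : ∀ᶠ s' in 𝓝 s, ((B - η1 : ℝ) : EReal) < ψ s' :=
    hlsc s _ (by beta_reduce; rw [hB]; exact_mod_cast (by linarith : B - η1 < B))
  have e3 : ∀ᶠ r' in 𝓝 r, s < r' := lt_mem_nhds hrs
  have e4 : ∀ᶠ s' in 𝓝 s, s' < r := gt_mem_nhds hrs
  have e5 : ∀ᶠ r' in 𝓝 r, (A - B) / (r - s) - η < (A - η1 - B) / (r' - s) := by
    have hc : ContinuousAt (fun r' => (A - η1 - B) / (r' - s)) r :=
      ContinuousAt.div (by fun_prop) (by fun_prop) h0.ne'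
    refine hc.eventually (lt_mem_nhds ?_)
    rw [hη1]
    beta_reduce
    have : (A - η * (r - s) / 2 - B) / (r - s) = (A - B) / (r - s) - η / 2 := by
      field_simp; ring
    rw [this]; linarith
  have e6 : ∀ᶠ s' in 𝓝 s, (A - (B - η1)) / (r - s') < (A - B) / (r - s) + η := by
    have hc : ContinuousAt (fun s' => (A - (B - η1)) / (r - s')) s :=
      ContinuousAt.div (by fun_prop) (by fun_prop) h0.ne'
    refine hc.eventually (gt_mem_nhds ?_)
    rw [hη1]
    beta_reduce
    have : (A - (B - η * (r - s) / 2)) / (r - s) = (A - B) / (r - s) + η / 2 := by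
      field_simp; ring
    rw [this]; linarith
  obtain ⟨δ1, hδ1, k1⟩ := Metric.eventually_nhds_iff.1 (e1.and (e3.and e5))
  obtain ⟨δ2, hδ2, k2⟩ := Metric.eventually_nhds_iff.1 (e2.and (e4.and e6))
  refine ⟨min δ1 δ2, lt_min hδ1 hδ2, ?_, ?_⟩
  · intro r' hr' ht V hV
    obtain ⟨a1, a2, a3⟩ := k1 (y := r') (by rw [Real.dist_eq]; exact hr'.trans_le (min_le_left _ _))
    have := sub_real hV (leftD_ge a2 a1.le hB ht)
    linarith
  · intro s' hs' ht V hV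
    obtain ⟨a1, a2, a3⟩ := k2 (y := s') (by rw [Real.dist_eq]; exact hs'.trans_le (min_le_right _ _))
    have := sup_real hV (rightD_le a2 hA a1.le ht)
    linarith

end Conv

section Core
variable {d : ℕ}

lemma qbound {q w n : Fin d → ℝ} {a k δ : ℝ} (ha : 0 ≤ a)
    (h : eunorm (q - ((2 * a) • w + k • n)) < δ) :
    eunorm q ≤ 2 * a * eunorm w + (|k| * eunorm n + δ) := by
  have h1 := eunorm_add_le (q - ((2 * a) • w + k • n)) ((2 * a) • w + k • n)
  have h2 := eunorm_add_le ((2 * a) • w) (k • n)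
  rw [sub_add_cancel] at h1
  rw [eunorm_smul, eunorm_smul, abs_of_nonneg (by linarith : 0 ≤ 2 * a)] at h2
  linarith

lemma qdiff {q q' w n : Fin d → ℝ} {κ ε δ : ℝ} (hε : 0 ≤ ε)
    (h : eunorm (q - (w + (κ + ε) • n)) < δ) (h' : eunorm (q' - (w + (κ - ε) • n)) < δ) :
    eunorm (q - q') ≤ 2 * ε * eunorm n + 2 * δ := by
  have e : q - q' = (2 * ε) • n + ((q - (w + (κ + ε) • n)) - (q' - (w + (κ - ε) • n))) := by
    rw [add_smul, sub_smul, mul_smul, two_smul]; abel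
  have h1 := eunorm_add_le ((2 * ε) • n) ((q - (w + (κ + ε) • n)) - (q' - (w + (κ - ε) • n)))
  have h2 := eunorm_sub_le (q - (w + (κ + ε) • n)) (q' - (w + (κ - ε) • n))
  rw [eunorm_smul, abs_of_nonneg (by linarith : 0 ≤ 2 * ε)] at h1
  rw [e]; linarith

lemma arith1 {a r δ L Q ω : ℝ} (hr : 0 ≤ r) (hδ : 0 < δ) (hδ1 : δ ≤ 1) (ha : 1 ≤ a) (hL : 0 ≤ L)
    (hQ : 0 ≤ Q) (h1 : a * r ^ 2 < δ) (h2 : r ≤ 2 * δ) (hω : 0 ≤ ω) (h3 : a * ω ≤ δ) :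
    (L * r + ω) * (2 * a * r + Q) ≤ (2 * L + 2 * L * Q + 4 + Q) * δ := by
  have e1 : L * (a * r ^ 2) ≤ L * δ := by gcongr
  have e2 : L * Q * r ≤ L * Q * (2 * δ) := by gcongr
  have e3 : a * ω * r ≤ δ * (2 * δ) := by gcongr
  have e4 : ω ≤ δ := by nlinarith
  have e5 : ω * Q ≤ δ * Q := by gcongr
  nlinarith

lemma arith2 {a r δ L ω : ℝ} (hδ : 0 < δ) (hδ1 : δ ≤ 1) (ha : 1 ≤ a)
    (h1 : a * r ^ 2 < δ) (hω : 0 ≤ ω) (h3 : a * ω ≤ δ) :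
    2 * a * (L * r + ω) ^ 2 ≤ (4 * L ^ 2 + 4) * δ := by
  have e1 : L ^ 2 * (a * r ^ 2) ≤ L ^ 2 * δ := by gcongr
  have e4 : ω ≤ δ := by nlinarith
  have e3 : a * ω * ω ≤ δ * 1 := by gcongr; linarith
  have e5 : (L * r + ω) ^ 2 ≤ 2 * (L * r) ^ 2 + 2 * ω ^ 2 := by nlinarith [sq_nonneg (L * r - ω)]
  have e6 : a * (L * r + ω) ^ 2 ≤ a * (2 * (L * r) ^ 2 + 2 * ω ^ 2) := by gcongr
  nlinarith

lemma core_pt {b : ℝ → (Fin d → ℝ) → (Fin d → ℝ)} {σ : ℝ → (Fin d → ℝ) → Matrix (Fin d) (Fin d) ℝ}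
    {f : ℝ → (Fin d → ℝ) → ℝ → (Fin d → ℝ) → ℝ} {u v : ℝ → (Fin d → ℝ) → ℝ}
    {t s : ℝ} {x y n : Fin d → ℝ} {p p' : ℝ} {q q' : Fin d → ℝ} {X Y : Matrix (Fin d) (Fin d) ℝ}
    {a δ κ ε L β ω S1 B1 e A R Q : ℝ} (hδ : 0 < δ) (hδ1 : δ ≤ 1) (ha : 1 ≤ a) (hε : 0 ≤ ε)
    (hL : 0 ≤ L) (hβ : 0 ≤ β) (he : 0 ≤ e)
    (h1 : a * eunorm (x - y) ^ 2 < δ) (h2 : eunorm (x - y) ≤ 2 * δ)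
    (hq : eunorm (q - ((2 * a) • (x - y) + (κ + ε) • n)) < δ)
    (hq' : eunorm (q' - ((2 * a) • (x - y) + (κ - ε) • n)) < δ)
    (hA : A - δ ≤ p - p')
    (hm : ∀ h k : Fin d → ℝ, 1 / 2 * dotp (X.mulVec h) h - 1 / 2 * dotp (Y.mulVec k) k ≤
        2 * a * eunorm (h - k) ^ 2 + (2 * e + δ) * (eunorm h ^ 2 + eunorm k ^ 2))
    (hω : 0 ≤ ω) (h3 : a * ω ≤ δ)
    (hS : matNorm (σ t x - σ s y) ≤ L * eunorm (x - y) + ω)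
    (hB : eunorm (b t x - b s y) ≤ L * eunorm (x - y) + ω)
    (bS : matNorm (σ t x) ≤ S1) (bS' : matNorm (σ s y) ≤ S1) (bB : eunorm (b s y) ≤ B1)
    (hQ : Q = (|κ| + ε) * eunorm n + 1)
    (hf : ∀ z z', eunorm z' ≤ (2 * a * eunorm (x - y) + Q) * S1 →
      f t x (u t x) z - f s y (v s y) z' ≤ β * eunorm (z - z') + R)
    (hV : Vop b σ f u t x p q X ≤ Vop b σ f v s y p' q' Y) :
    A ≤ δ + (4 * L ^ 2 + 4) * δ + (2 * e + δ) * (2 * S1 ^ 2)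
      + (2 * L + 2 * L * Q + 4 + Q) * δ + (2 * ε * eunorm n + 2 * δ) * B1
      + β * ((2 * L + 2 * L * Q + 4 + Q) * δ + (2 * ε * eunorm n + 2 * δ) * S1) + R := by
  have hr := eunorm_nonneg (x - y)
  have hn := eunorm_nonneg n
  have hQ0 : 0 ≤ Q := by rw [hQ]; positivity
  have k1 : |κ + ε| ≤ |κ| + ε := by
    have := abs_add_le κ ε; rwa [abs_of_nonneg hε] at this
  have k2 : |κ - ε| ≤ |κ| + ε := by
    have := abs_sub κ ε; rwa [abs_of_nonneg hε] at this
  have k3 : |κ + ε| * eunorm n ≤ (|κ| + ε) * eunorm n := by gcongr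
  have k4 : |κ - ε| * eunorm n ≤ (|κ| + ε) * eunorm n := by gcongr
  have bq : eunorm q ≤ 2 * a * eunorm (x - y) + Q := by
    have := qbound (by linarith) hq; linarith
  have bq' : eunorm q' ≤ 2 * a * eunorm (x - y) + Q := by
    have := qbound (by linarith) hq'; linarith
  have dq := qdiff hε hq hq'
  have hE := arith1 hr hδ hδ1 ha hL hQ0 h1 h2 hω h3
  have hT := arith2 (L := L) hδ hδ1 ha h1 hω h3
  set r := eunorm (x - y) with hrdef
  set E := (2 * L + 2 * L * Q + 4 + Q) * δ with hEdef
  have hLr : 0 ≤ L * r + ω := by positivity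
  have hS1 : 0 ≤ S1 := (matNorm_nonneg _).trans bS
  -- trace
  have tr := trace_diff_le (S := σ t x) (S' := σ s y) hm
  have tr1 : 2 * a * matNorm (σ t x - σ s y) ^ 2 ≤ 2 * a * (L * r + ω) ^ 2 := by
    have := matNorm_nonneg (σ t x - σ s y)
    gcongr
  have tr2 : (2 * e + δ) * (matNorm (σ t x) ^ 2 + matNorm (σ s y) ^ 2) ≤
      (2 * e + δ) * (2 * S1 ^ 2) := by
    have := matNorm_nonneg (σ t x)
    have := matNorm_nonneg (σ s y)
    have : matNorm (σ t x) ^ 2 ≤ S1 ^ 2 := by gcongr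
    have : matNorm (σ s y) ^ 2 ≤ S1 ^ 2 := by gcongr
    have : 0 ≤ 2 * e + δ := by positivity
    gcongr
    linarith
  -- drift
  have b1 : dotp (b t x) q - dotp (b s y) q' = dotp (b t x - b s y) q + dotp (b s y) (q - q') := by
    rw [dotp_sub_left, dotp_sub_right]; ring
  have b2 : dotp (b t x - b s y) q ≤ (L * r + ω) * (2 * a * r + Q) :=
    (dotp_le _ _).trans (mul_le_mul hB bq (eunorm_nonneg _) hLr)
  have hB1 : 0 ≤ B1 := (eunorm_nonneg _).trans bB
  have b3 : dotp (b s y) (q - q') ≤ (2 * ε * eunorm n + 2 * δ) * B1 := by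
    refine (dotp_le _ _).trans ?_
    rw [mul_comm]
    exact mul_le_mul dq bB (eunorm_nonneg _) ((eunorm_nonneg _).trans dq)
  -- source
  have z1 : eunorm (Matrix.vecMul q' (σ s y)) ≤ (2 * a * r + Q) * S1 :=
    (eunorm_vecMul_le _ _).trans (mul_le_mul bq' bS' (matNorm_nonneg _) ((eunorm_nonneg _).trans bq'))
  have z2 : Matrix.vecMul q (σ t x) - Matrix.vecMul q' (σ s y) =
      Matrix.vecMul q (σ t x - σ s y) + Matrix.vecMul (q - q') (σ s y) := by
    rw [Matrix.vecMul_sub, Matrix.sub_vecMul]; abel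
  have z3 : eunorm (Matrix.vecMul q (σ t x) - Matrix.vecMul q' (σ s y)) ≤
      E + (2 * ε * eunorm n + 2 * δ) * S1 := by
    rw [z2]
    refine (eunorm_add_le _ _).trans (add_le_add ?_ ?_)
    · refine ((eunorm_vecMul_le _ _).trans
        (mul_le_mul bq hS (matNorm_nonneg _) ((eunorm_nonneg _).trans bq))).trans ?_
      rw [mul_comm]; exact hE
    · exact (eunorm_vecMul_le _ _).trans
        (mul_le_mul dq bS' (matNorm_nonneg _) ((eunorm_nonneg _).trans dq))
  have f1 := hf (Matrix.vecMul q (σ t x)) _ z1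
  have f2 : β * eunorm (Matrix.vecMul q (σ t x) - Matrix.vecMul q' (σ s y)) ≤
    β * (E + (2 * ε * eunorm n + 2 * δ) * S1) := by gcongr
  simp only [Vop] at hV
  linarith

end Core

section Core2
variable {d : ℕ}

lemma near_pt {S : Set (ℝ × (Fin d → ℝ))} {F : ℝ × (Fin d → ℝ) → ℝ} {th : ℝ} {xh : Fin d → ℝ}
    (hF : ContinuousOn F S) (hS : (th, xh) ∈ S) {η : ℝ} (hη : 0 < η) :
    ∃ δ > 0, ∀ t x, (t, x) ∈ S → |t - th| < δ → eunorm (x - xh) < δ →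
      |F (t, x) - F (th, xh)| < η := by
  obtain ⟨δ, hδ, h⟩ := Metric.continuousWithinAt_iff.1 (hF _ hS) η hη
  refine ⟨δ, hδ, fun t x hs h1 h2 => ?_⟩
  have := h hs (by
    rw [Prod.dist_eq]
    refine max_lt (by simpa [Real.dist_eq] using h1) ?_
    show dist x xh < δ
    rw [dist_eq_norm]
    exact (norm_le_eunorm _).trans_lt h2)
  rwa [Real.dist_eq] at this

lemma unif_diag {Y : Type*} [PseudoMetricSpace Y] {C : Set Y} (hC : IsCompact C) {t0 t1 : ℝ}
    {H : ℝ → ℝ → Y → ℝ}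
    (hH : ContinuousOn (fun z : ℝ × ℝ × Y => H z.1 z.2.1 z.2.2)
      (Set.Icc t0 t1 ×ˢ Set.Icc t0 t1 ×ˢ C))
    (h0 : ∀ t ∈ Set.Icc t0 t1, ∀ c ∈ C, H t t c = 0) {ω : ℝ} (hω : 0 < ω) :
    ∃ δ > 0, ∀ t ∈ Set.Icc t0 t1, ∀ s ∈ Set.Icc t0 t1, ∀ c ∈ C, |t - s| < δ → |H t s c| < ω := by
  have hu := (isCompact_Icc.prod (isCompact_Icc.prod hC)).uniformContinuousOn_of_continuous hH
  obtain ⟨δ, hδ, h⟩ := Metric.uniformContinuousOn_iff.1 hu ω hω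
  refine ⟨δ, hδ, fun t ht s hs c hc hts => ?_⟩
  have := h (t, s, c) ⟨ht, hs, hc⟩ (t, t, c) ⟨ht, ht, hc⟩ (by
    simp only [Prod.dist_eq, dist_self, Real.dist_eq]
    rw [abs_sub_comm s t]
    simpa using hts)
  simp only [h0 t ht c hc, Real.dist_eq, sub_zero] at this
  exact this

lemma dot_bdry {nx n q w : Fin d → ℝ} {a k δ : ℝ} (h1 : eunorm nx = 1) (h2 : eunorm n = 1)
    (h : eunorm (q - ((2 * a) • w + k • n)) < δ) :
    |dotp nx q - (2 * a * dotp nx w + k)| ≤ δ + |k| * eunorm (nx - n) := by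
  have e1 : dotp nx q = dotp nx (q - ((2 * a) • w + k • n)) + (2 * a * dotp nx w
      + k * (1 + dotp (nx - n) n)) := by
    have : dotp n n = 1 := by rw [dotp_self, h2]; norm_num
    rw [dotp_sub_right, dotp_add_right, dotp_smul_right, dotp_smul_right, dotp_sub_left, this]
    ring
  have e2 := abs_dotp_le nx (q - ((2 * a) • w + k • n))
  have e3 := abs_dotp_le (nx - n) n
  rw [h1, one_mul] at e2
  rw [h2, mul_one] at e3
  have e4 : dotp nx q - (2 * a * dotp nx w + k) = dotp nx (q - ((2 * a) • w + k • n))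
      + k * dotp (nx - n) n := by rw [e1]; ring
  rw [e4]
  refine (abs_add_le _ _).trans (add_le_add (e2.trans h.le) ?_)
  rw [abs_mul]
  gcongr

lemma bdry_excl {ℓ : (Fin d → ℝ) → ℝ} (hc : ContDiff ℝ 3 ℓ)
    (hn : ∀ x, ℓ x = 0 → eunorm (gradVec ℓ x) = 1)
    (hK : IsCompact {x : Fin d → ℝ | ℓ x ≤ 0})
    {g : ℝ → (Fin d → ℝ) → ℝ → ℝ}
    (hg : ContinuousOn (fun p : ℝ × (Fin d → ℝ) × ℝ => g p.1 p.2.1 p.2.2)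
      (Set.Ici 0 ×ˢ {x | ℓ x = 0} ×ˢ Set.univ))
    (hgdec : ∀ t ≥ (0:ℝ), ∀ x, ℓ x = 0 → ∀ r r' : ℝ, r ≤ r' → g t x r' ≤ g t x r)
    {ψ : ℝ → EReal} (hψ : LowerSemicontinuous ψ) (hψpos : ∀ y, 0 ≤ ψ y)
    {u v : ℝ → (Fin d → ℝ) → ℝ}
    (hu : ContinuousOn (fun tx : ℝ × (Fin d → ℝ) => u tx.1 tx.2) (Set.Ici 0 ×ˢ {x | ℓ x ≤ 0}))
    (hv : ContinuousOn (fun tx : ℝ × (Fin d → ℝ) => v tx.1 tx.2) (Set.Ici 0 ×ˢ {x | ℓ x ≤ 0}))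
    (huψ : ∀ t > (0:ℝ), ∀ x, ℓ x = 0 → ψ (u t x) ≠ ⊤)
    (hvψ : ∀ t > (0:ℝ), ∀ x, ℓ x = 0 → ψ (v t x) ≠ ⊤)
    {th : ℝ} {xh : Fin d → ℝ} (hth : 0 < th) (hxh : ℓ xh ≤ 0) (huv : v th xh < u th xh)
    {ε : ℝ} (hε : 0 < ε) :
    ∃ κ : ℝ, ∃ δ0 > 0, ∀ δ, 0 < δ → δ ≤ δ0 → ∀ a, 0 ≤ a → ∀ t, 0 < t → ∀ x w q,
      ℓ w ≤ 0 → |t - th| < δ → eunorm (x - xh) < δ → a * eunorm (w - x) ^ 2 < δ → ℓ x = 0 →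
      (eunorm (q - ((2 * a) • (x - w) + (κ + ε) • gradVec ℓ xh)) < δ →
        ¬ (((dotp (gradVec ℓ x) q - g t x (u t x) : ℝ) : EReal) + leftD ψ (u t x) ≤ 0)) ∧
      (eunorm (q - ((2 * a) • (w - x) + (κ - ε) • gradVec ℓ xh)) < δ →
        ¬ (0 ≤ ((dotp (gradVec ℓ x) q - g t x (v t x) : ℝ) : EReal) + rightD ψ (v t x))) := by
  rcases hxh.lt_or_eq with hlt | hxh0
  · obtain ⟨δ, hδ, h⟩ := near_pt (S := Set.univ) (F := fun z => ℓ z.2) (th := th) (xh := xh)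
      (hc.continuous.comp continuous_snd).continuousOn (Set.mem_univ _)
      (η := - ℓ xh) (by linarith)
    refine ⟨0, δ, hδ, fun δ' _ h2 a _ t _ x w q _ h3 h4 _ h5 => ?_⟩
    have := h t x (Set.mem_univ _) (by linarith) (by linarith)
    rw [abs_lt] at this
    simp only at this
    linarith
  obtain ⟨c, hcc⟩ := bdry_psi hψpos hψ huv (huψ th hth xh hxh0) (hvψ th hth xh hxh0)
  obtain ⟨δ1, hδ1, hl, hr⟩ := hcc (ε / 4) (by linarith)
  obtain ⟨Λ, hΛ, hT⟩ := ell_taylor hc hK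
  set n := gradVec ℓ xh with hndef
  set κ := g th xh (u th xh) - c with hκ
  have hsub : (Set.Ici (0:ℝ) ×ˢ {x | ℓ x = 0}) ⊆ (Set.Ici (0:ℝ) ×ˢ {x | ℓ x ≤ 0}) :=
    fun z hz => ⟨hz.1, le_of_eq hz.2⟩
  have hmem : (th, xh) ∈ (Set.Ici (0:ℝ) ×ˢ {x | ℓ x = 0}) := ⟨hth.le, hxh0⟩
  have hu' := hu.mono hsub
  have hv' := hv.mono hsub
  have cg : ∀ w : ℝ → (Fin d → ℝ) → ℝ, ContinuousOn (fun tx : ℝ × (Fin d → ℝ) => w tx.1 tx.2)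
      (Set.Ici (0:ℝ) ×ˢ {x | ℓ x = 0}) → ContinuousOn (fun tx : ℝ × (Fin d → ℝ) =>
        g tx.1 tx.2 (w tx.1 tx.2)) (Set.Ici (0:ℝ) ×ˢ {x | ℓ x = 0}) := fun w hw =>
    ContinuousOn.comp (g := fun p : ℝ × (Fin d → ℝ) × ℝ => g p.1 p.2.1 p.2.2)
      (f := fun tx : ℝ × (Fin d → ℝ) => (tx.1, tx.2, w tx.1 tx.2)) hg
      (continuousOn_fst.prodMk (continuousOn_snd.prodMk hw))
      (fun z hz => ⟨hz.1, hz.2, Set.mem_univ _⟩)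
  obtain ⟨d1, hd1, k1⟩ := near_pt hu' hmem hδ1
  obtain ⟨d2, hd2, k2⟩ := near_pt hv' hmem hδ1
  obtain ⟨d3, hd3, k3⟩ := near_pt (cg u hu') hmem (by linarith : 0 < ε / 4)
  obtain ⟨d4, hd4, k4⟩ := near_pt (cg v hv') hmem (by linarith : 0 < ε / 4)
  have hgc : Continuous fun z : ℝ × (Fin d → ℝ) => eunorm (gradVec ℓ z.2 - n) :=
    continuous_eunorm.comp (((continuous_gradVec hc).comp continuous_snd).sub continuous_const)
  obtain ⟨d5, hd5, k5⟩ := near_pt (S := Set.univ) (th := th) (xh := xh) hgc.continuousOn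
    (Set.mem_univ _) (η := ε / (8 * (|κ| + ε + 1))) (by positivity)
  have hd6 : 0 < ε / (4 * (1 + 2 * Λ)) := by positivity
  set d6 := ε / (4 * (1 + 2 * Λ)) with hd6def
  refine ⟨κ, min d1 (min d2 (min d3 (min d4 (min d5 d6)))), lt_min hd1 (lt_min hd2 (lt_min hd3
    (lt_min hd4 (lt_min hd5 hd6)))), fun δ hδ hle a ha t ht x w q hw htt hxx har hx0 => ?_⟩
  simp only [le_min_iff] at hle
  obtain ⟨le1, le2, le3, le4, le5, le6⟩ := hle
  have m1 : (t, x) ∈ (Set.Ici (0:ℝ) ×ˢ {x | ℓ x = 0}) := ⟨ht.le, hx0⟩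
  have b1 := k1 t x m1 (by linarith) (by linarith)
  have b2 := k2 t x m1 (by linarith) (by linarith)
  have b3 := k3 t x m1 (by linarith) (by linarith)
  have b4 := k4 t x m1 (by linarith) (by linarith)
  have b5 := k5 t x (Set.mem_univ _) (by linarith) (by linarith)
  simp only [sub_self, eunorm_zero, sub_zero, ← hndef] at b1 b2 b3 b4 b5
  rw [abs_of_nonneg (eunorm_nonneg _), lt_div_iff₀ (by positivity)] at b5
  rw [hd6def, le_div_iff₀ (by positivity)] at le6
  rw [abs_lt] at b3 b4
  have hnx := hn x hx0
  have hnh : eunorm n = 1 := hn xh hxh0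
  have hen := eunorm_nonneg (gradVec ℓ x - n)
  -- geometric bound
  have geo : dotp (gradVec ℓ x) (w - x) ≤ Λ * eunorm (w - x) ^ 2 := by
    have := hT x hx0.le w hw
    rw [hx0, abs_le] at this
    linarith [this.1]
  have geo2 : 2 * a * dotp (gradVec ℓ x) (w - x) ≤ 2 * Λ * δ := by
    have e1 : a * dotp (gradVec ℓ x) (w - x) ≤ a * (Λ * eunorm (w - x) ^ 2) := by gcongr
    have e2 : Λ * (a * eunorm (w - x) ^ 2) ≤ Λ * δ := by gcongr
    linarith
  have kb : ∀ k : ℝ, |k| ≤ |κ| + ε → |k| * eunorm (gradVec ℓ x - n) ≤ ε / 8 := by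
    intro k hk
    have : |k| * eunorm (gradVec ℓ x - n) ≤ (|κ| + ε) * eunorm (gradVec ℓ x - n) := by gcongr
    nlinarith
  constructor
  · intro hq hcon
    have e1 := hl _ b1 (huψ t ht x hx0) _ hcon
    have e2 := dot_bdry hnx hnh hq
    have e3 := kb (κ + ε) (by have := abs_add_le κ ε; rwa [abs_of_pos hε] at this)
    rw [abs_le] at e2
    have e4 : dotp (gradVec ℓ x) (x - w) = - dotp (gradVec ℓ x) (w - x) := by
      rw [dotp_sub_right, dotp_sub_right]; ring
    rw [e4] at e2
    linarith [e2.1]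
  · intro hq hcon
    have e1 := hr _ b2 (hvψ t ht x hx0) _ hcon
    have e2 := dot_bdry hnx hnh hq
    have e3 := kb (κ - ε) (by have := abs_sub κ ε; rwa [abs_of_pos hε] at this)
    rw [abs_le] at e2
    have e5 := hgdec th hth.le xh hxh0 _ _ huv.le
    linarith [e2.2]

end Core2

section Core3
variable {d : ℕ}

/-- uniform time continuity of the coefficients -/
lemma time_cont {ℓ : (Fin d → ℝ) → ℝ} (hK : IsCompact {x : Fin d → ℝ | ℓ x ≤ 0})
    {b : ℝ → (Fin d → ℝ) → (Fin d → ℝ)} {σ : ℝ → (Fin d → ℝ) → Matrix (Fin d) (Fin d) ℝ}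
    {f : ℝ → (Fin d → ℝ) → ℝ → (Fin d → ℝ) → ℝ}
    (hb : ContinuousOn (fun p : ℝ × (Fin d → ℝ) => b p.1 p.2) (Set.Ici 0 ×ˢ Set.univ))
    (hσ : ContinuousOn (fun p : ℝ × (Fin d → ℝ) => σ p.1 p.2) (Set.Ici 0 ×ˢ Set.univ))
    (hf : ContinuousOn
      (fun p : ℝ × (Fin d → ℝ) × ℝ × (Fin d → ℝ) => f p.1 p.2.1 p.2.2.1 p.2.2.2)
      (Set.Ici 0 ×ˢ {x | ℓ x ≤ 0} ×ˢ Set.univ ×ˢ Set.univ))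
    {t0 t1 : ℝ} (ht0 : 0 ≤ t0) (M Z : ℝ) {ω : ℝ} (hω : 0 < ω) :
    ∃ δ > 0, ∀ t ∈ Set.Icc t0 t1, ∀ s ∈ Set.Icc t0 t1, |t - s| < δ → ∀ y, ℓ y ≤ 0 →
      matNorm (σ t y - σ s y) ≤ ω ∧ eunorm (b t y - b s y) ≤ ω ∧
      ∀ r z, |r| ≤ M → eunorm z ≤ Z → |f t y r z - f s y r z| ≤ ω := by
  have hI : ∀ t ∈ Set.Icc t0 t1, (0:ℝ) ≤ t := fun t ht => ht0.trans ht.1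
  have hz0 : matNorm (0 : Matrix (Fin d) (Fin d) ℝ) = 0 := by simp [matNorm]
  obtain ⟨δ1, hδ1, h1⟩ := unif_diag (t0 := t0) (t1 := t1) hK
    (H := fun t s y => matNorm (σ t y - σ s y)) (by
      refine continuous_matNorm.comp_continuousOn (ContinuousOn.sub ?_ ?_)
      · exact ContinuousOn.comp (g := fun p : ℝ × (Fin d → ℝ) => σ p.1 p.2)
          (f := fun z : ℝ × ℝ × (Fin d → ℝ) => (z.1, z.2.2)) hσ (by fun_prop)
          (fun z hz => ⟨hI _ hz.1, Set.mem_univ _⟩)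
      · exact ContinuousOn.comp (g := fun p : ℝ × (Fin d → ℝ) => σ p.1 p.2)
          (f := fun z : ℝ × ℝ × (Fin d → ℝ) => (z.2.1, z.2.2)) hσ (by fun_prop)
          (fun z hz => ⟨hI _ hz.2.1, Set.mem_univ _⟩))
    (fun t _ c _ => by rw [sub_self, hz0]) hω
  obtain ⟨δ2, hδ2, h2⟩ := unif_diag (t0 := t0) (t1 := t1) hK
    (H := fun t s y => eunorm (b t y - b s y)) (by
      refine continuous_eunorm.comp_continuousOn (ContinuousOn.sub ?_ ?_)
      · exact ContinuousOn.comp (g := fun p : ℝ × (Fin d → ℝ) => b p.1 p.2)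
          (f := fun z : ℝ × ℝ × (Fin d → ℝ) => (z.1, z.2.2)) hb (by fun_prop)
          (fun z hz => ⟨hI _ hz.1, Set.mem_univ _⟩)
      · exact ContinuousOn.comp (g := fun p : ℝ × (Fin d → ℝ) => b p.1 p.2)
          (f := fun z : ℝ × ℝ × (Fin d → ℝ) => (z.2.1, z.2.2)) hb (by fun_prop)
          (fun z hz => ⟨hI _ hz.2.1, Set.mem_univ _⟩))
    (fun t _ c _ => by rw [sub_self, eunorm_zero]) hω
  obtain ⟨δ3, hδ3, h3⟩ := unif_diag (t0 := t0) (t1 := t1)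
    (hK.prod ((isCompact_Icc (a := -M) (b := M)).prod (isCompact_closedBall (0 : Fin d → ℝ) Z)))
    (H := fun t s c => f t c.1 c.2.1 c.2.2 - f s c.1 c.2.1 c.2.2) (by
      refine ContinuousOn.sub ?_ ?_
      · exact ContinuousOn.comp
          (g := fun p : ℝ × (Fin d → ℝ) × ℝ × (Fin d → ℝ) => f p.1 p.2.1 p.2.2.1 p.2.2.2)
          (f := fun z : ℝ × ℝ × ((Fin d → ℝ) × ℝ × (Fin d → ℝ)) => (z.1, z.2.2)) hf (by fun_prop)
          (fun z hz => ⟨hI _ hz.1, hz.2.2.1, Set.mem_univ _, Set.mem_univ _⟩)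
      · exact ContinuousOn.comp
          (g := fun p : ℝ × (Fin d → ℝ) × ℝ × (Fin d → ℝ) => f p.1 p.2.1 p.2.2.1 p.2.2.2)
          (f := fun z : ℝ × ℝ × ((Fin d → ℝ) × ℝ × (Fin d → ℝ)) => (z.2.1, z.2.2)) hf (by fun_prop)
          (fun z hz => ⟨hI _ hz.2.1, hz.2.2.1, Set.mem_univ _, Set.mem_univ _⟩))
    (fun t _ c _ => by rw [sub_self]) hω
  refine ⟨min δ1 (min δ2 δ3), lt_min hδ1 (lt_min hδ2 hδ3), fun t ht s hs hts y hy => ?_⟩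
  simp only [lt_min_iff] at hts
  obtain ⟨l1, l2, l3⟩ := hts
  refine ⟨(le_abs_self _).trans (h1 t ht s hs y hy l1).le,
    (le_abs_self _).trans (h2 t ht s hs y hy l2).le, fun r z hr hz => ?_⟩
  exact (h3 t ht s hs (y, r, z) ⟨hy, abs_le.1 hr, by
    simpa using (norm_le_eunorm z).trans hz⟩ l3).le

set_option maxHeartbeats 2000000 in
/-- The local contradiction estimate at a maximum point. -/
lemma core_max {ℓ : (Fin d → ℝ) → ℝ} (hc : ContDiff ℝ 3 ℓ)
    (hn : ∀ x, ℓ x = 0 → eunorm (gradVec ℓ x) = 1)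
    (hK : IsCompact {x : Fin d → ℝ | ℓ x ≤ 0})
    {b : ℝ → (Fin d → ℝ) → (Fin d → ℝ)} {σ : ℝ → (Fin d → ℝ) → Matrix (Fin d) (Fin d) ℝ}
    {f : ℝ → (Fin d → ℝ) → ℝ → (Fin d → ℝ) → ℝ} {g : ℝ → (Fin d → ℝ) → ℝ → ℝ}
    {h : (Fin d → ℝ) → ℝ} {φ ψ : ℝ → EReal}
    (hb : ContinuousOn (fun p : ℝ × (Fin d → ℝ) => b p.1 p.2) (Set.Ici 0 ×ˢ Set.univ))
    (hσ : ContinuousOn (fun p : ℝ × (Fin d → ℝ) => σ p.1 p.2) (Set.Ici 0 ×ˢ Set.univ))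
    (hf : ContinuousOn
      (fun p : ℝ × (Fin d → ℝ) × ℝ × (Fin d → ℝ) => f p.1 p.2.1 p.2.2.1 p.2.2.2)
      (Set.Ici 0 ×ˢ {x | ℓ x ≤ 0} ×ˢ Set.univ ×ˢ Set.univ))
    (hg : ContinuousOn (fun p : ℝ × (Fin d → ℝ) × ℝ => g p.1 p.2.1 p.2.2)
      (Set.Ici 0 ×ˢ {x | ℓ x = 0} ×ˢ Set.univ))
    {t0 t1 : ℝ} (ht0 : 0 ≤ t0) {α L β : ℝ} (hα : 0 ≤ α) (hL : 0 ≤ L) (hβ : 0 ≤ β)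
    (hLip : ∀ t ∈ Set.Icc t0 t1, ∀ x x' : Fin d → ℝ,
        eunorm (b t x - b t x') + matNorm (σ t x - σ t x') ≤ L * eunorm (x - x'))
    (hmon : ∀ t ∈ Set.Icc t0 t1, ∀ x, ℓ x ≤ 0 → ∀ y y' : ℝ, ∀ z : Fin d → ℝ,
        (y - y') * (f t x y z - f t x y' z) ≤ α * (y - y')^2)
    (hfz : ∀ t ∈ Set.Icc t0 t1, ∀ x, ℓ x ≤ 0 → ∀ y : ℝ, ∀ z z' : Fin d → ℝ,
        |f t x y z - f t x y z'| ≤ β * eunorm (z - z'))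
    (hψ : LowerSemicontinuous ψ) (hφpos : ∀ y, 0 ≤ φ y) (hψpos : ∀ y, 0 ≤ ψ y)
    (hgdec : ∀ t ≥ (0:ℝ), ∀ x, ℓ x = 0 → ∀ r r' : ℝ, r ≤ r' → g t x r' ≤ g t x r)
    {m : ℝ → ℝ} (hmcont : ContinuousOn m (Set.Ici 0)) (hm0 : m 0 = 0)
    (hfm : ∀ t ≥ (0:ℝ), ∀ x y : Fin d → ℝ, ℓ x ≤ 0 → ℓ y ≤ 0 →
      ∀ r : ℝ, ∀ p : Fin d → ℝ,
        |f t x r p - f t y r p| ≤ m (eunorm (x - y) * (1 + eunorm p)))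
    {u v : ℝ → (Fin d → ℝ) → ℝ} (hu : IsViscSubsolution ℓ b σ f g h φ ψ u)
    (hv : IsViscSupersolution ℓ b σ f g h φ ψ v)
    {S1 B1 : ℝ} (bS : ∀ t ∈ Set.Icc t0 t1, ∀ x, ℓ x ≤ 0 → matNorm (σ t x) ≤ S1)
    (bB : ∀ t ∈ Set.Icc t0 t1, ∀ x, ℓ x ≤ 0 → eunorm (b t x) ≤ B1)
    {th : ℝ} {xh : Fin d → ℝ} (hth : th ∈ Set.Ioo t0 t1) (hxh : ℓ xh ≤ 0)
    (huv : v th xh < u th xh)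
    {A N e ε : ℝ} (hN : 0 ≤ N) (he : 0 < e) (hε : 0 < ε)
    (hmax : ∀ t ∈ Set.Icc t0 t1, ∀ x, ℓ x ≤ 0 → u t x - v t x ≤ u th xh - v th xh + A * (t - th)
      + N * (t - th) ^ 2 + 2 * ε * dotp (gradVec ℓ xh) (x - xh) + e * eunorm (x - xh) ^ 2) :
    A ≤ α * (u th xh - v th xh) + 4 * e * S1 ^ 2
      + 2 * ε * eunorm (gradVec ℓ xh) * (B1 + β * S1) := by
  obtain ⟨hu1, -, hu3, hu4, hu5⟩ := hu
  obtain ⟨hv1, -, hv3, hv4, hv5⟩ := hv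
  have hth0 : 0 < th := lt_of_le_of_lt ht0 hth.1
  obtain ⟨κ, δ0, hδ0, hbd⟩ := bdry_excl hc hn hK hg hgdec hψ hψpos hu1 hv1 hu4 hv4 hth0 hxh huv hε
  set n := gradVec ℓ xh with hndef
  set Q := (|κ| + ε) * eunorm n + 1 with hQ
  have hn0 := eunorm_nonneg n
  have hQ0 : 0 ≤ Q := by positivity
  have hthI : th ∈ Set.Icc t0 t1 := ⟨hth.1.le, hth.2.le⟩
  have hS1 : 0 ≤ S1 := (matNorm_nonneg _).trans (bS th hthI xh hxh)
  have hB1 : 0 ≤ B1 := (eunorm_nonneg _).trans (bB th hthI xh hxh)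
  have hsub : (Set.Icc t0 t1 ×ˢ {x | ℓ x ≤ 0}) ⊆ (Set.Ici (0:ℝ) ×ˢ {x : Fin d → ℝ | ℓ x ≤ 0}) :=
    fun z hz => ⟨ht0.trans hz.1.1, hz.2⟩
  have hu1' := hu1.mono hsub
  have hv1' := hv1.mono hsub
  obtain ⟨Mv, hMv⟩ := (isCompact_Icc.prod hK).exists_bound_of_continuousOn hv1'
  refine le_of_forall_pos_le_add fun η hη => ?_
  -- modulus
  obtain ⟨ρ0, hρ0, hmm⟩ : ∃ ρ0 > 0, ∀ ρ, 0 ≤ ρ → ρ < ρ0 → m ρ < η / 4 := by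
    obtain ⟨δ, hδ, hh⟩ := Metric.continuousWithinAt_iff.1 (hmcont 0 (Set.mem_Ici.2 le_rfl))
      (η / 4) (by positivity)
    refine ⟨δ, hδ, fun ρ h1 h2 => ?_⟩
    have := hh (Set.mem_Ici.2 h1) (by rw [Real.dist_eq, sub_zero, abs_of_nonneg h1]; exact h2)
    rw [hm0, Real.dist_eq, sub_zero] at this
    exact (le_abs_self _).trans_lt this
  -- continuity of u, v
  set η2 := min (η / (8 * (α + 1))) ((u th xh - v th xh) / 2) with hη2
  have hη2_p : 0 < η2 := lt_min (by positivity) (by linarith)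
  obtain ⟨d1, hd1, k1⟩ := near_pt hu1' (th := th) (xh := xh) ⟨hthI, hxh⟩ hη2_p
  obtain ⟨d2, hd2, k2⟩ := near_pt hv1' (th := th) (xh := xh) ⟨hthI, hxh⟩ hη2_p
  set Cc := 1 + (4 * L ^ 2 + 4) + 2 * S1 ^ 2 + (2 * L + 2 * L * Q + 4 + Q) + 2 * B1
    + β * ((2 * L + 2 * L * Q + 4 + Q) + 2 * S1) + 1 with hCc
  have hCc0 : 0 < Cc := by positivity
  set Cm := 2 * (1 + S1 + Q * S1) with hCm
  have hCm0 : 0 < Cm := by positivity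
  obtain ⟨δ, hδ, le0, le1, le2, le3, le4, le5⟩ : ∃ δ > 0, δ ≤ 1 ∧ δ ≤ δ0 ∧ δ ≤ d1 ∧ δ ≤ d2 ∧
      Cc * δ ≤ η / 4 ∧ Cm * δ < ρ0 := by
    refine ⟨min 1 (min δ0 (min d1 (min d2 (min (η / (4 * Cc)) (ρ0 / (2 * Cm)))))),
      lt_min one_pos (lt_min hδ0 (lt_min hd1 (lt_min hd2 (lt_min (by positivity)
      (by positivity))))), ?_⟩
    set δ := min 1 (min δ0 (min d1 (min d2 (min (η / (4 * Cc)) (ρ0 / (2 * Cm)))))) with hδ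
    have := hδ.le
    simp only [le_min_iff] at this
    obtain ⟨a1, a2, a3, a4, a5, a6⟩ := this
    refine ⟨a1, a2, a3, a4, ?_, ?_⟩
    · rw [le_div_iff₀ (by positivity)] at a5; linarith
    · rw [le_div_iff₀ (by positivity)] at a6; linarith
  obtain ⟨a, ha, hdb⟩ := doubling hK hu1' hv1' hth hxh (κ := κ) hN he hmax hδ
  have ha0 : 0 < a := by linarith
  obtain ⟨δ', hδ', htime⟩ := time_cont hK hb hσ hf (t0 := t0) (t1 := t1) ht0 Mv
    ((4 * a + Q) * S1) (ω := δ / a) (by positivity)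
  obtain ⟨t, ht, s, hs, x, hx, y, hy, p, q, X, p', q', Y, e1, e2, e3, e4, e5, e6, e7, e8, e9, e10,
    e11, e12⟩ := hdb δ' hδ'
  have htI : t ∈ Set.Icc t0 t1 := ⟨ht.1.le, ht.2.le⟩
  have hsI : s ∈ Set.Icc t0 t1 := ⟨hs.1.le, hs.2.le⟩
  have htp : 0 < t := lt_of_le_of_lt ht0 ht.1
  have hsp : 0 < s := lt_of_le_of_lt ht0 hs.1
  have hx' : ℓ x ≤ 0 := hx
  have hy' : ℓ y ≤ 0 := hy
  obtain ⟨w1, w2, w3⟩ := htime t htI s hsI e6 y hy'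
  have U1 := k1 t x ⟨htI, hx⟩ (by linarith) (by linarith)
  have V1 := k2 s y ⟨hsI, hy⟩ (by linarith) (by linarith)
  simp only at U1 V1
  have hη2_a : η2 * (8 * (α + 1)) ≤ η := by
    rw [← le_div_iff₀ (by positivity)]; exact min_le_left _ _
  have hη2_b : η2 ≤ (u th xh - v th xh) / 2 := min_le_right _ _
  rw [abs_lt] at U1 V1
  have hUV : v s y < u t x := by linarith
  -- equations
  have E1 : ((Vop b σ f u t x p q X : ℝ) : EReal) + leftD φ (u t x) ≤ 0 := by
    obtain ⟨A1, A2⟩ := hu5 t htp x hx' p q X e11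
    rcases hx'.lt_or_eq with hlt | heq
    · exact A1 hlt
    · refine (A2 heq).resolve_right ?_
      refine (hbd δ hδ le1 a ha0.le t htp x y q hy' e1 e3 ?_ heq).1 e7
      rw [eunorm_sub_comm]; exact e5
  have E2 : 0 ≤ ((Vop b σ f v s y p' q' Y : ℝ) : EReal) + rightD φ (v s y) := by
    obtain ⟨A1, A2⟩ := hv5 s hsp y hy' p' q' Y e12
    rcases hy'.lt_or_eq with hlt | heq
    · exact A1 hlt
    · refine (A2 heq).resolve_right ?_
      exact (hbd δ hδ le1 a ha0.le s hsp y x q' hx' e2 e4 e5 heq).2 e8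
  have hV := V_le_of hφpos hUV (hu3 t htp x hx') (hv3 s hsp y hy') E1 E2
  have hr := eunorm_nonneg (x - y)
  have r2 : eunorm (x - y) ≤ 2 * δ := by
    have := eunorm_sub_le' x xh y
    rw [eunorm_sub_comm xh y] at this
    linarith
  have hωa : a * (δ / a) ≤ δ := by rw [mul_div_cancel₀ _ ha0.ne']
  have hω0 : 0 < δ / a := by positivity
  have hωδ : δ / a ≤ δ := div_le_self hδ.le ha
  have hLx := hLip t htI x y
  have hS : matNorm (σ t x - σ s y) ≤ L * eunorm (x - y) + δ / a := by
    have := matNorm_add_le (σ t x - σ t y) (σ t y - σ s y)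
    rw [sub_add_sub_cancel] at this
    linarith [eunorm_nonneg (b t x - b t y)]
  have hB : eunorm (b t x - b s y) ≤ L * eunorm (x - y) + δ / a := by
    have := eunorm_sub_le' (b t x) (b t y) (b s y)
    linarith [matNorm_nonneg (σ t x - σ t y)]
  have hfin := core_pt (R := α * (u t x - v s y) + η / 4 + δ) hδ le0 ha hε.le hL hβ he.le e5 r2
    e7 e8 e9 e10 hω0.le hωa hS hB (bS t htI x hx') (bS s hsI y hy') (bB s hsI y hy') hQ (by
      intro z z' hz'
      have g1 := (le_abs_self _).trans (hfz t htI x hx' (u t x) z z')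
      have g2 := (le_abs_self _).trans (hfm t htp.le x y hx' hy' (u t x) z')
      have g3 := hmon t htI y hy' (u t x) (v s y) z'
      have g4 : f t y (u t x) z' - f t y (v s y) z' ≤ α * (u t x - v s y) := by
        have hp : 0 < u t x - v s y := by linarith
        have : (u t x - v s y) * (f t y (u t x) z' - f t y (v s y) z') ≤
          (u t x - v s y) * (α * (u t x - v s y)) := by linarith
        exact le_of_mul_le_mul_left this hp
      have z1 : eunorm z' ≤ (4 * a + Q) * S1 := by
        refine hz'.trans ?_
        have : 2 * a * eunorm (x - y) ≤ 2 * a * 2 := by gcongr; linarith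
        exact mul_le_mul_of_nonneg_right (by linarith) hS1
      have g5 := (le_abs_self _).trans (w3 (v s y) z' (by simpa using hMv (s, y) ⟨hsI, hy⟩) z1)
      have g6 : m (eunorm (x - y) * (1 + eunorm z')) < η / 4 := by
        have := eunorm_nonneg z'
        refine hmm _ (by positivity) (lt_of_le_of_lt ?_ le5)
        have i1 : eunorm (x - y) * eunorm z' ≤
          eunorm (x - y) * ((2 * a * eunorm (x - y) + Q) * S1) := by gcongr
        have i2 : S1 * (a * eunorm (x - y) ^ 2) ≤ S1 * δ := by gcongr
        have i3 : Q * S1 * eunorm (x - y) ≤ Q * S1 * (2 * δ) := by gcongr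
        rw [hCm]
        linarith
      linarith) hV
  have j1 : α * (u t x - v s y) ≤ α * (u th xh - v th xh + 2 * η2) := by
    gcongr; linarith
  have j2 : α * η2 ≤ η / 8 := by linarith only [hη2_a, hη2_p]
  rw [hCc] at le4
  linarith

end Core3

section Fin1
variable {d : ℕ}

lemma pos_part_sq (s e : ℝ) : (max (s + e) 0) ^ 2 ≤ (max s 0) ^ 2 + 2 * max s 0 * e + e ^ 2 := by
  have h1 : max (s + e) 0 ≤ |max s 0 + e| :=
    max_le ((add_le_add (le_max_left s 0) le_rfl).trans (le_abs_self _)) (abs_nonneg _)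
  have h2 : (max (s + e) 0) ^ 2 ≤ |max s 0 + e| ^ 2 :=
    pow_le_pow_left₀ (le_max_right _ _) h1 2
  rw [sq_abs] at h2
  linarith

set_option maxHeartbeats 2000000 in
lemma comp_step {ℓ : (Fin d → ℝ) → ℝ} (hc : ContDiff ℝ 3 ℓ)
    (hn : ∀ x, ℓ x = 0 → eunorm (gradVec ℓ x) = 1)
    (hK : IsCompact {x : Fin d → ℝ | ℓ x ≤ 0})
    {b : ℝ → (Fin d → ℝ) → (Fin d → ℝ)} {σ : ℝ → (Fin d → ℝ) → Matrix (Fin d) (Fin d) ℝ}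
    {f : ℝ → (Fin d → ℝ) → ℝ → (Fin d → ℝ) → ℝ} {g : ℝ → (Fin d → ℝ) → ℝ → ℝ}
    {h : (Fin d → ℝ) → ℝ} {φ ψ : ℝ → EReal}
    (hb : ContinuousOn (fun p : ℝ × (Fin d → ℝ) => b p.1 p.2) (Set.Ici 0 ×ˢ Set.univ))
    (hσ : ContinuousOn (fun p : ℝ × (Fin d → ℝ) => σ p.1 p.2) (Set.Ici 0 ×ˢ Set.univ))
    (hf : ContinuousOn
      (fun p : ℝ × (Fin d → ℝ) × ℝ × (Fin d → ℝ) => f p.1 p.2.1 p.2.2.1 p.2.2.2)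
      (Set.Ici 0 ×ˢ {x | ℓ x ≤ 0} ×ˢ Set.univ ×ˢ Set.univ))
    (hg : ContinuousOn (fun p : ℝ × (Fin d → ℝ) × ℝ => g p.1 p.2.1 p.2.2)
      (Set.Ici 0 ×ˢ {x | ℓ x = 0} ×ˢ Set.univ))
    {t0 t1 τ : ℝ} (ht0 : 0 ≤ t0) {α L β : ℝ} (hα : 0 ≤ α) (hL : 0 ≤ L) (hβ : 0 ≤ β)
    (hτ : 0 < τ) (hτα : τ * (4 * (α + 1)) ≤ 1) (ht1 : t1 = t0 + τ)
    (hLip : ∀ t ∈ Set.Icc t0 t1, ∀ x x' : Fin d → ℝ,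
        eunorm (b t x - b t x') + matNorm (σ t x - σ t x') ≤ L * eunorm (x - x'))
    (hmon : ∀ t ∈ Set.Icc t0 t1, ∀ x, ℓ x ≤ 0 → ∀ y y' : ℝ, ∀ z : Fin d → ℝ,
        (y - y') * (f t x y z - f t x y' z) ≤ α * (y - y')^2)
    (hfz : ∀ t ∈ Set.Icc t0 t1, ∀ x, ℓ x ≤ 0 → ∀ y : ℝ, ∀ z z' : Fin d → ℝ,
        |f t x y z - f t x y z'| ≤ β * eunorm (z - z'))
    (hψ : LowerSemicontinuous ψ) (hφpos : ∀ y, 0 ≤ φ y) (hψpos : ∀ y, 0 ≤ ψ y)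
    (hgdec : ∀ t ≥ (0:ℝ), ∀ x, ℓ x = 0 → ∀ r r' : ℝ, r ≤ r' → g t x r' ≤ g t x r)
    {m : ℝ → ℝ} (hmcont : ContinuousOn m (Set.Ici 0)) (hm0 : m 0 = 0)
    (hfm : ∀ t ≥ (0:ℝ), ∀ x y : Fin d → ℝ, ℓ x ≤ 0 → ℓ y ≤ 0 →
      ∀ r : ℝ, ∀ p : Fin d → ℝ,
        |f t x r p - f t y r p| ≤ m (eunorm (x - y) * (1 + eunorm p)))
    {u v : ℝ → (Fin d → ℝ) → ℝ} (hu : IsViscSubsolution ℓ b σ f g h φ ψ u)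
    (hv : IsViscSupersolution ℓ b σ f g h φ ψ v)
    (hini : ∀ x, ℓ x ≤ 0 → u t0 x ≤ v t0 x) :
    ∀ t ∈ Set.Icc t0 t1, ∀ x, ℓ x ≤ 0 → u t x ≤ v t x := by
  by_contra hcon
  push Not at hcon
  obtain ⟨t2, ht2, x2, hx2, h2⟩ := hcon
  have hsub : (Set.Icc t0 t1 ×ˢ {x | ℓ x ≤ 0}) ⊆ (Set.Ici (0:ℝ) ×ˢ {x : Fin d → ℝ | ℓ x ≤ 0}) :=
    fun z hz => ⟨ht0.trans hz.1.1, hz.2⟩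
  have hsub2 : (Set.Icc t0 t1 ×ˢ {x | ℓ x ≤ 0}) ⊆ (Set.Ici (0:ℝ) ×ˢ (Set.univ : Set (Fin d → ℝ))) :=
    fun z hz => ⟨ht0.trans hz.1.1, Set.mem_univ _⟩
  have hcpt : IsCompact (Set.Icc t0 t1 ×ˢ {x : Fin d → ℝ | ℓ x ≤ 0}) := isCompact_Icc.prod hK
  have hd : ContinuousOn (fun z : ℝ × (Fin d → ℝ) => u z.1 z.2 - v z.1 z.2)
      (Set.Icc t0 t1 ×ˢ {x | ℓ x ≤ 0}) := (hu.1.mono hsub).sub (hv.1.mono hsub)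
  obtain ⟨⟨tm, xm⟩, hmm, hmax⟩ := hcpt.exists_isMaxOn ⟨(t2, x2), ⟨ht2, hx2⟩⟩ hd
  set θ := u tm xm - v tm xm with hθ
  have hle : ∀ t ∈ Set.Icc t0 t1, ∀ x, ℓ x ≤ 0 → u t x - v t x ≤ θ :=
    fun t ht x hx => hmax (a := (t, x)) ⟨ht, hx⟩
  have hθ0 : 0 < θ := by have := hle t2 ht2 x2 hx2; linarith
  have htm : t0 ≤ tm ∧ tm ≤ t1 := hmm.1
  have hxm : ℓ xm ≤ 0 := hmm.2
  have htm0 : t0 < tm := by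
    refine lt_of_le_of_ne htm.1 fun h => ?_
    have := hini xm hxm
    rw [hθ, ← h] at hθ0
    linarith
  -- bounds
  obtain ⟨S1, bS⟩ := hcpt.exists_bound_of_continuousOn
    (continuous_matNorm.comp_continuousOn (hσ.mono hsub2))
  obtain ⟨B1, bB⟩ := hcpt.exists_bound_of_continuousOn
    (continuous_eunorm.comp_continuousOn (hb.mono hsub2))
  obtain ⟨G, bG⟩ := hK.exists_bound_of_continuousOn
    (continuous_eunorm.comp (continuous_gradVec hc)).continuousOn
  obtain ⟨Cl, bC⟩ := hK.exists_bound_of_continuousOn hc.continuous.continuousOn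
  have bS' : ∀ t ∈ Set.Icc t0 t1, ∀ x, ℓ x ≤ 0 → matNorm (σ t x) ≤ S1 := fun t ht x hx =>
    (le_abs_self _).trans (bS (t, x) ⟨ht, hx⟩)
  have bB' : ∀ t ∈ Set.Icc t0 t1, ∀ x, ℓ x ≤ 0 → eunorm (b t x) ≤ B1 := fun t ht x hx =>
    (le_abs_self _).trans (bB (t, x) ⟨ht, hx⟩)
  have bG' : ∀ x, ℓ x ≤ 0 → eunorm (gradVec ℓ x) ≤ G := fun x hx => (le_abs_self _).trans (bG x hx)
  have bC' : ∀ x, ℓ x ≤ 0 → - ℓ x ≤ Cl := fun x hx => (neg_le_abs _).trans (bC x hx)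
  have hS0 : 0 ≤ S1 := (matNorm_nonneg _).trans (bS' tm htm xm hxm)
  have hB0 : 0 ≤ B1 := (eunorm_nonneg _).trans (bB' tm htm xm hxm)
  have hG0 : 0 ≤ G := (eunorm_nonneg _).trans (bG' xm hxm)
  have hC0 : 0 ≤ Cl := by have := bC' xm hxm; linarith
  obtain ⟨Λ, hΛ, hT⟩ := ell_taylor hc hK
  -- choice of the base time
  obtain ⟨δ, hδ, hnear⟩ := near_pt hd (th := tm) (xh := xm) hmm (η := θ / 4) (by linarith)
  obtain ⟨ts, hts0, hts1, hts⟩ : ∃ ts, t0 < ts ∧ ts < tm ∧ |ts - tm| < δ := by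
    have hp : 0 < min δ (tm - t0) := lt_min hδ (by linarith)
    have h3 := min_le_left δ (tm - t0)
    have h4 := min_le_right δ (tm - t0)
    refine ⟨tm - min δ (tm - t0) / 2, by linarith, by linarith, ?_⟩
    rw [abs_lt]; constructor <;> linarith
  have hw := hnear ts xm ⟨⟨hts0.le, by linarith [htm.2]⟩, hxm⟩ hts (by
    rw [sub_self, eunorm_zero]; exact hδ)
  rw [abs_lt] at hw
  simp only at hw
  have hw1 : 3 * θ / 4 < u ts xm - v ts xm := by linarith [hw.1]
  have hts2 : ts < t1 := by linarith [htm.2]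
  -- parameters
  set C0 := 4 * (2 * Λ + 1) * S1 ^ 2 + 2 * G * (B1 + β * S1) with hC0def
  have hC00 : 0 ≤ C0 := by positivity
  obtain ⟨ε, hε, hε1, hε2⟩ : ∃ ε > 0, 2 * ε * Cl ≤ θ / 8 ∧ ε * C0 ≤ θ / 2 := by
    refine ⟨min (θ / (16 * (Cl + 1))) (θ / (2 * (C0 + 1))), lt_min (by positivity) (by positivity),
      ?_, ?_⟩
    · have h3 := min_le_left (θ / (16 * (Cl + 1))) (θ / (2 * (C0 + 1)))
      have hp : 0 < min (θ / (16 * (Cl + 1))) (θ / (2 * (C0 + 1))) :=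
        lt_min (by positivity) (by positivity)
      rw [le_div_iff₀ (by positivity)] at h3
      linarith
    · have h3 := min_le_right (θ / (16 * (Cl + 1))) (θ / (2 * (C0 + 1)))
      have hp : 0 < min (θ / (16 * (Cl + 1))) (θ / (2 * (C0 + 1))) :=
        lt_min (by positivity) (by positivity)
      rw [le_div_iff₀ (by positivity)] at h3
      linarith
  set A := θ / (2 * τ) with hA
  have hA0 : 0 < A := by positivity
  have hAτ : A * τ = θ / 2 := by rw [hA]; field_simp
  have hA2 : 2 * (α + 1) * θ ≤ A := by
    rw [hA, le_div_iff₀ (by positivity)]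
    nlinarith
  have hd1 : 0 < t1 - ts := by linarith
  set N := 2 * θ / (t1 - ts) ^ 2 with hN
  have hN0 : 0 < N := by positivity
  have hN1 : N * (t1 - ts) ^ 2 = 2 * θ := by rw [hN]; field_simp
  -- the maximum of the penalised difference
  have hWc : ContinuousOn (fun z : ℝ × (Fin d → ℝ) => u z.1 z.2 - v z.1 z.2
      - (A * (z.1 - t0) + N * (max (z.1 - ts) 0) ^ 2 + 2 * ε * ℓ z.2))
      (Set.Icc t0 t1 ×ˢ {x | ℓ x ≤ 0}) := by
    have hlc := hc.continuous
    exact hd.sub (by fun_prop : Continuous fun z : ℝ × (Fin d → ℝ) =>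
      A * (z.1 - t0) + N * (max (z.1 - ts) 0) ^ 2 + 2 * ε * ℓ z.2).continuousOn
  obtain ⟨⟨th, xh⟩, hhm, hWmax⟩ := hcpt.exists_isMaxOn ⟨(t2, x2), ⟨ht2, hx2⟩⟩ hWc
  have hW : ∀ t ∈ Set.Icc t0 t1, ∀ x, ℓ x ≤ 0 →
      u t x - v t x - (A * (t - t0) + N * (max (t - ts) 0) ^ 2 + 2 * ε * ℓ x) ≤
      u th xh - v th xh - (A * (th - t0) + N * (max (th - ts) 0) ^ 2 + 2 * ε * ℓ xh) :=
    fun t ht x hx => hWmax (a := (t, x)) ⟨ht, hx⟩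
  have hthI : t0 ≤ th ∧ th ≤ t1 := hhm.1
  have hxh : ℓ xh ≤ 0 := hhm.2
  have hW0 := hW ts ⟨hts0.le, hts2.le⟩ xm hxm
  rw [sub_self, max_self] at hW0
  have h5 : A * (ts - t0) ≤ A * τ := by gcongr; linarith
  have h6 : 2 * ε * ℓ xm ≤ 0 := mul_nonpos_of_nonneg_of_nonpos (by linarith) hxm
  have hWθ : θ / 4 ≤ u th xh - v th xh
      - (A * (th - t0) + N * (max (th - ts) 0) ^ 2 + 2 * ε * ℓ xh) := by nlinarith
  have h7 : 2 * ε * (- ℓ xh) ≤ 2 * ε * Cl := by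
    have := bC' xh hxh
    gcongr
  have h8 : 0 ≤ A * (th - t0) := mul_nonneg hA0.le (by linarith [hthI.1])
  have h9 : 0 ≤ N * (max (th - ts) 0) ^ 2 := by positivity
  have huv : v th xh < u th xh := by linarith
  have hth0 : t0 < th := by
    refine lt_of_le_of_ne hthI.1 fun h => ?_
    have := hini xh hxh
    rw [← h] at huv
    linarith
  have hth1 : th < t1 := by
    refine lt_of_le_of_ne hthI.2 fun h => ?_
    have h10 := hle th hthI xh hxh
    have h11 : N * (max (th - ts) 0) ^ 2 = 2 * θ := by
      rw [h, max_eq_left hd1.le, hN1]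
    linarith
  set s := max (th - ts) 0 with hs
  have hs0 : 0 ≤ s := le_max_right _ _
  have hfin := core_max hc hn hK hb hσ hf hg ht0 hα hL hβ hLip hmon hfz hψ hφpos hψpos hgdec
    hmcont hm0 hfm hu hv bS' bB' ⟨hth0, hth1⟩ hxh huv (A := A + 2 * N * s) (N := N)
    (e := 2 * ε * Λ + ε) hN0.le (by positivity) hε (by
      intro t ht x hx
      have k1 := hW t ht x hx
      have k2 := pos_part_sq (th - ts) (t - th)
      have k3 : th - ts + (t - th) = t - ts := by ring
      rw [k3, ← hs] at k2
      have k4 : N * (max (t - ts) 0) ^ 2 ≤ N * (s ^ 2 + 2 * s * (t - th) + (t - th) ^ 2) := by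
        gcongr
      have k5 := (abs_le.1 (hT xh hxh x hx)).2
      have k6 : 2 * ε * (ℓ x - ℓ xh - dotp (gradVec ℓ xh) (x - xh)) ≤
        2 * ε * (Λ * eunorm (x - xh) ^ 2) := by gcongr
      have k7 : 0 ≤ ε * eunorm (x - xh) ^ 2 := by positivity
      linarith)
  have g1 := hle th hthI xh hxh
  have g2 : α * (u th xh - v th xh) ≤ α * θ := by gcongr
  have g3 : 2 * ε * eunorm (gradVec ℓ xh) * (B1 + β * S1) ≤ 2 * ε * G * (B1 + β * S1) := by
    have := bG' xh hxh
    gcongr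
  have g4 : 0 ≤ 2 * N * s := by positivity
  have g5 : 0 ≤ α * θ := by positivity
  rw [hC0def] at hε2
  linarith

end Fin1

/-- **Uniqueness of the viscosity solution** (Theorem 3 of Maticiuc–Răşcanu):
under the standing assumptions, if moreover `r ↦ g(t,x,r)` is decreasing on the
boundary and `f` admits a modulus of continuity in the space variable, then the
viscosity solution of the parabolic variational inequality is unique. -/
theorem pvi_uniqueness
    {d : ℕ}
    (ℓ : (Fin d → ℝ) → ℝ)
    (b : ℝ → (Fin d → ℝ) → (Fin d → ℝ))
    (σ : ℝ → (Fin d → ℝ) → Matrix (Fin d) (Fin d) ℝ)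
    (f : ℝ → (Fin d → ℝ) → ℝ → (Fin d → ℝ) → ℝ)
    (g : ℝ → (Fin d → ℝ) → ℝ → ℝ)
    (h : (Fin d → ℝ) → ℝ)
    (φ ψ : ℝ → EReal)
    -- the domain `D = {ℓ < 0}`, with boundary `Bd(D) = {ℓ = 0}`
    (hℓreg : ContDiff ℝ 3 ℓ) (hℓbdd : ∃ C : ℝ, ∀ x, |ℓ x| ≤ C)
    (hℓnorm : ∀ x, ℓ x = 0 → eunorm (gradVec ℓ x) = 1)
    (hDconn : IsConnected {x : Fin d → ℝ | ℓ x < 0})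
    (hDbdd : Bornology.IsBounded {x : Fin d → ℝ | ℓ x < 0})
    -- continuity of the data
    (hb : ContinuousOn (fun p : ℝ × (Fin d → ℝ) => b p.1 p.2)
      (Set.Ici 0 ×ˢ Set.univ))
    (hσ : ContinuousOn (fun p : ℝ × (Fin d → ℝ) => σ p.1 p.2)
      (Set.Ici 0 ×ˢ Set.univ))
    (hf : ContinuousOn
      (fun p : ℝ × (Fin d → ℝ) × ℝ × (Fin d → ℝ) => f p.1 p.2.1 p.2.2.1 p.2.2.2)
      (Set.Ici 0 ×ˢ {x | ℓ x ≤ 0} ×ˢ Set.univ ×ˢ Set.univ))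
    (hg : ContinuousOn (fun p : ℝ × (Fin d → ℝ) × ℝ => g p.1 p.2.1 p.2.2)
      (Set.Ici 0 ×ˢ {x | ℓ x = 0} ×ˢ Set.univ))
    (hh : ContinuousOn h {x | ℓ x ≤ 0})
    -- quantitative assumptions on `b, σ, f, g`
    (hq : ∀ T > (0:ℝ), ∃ α L β γ : ℝ, 0 ≤ L ∧ 0 ≤ β ∧ 0 ≤ γ ∧
      (∀ t ∈ Set.Icc (0:ℝ) T, ∀ x x' : Fin d → ℝ,
        eunorm (b t x - b t x') + matNorm (σ t x - σ t x') ≤ L * eunorm (x - x')) ∧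
      (∀ t ∈ Set.Icc (0:ℝ) T, ∀ x, ℓ x ≤ 0 → ∀ y y' : ℝ, ∀ z : Fin d → ℝ,
        (y - y') * (f t x y z - f t x y' z) ≤ α * (y - y')^2) ∧
      (∀ t ∈ Set.Icc (0:ℝ) T, ∀ x, ℓ x ≤ 0 → ∀ y : ℝ, ∀ z z' : Fin d → ℝ,
        |f t x y z - f t x y z'| ≤ β * eunorm (z - z')) ∧
      (∀ t ∈ Set.Icc (0:ℝ) T, ∀ x, ℓ x ≤ 0 → ∀ y : ℝ,
        |f t x y 0| ≤ γ * (1 + |y|)) ∧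
      (∀ t ∈ Set.Icc (0:ℝ) T, ∀ x, ℓ x = 0 → ∀ y y' : ℝ,
        (y - y') * (g t x y - g t x y') ≤ α * (y - y')^2) ∧
      (∀ t ∈ Set.Icc (0:ℝ) T, ∀ x, ℓ x = 0 → ∀ y : ℝ,
        |g t x y| ≤ γ * (1 + |y|)))
    -- assumptions on `φ, ψ`
    (hφ : ProperConvexLsc φ) (hψ : ProperConvexLsc ψ)
    (hφ0 : φ 0 = 0) (hψ0 : ψ 0 = 0)
    (hφpos : ∀ y : ℝ, 0 ≤ φ y) (hψpos : ∀ y : ℝ, 0 ≤ ψ y)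
    (hM : ∃ M : ℝ, 0 < M ∧ (∀ x, ℓ x ≤ 0 → φ (h x) ≤ (M : EReal)) ∧
      (∀ x, ℓ x = 0 → ψ (h x) ≤ (M : EReal)))
    -- compatibility assumptions, expressed through the Yosida approximations
    -- `U = ∇φ_ε(y)`, `V = ∇ψ_ε(y)` (the unique solutions of `U ∈ ∂φ(y−εU)`,
    -- `V ∈ ∂ψ(y−εV)`)
    (hcompat : ∀ ε > (0:ℝ), ∀ t ≥ (0:ℝ), ∀ x, ℓ x = 0 → ∀ x', ℓ x' ≤ 0 →
      ∀ y : ℝ, ∀ zv : Fin d → ℝ, ∀ U V : ℝ,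
        U ∈ subd φ (y - ε * U) → V ∈ subd ψ (y - ε * V) →
        U * g t x y ≤ max 0 (V * g t x y) ∧
        V * f t x' y zv ≤ max 0 (U * f t x' y zv))
    -- additional assumptions for uniqueness
    (hgdec : ∀ t ≥ (0:ℝ), ∀ x, ℓ x = 0 → ∀ r r' : ℝ, r ≤ r' → g t x r' ≤ g t x r)
    (m : ℝ → ℝ)
    (hmcont : ContinuousOn m (Set.Ici 0)) (hm0 : m 0 = 0)
    (hmpos : ∀ r : ℝ, 0 ≤ r → 0 ≤ m r)
    (hfm : ∀ t ≥ (0:ℝ), ∀ x y : Fin d → ℝ, ℓ x ≤ 0 → ℓ y ≤ 0 →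
      ∀ r : ℝ, ∀ p : Fin d → ℝ,
        |f t x r p - f t y r p| ≤ m (eunorm (x - y) * (1 + eunorm p))) :
    ∀ u v : ℝ → (Fin d → ℝ) → ℝ,
      IsViscSubsolution ℓ b σ f g h φ ψ u → IsViscSupersolution ℓ b σ f g h φ ψ u →
      IsViscSubsolution ℓ b σ f g h φ ψ v → IsViscSupersolution ℓ b σ f g h φ ψ v →
      ∀ t : ℝ, 0 ≤ t → ∀ x : Fin d → ℝ, ℓ x ≤ 0 → u t x = v t x := by
  have hK : IsCompact {x : Fin d → ℝ | ℓ x ≤ 0} := isCompact_clD hℓreg hℓnorm hDbdd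
  have key : ∀ u v : ℝ → (Fin d → ℝ) → ℝ,
      IsViscSubsolution ℓ b σ f g h φ ψ u → IsViscSupersolution ℓ b σ f g h φ ψ v →
      ∀ t : ℝ, 0 ≤ t → ∀ x : Fin d → ℝ, ℓ x ≤ 0 → u t x ≤ v t x := by
    intro u v hu hv t ht x hx
    obtain ⟨α, L, β, γ, hL, hβ, -, hLip, hmon, hfz, -⟩ := hq (t + 1) (by linarith)
    have hα : (0:ℝ) ≤ max α 0 := le_max_right _ _
    obtain ⟨N, hN⟩ := exists_nat_gt ((t + 1) * (4 * (max α 0 + 1)))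
    have hT : 0 < t + 1 := by linarith
    have hNpos : (0:ℝ) < N := lt_of_le_of_lt (by positivity) hN
    have hτ : 0 < (t + 1) / N := by positivity
    have hτN : (N:ℝ) * ((t + 1) / N) = t + 1 := by field_simp
    have hτα : (t + 1) / N * (4 * (max α 0 + 1)) ≤ 1 := by
      rw [div_mul_eq_mul_div, div_le_one hNpos]; exact hN.le
    have ind : ∀ k : ℕ, k ≤ N → ∀ s ∈ Set.Icc (0:ℝ) (k * ((t + 1) / N)), ∀ x, ℓ x ≤ 0 →
        u s x ≤ v s x := by
      intro k
      induction k with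
      | zero =>
        intro _ s hs y hy
        have hs0 : s = 0 := by
          have h2 := hs.2
          simp only [Nat.cast_zero, zero_mul] at h2
          exact le_antisymm h2 hs.1
        rw [hs0, hu.2.1 y hy, hv.2.1 y hy]
      | succ k ih =>
        intro hk s hs y hy
        have ihk := ih (by omega)
        have ht0 : (0:ℝ) ≤ k * ((t + 1) / N) := by positivity
        rcases le_total s (k * ((t + 1) / N)) with hsk | hsk
        · exact ihk s ⟨hs.1, hsk⟩ y hy
        have hle : (k:ℝ) * ((t + 1) / N) + (t + 1) / N ≤ t + 1 := by
          have hk' : ((k:ℝ) + 1) ≤ N := by exact_mod_cast hk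
          calc (k:ℝ) * ((t + 1) / N) + (t + 1) / N = (k + 1) * ((t + 1) / N) := by ring
            _ ≤ N * ((t + 1) / N) := by gcongr
            _ = t + 1 := hτN
        have hsub : ∀ r ∈ Set.Icc ((k:ℝ) * ((t + 1) / N)) (k * ((t + 1) / N) + (t + 1) / N),
            r ∈ Set.Icc (0:ℝ) (t + 1) := fun r hr => ⟨ht0.trans hr.1, hr.2.trans hle⟩
        refine comp_step hℓreg hℓnorm hK hb hσ hf hg ht0 hα hL hβ hτ hτα rfl
          (fun r hr => hLip r (hsub r hr)) ?_ (fun r hr => hfz r (hsub r hr))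
          hψ.2.2.1 hφpos hψpos hgdec hmcont hm0 hfm hu hv
          (fun x hx => ihk _ ⟨ht0, le_rfl⟩ x hx) s ⟨hsk, ?_⟩ y hy
        · intro r hr x hx y y' z
          refine (hmon r (hsub r hr) x hx y y' z).trans ?_
          exact mul_le_mul_of_nonneg_right (le_max_left _ _) (sq_nonneg _)
        · have h2 := hs.2
          push_cast at h2
          linarith
    exact ind N le_rfl t ⟨ht, by rw [hτN]; linarith⟩ x hx
  intro u v hu1 hu2 hv1 hv2 t ht x hx
  exact le_antisymm (key u v hu1 hv2 t ht x hx) (key v u hv1 hu2 t ht x hx)
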